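/- Let b ≥ 3 be a fixed real constant, 0 < λ ≤ 1, and 0 < α ≤ 1. Then, as T → ∞, the sum of (b + β) over all nontrivial zeros ρ = β + iγ of L(λ,α,·) with 0 < γ ≤ T (counted with multiplicity) equals (b + 1/2)·(T/(2π))·log(T/(2πeαλ)) + (T/(4π))·log(α/λ) + O(log T). -/

import Mathlib

/-- The Dirichlet series of the Lerch zeta-function, convergent for `1 < re s`. -/
noncomputable def lerchSeries (lam alp : ℝ) (s : ℂ) : ℂ :=
  ∑' m : ℕ, Complex.exp (2 * Real.pi * Complex.I * lam * m) / ((m : ℂ) + alp) ^ s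

/-- `F` is the analytic continuation of the Lerch zeta-function with parameters `lam`, `alp`:
it is complex differentiable away from `1` and agrees with the Dirichlet series on `1 < re s`. -/
def IsLerch (lam alp : ℝ) (F : ℂ → ℂ) : Prop :=
  (∀ s : ℂ, s ≠ 1 → DifferentiableAt ℂ F s) ∧
  ∀ s : ℂ, 1 < s.re → F s = lerchSeries lam alp s

open scoped Classical

/-- The multiplicity (order of vanishing) of `F` at `z` (junk value `0` if `F` is not
analytic at `z` or vanishes to infinite order). -/
noncomputable def zeroOrder (F : ℂ → ℂ) (z : ℂ) : ℕ :=
  if h : AnalyticAt ℂ F z then (analyticOrderAt F z).toNat else 0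

open scoped Classical
namespace LZ
open Complex Filter Topology Asymptotics Set MeasureTheory
open scoped Real

/-- even kernel -/
noncomputable def KE (p q x : ℝ) : ℂ :=
  cexp (-π * q ^ 2 * x) * jacobiTheta₂ (p + q * (I * x)) (I * x)

/-- odd kernel -/
noncomputable def KO (p q x : ℝ) : ℂ :=
  cexp (-π * q ^ 2 * x) * (jacobiTheta₂' (p + q * (I * x)) (I * x) / (2 * π * I)
    + q * jacobiTheta₂ (p + q * (I * x)) (I * x))

noncomputable def ee (p : ℝ) (n : ℤ) : ℂ := cexp (2 * π * I * p * n)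

lemma norm_ee (p : ℝ) (n : ℤ) : ‖ee p n‖ = 1 := by
  have : 2 * π * I * p * n = ((2 * π * p * n : ℝ) : ℂ) * I := by push_cast; ring
  rw [ee, this, norm_exp_ofReal_mul_I]

lemma hasSum_KE (p q : ℝ) {x : ℝ} (hx : 0 < x) :
    HasSum (fun n : ℤ => ee p n * (Real.exp (-π * (n + q) ^ 2 * x) : ℂ)) (KE p q x) := by
  have h1 := hasSum_jacobiTheta₂_term (p + q * (I * x)) (τ := I * x) (by simpa)
  refine (h1.mul_left (cexp (-π * q ^ 2 * x))).congr_fun fun n => ?_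
  rw [jacobiTheta₂_term, ofReal_exp, ee, ← Complex.exp_add, ← Complex.exp_add]
  congr 1
  push_cast
  linear_combination (-2 * π * n * q * x - π * n ^ 2 * x : ℂ) * I_sq

lemma hasSum_KO (p q : ℝ) {x : ℝ} (hx : 0 < x) :
    HasSum (fun n : ℤ => ee p n * ((n + q : ℝ) : ℂ) * (Real.exp (-π * (n + q) ^ 2 * x) : ℂ))
      (KO p q x) := by
  have h1 := hasSum_jacobiTheta₂_term (p + q * (I * x)) (τ := I * x) (by simpa)
  have h2 := hasSum_jacobiTheta₂'_term (p + q * (I * x)) (τ := I * x) (by simpa)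
  refine (((h2.div_const (2 * π * I)).add (h1.mul_left ↑q)).mul_left
    (cexp (-π * q ^ 2 * x))).congr_fun fun n => ?_
  rw [jacobiTheta₂'_term, mul_assoc (2 * π * I), mul_div_cancel_left₀ _ two_pi_I_ne_zero,
    ← add_mul, mul_left_comm, jacobiTheta₂_term, ← Complex.exp_add, ofReal_exp, ee,
    mul_comm (cexp _) (((n + q : ℝ) : ℂ)), mul_assoc, ← Complex.exp_add]
  push_cast
  congr 2
  linear_combination (-2 * π * n * q * x - π * n ^ 2 * x : ℂ) * I_sq

lemma KE_feq (p q : ℝ) {x : ℝ} (hx : 0 < x) :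
    KE p q (1 / x) = (cexp (-(2 * π * I * p * q)) * ((x ^ (1 / 2 : ℝ) : ℝ) : ℂ)) * KE (-q) p x := by
  have hx0 : (x : ℂ) ≠ 0 := by exact_mod_cast hx.ne'
  have hI := I_ne_zero
  have h4 : arg x ≠ π := by rw [arg_ofReal_of_nonneg hx.le]; exact Real.pi_ne_zero.symm
  rw [KE, jacobiTheta₂_functional_equation, KE]
  have e1 : (-1 / (I * ((1 / x : ℝ) : ℂ))) = I * x := by
    push_cast; field_simp; rw [I_sq]
  have e2 : (p + q * (I * ((1 / x : ℝ) : ℂ))) / (I * ((1 / x : ℝ) : ℂ)) = -((-q : ℝ) + p * (I * x)) := by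
    push_cast; field_simp; linear_combination (p * x : ℂ) * I_sq
  have e3 : (-I * (I * ((1 / x : ℝ) : ℂ))) = (x : ℂ)⁻¹ := by
    push_cast; field_simp; rw [I_sq]; simp
  rw [e1, e2, e3, jacobiTheta₂_neg_left, inv_cpow _ _ h4, ofReal_cpow hx.le]
  have e4 : cexp (-π * q ^ 2 * ((1 / x : ℝ) : ℂ)) * cexp (-π * I * (p + q * (I * ((1 / x : ℝ) : ℂ))) ^ 2 / (I * ((1 / x : ℝ) : ℂ)))
     = cexp (-(2 * π * I * p * q)) * cexp (-π * p ^ 2 * x) := by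
    rw [← Complex.exp_add, ← Complex.exp_add]; congr 1
    push_cast; field_simp
    linear_combination (-q ^ 2 : ℂ) * I_sq
  push_cast
  push_cast at e4
  rw [one_div ((x : ℂ) ^ (1 / 2 : ℂ))⁻¹, inv_inv]
  linear_combination ((x : ℂ) ^ (1 / 2 : ℂ) * jacobiTheta₂ (-q + p * (I * x)) (I * x)) * e4

lemma KO_feq (p q : ℝ) {x : ℝ} (hx : 0 < x) :
    KO p q (1 / x) = (I * cexp (-(2 * π * I * p * q)) * ((x ^ (3 / 2 : ℝ) : ℝ) : ℂ)) * KO (-q) p x := by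
  have hx0 : (x : ℂ) ≠ 0 := by exact_mod_cast hx.ne'
  have hI := I_ne_zero
  have h4 : arg x ≠ π := by rw [arg_ofReal_of_nonneg hx.le]; exact Real.pi_ne_zero.symm
  rw [KO, jacobiTheta₂_functional_equation, jacobiTheta₂'_functional_equation, KO]
  have e1 : (-1 / (I * ((1 / x : ℝ) : ℂ))) = I * x := by
    push_cast; field_simp; rw [I_sq]
  have e2 : (p + q * (I * ((1 / x : ℝ) : ℂ))) / (I * ((1 / x : ℝ) : ℂ)) = -((-q : ℝ) + p * (I * x)) := by
    push_cast; field_simp; linear_combination (p * x : ℂ) * I_sq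
  have e3 : (-I * (I * ((1 / x : ℝ) : ℂ))) = (x : ℂ)⁻¹ := by
    push_cast; field_simp; rw [I_sq]; simp
  have e5 : (x : ℂ) ^ (3 / 2 : ℂ) = x ^ (1 / 2 : ℂ) * x := by
    rw [show (3 / 2 : ℂ) = 1 / 2 + 1 by norm_num, cpow_add _ _ hx0, cpow_one]
  rw [e1, e2, e3, jacobiTheta₂_neg_left, jacobiTheta₂'_neg_left, inv_cpow _ _ h4, ofReal_cpow hx.le]
  have e4 : cexp (-π * q ^ 2 * ((1 / x : ℝ) : ℂ)) * cexp (-π * I * (p + q * (I * ((1 / x : ℝ) : ℂ))) ^ 2 / (I * ((1 / x : ℝ) : ℂ)))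
     = cexp (-(2 * π * I * p * q)) * cexp (-π * p ^ 2 * x) := by
    rw [← Complex.exp_add, ← Complex.exp_add]; congr 1
    push_cast; field_simp
    linear_combination (-q ^ 2 : ℂ) * I_sq
  push_cast
  push_cast at e4
  rw [e5]
  generalize jacobiTheta₂ (-q + p * (I * x)) (I * x) = J
  generalize jacobiTheta₂' (-q + p * (I * x)) (I * x) = J'
  have hpi : (π : ℂ) ≠ 0 := by exact_mod_cast Real.pi_ne_zero
  generalize cexp (-(2 * π * I * p * q)) = A at *
  generalize cexp (-π * p ^ 2 * x) = B at *
  generalize cexp (-π * q ^ 2 * (1 / x)) = A' at *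
  generalize cexp (-π * I * (p + q * (I * (1 / x))) ^ 2 / (I * (1 / x))) = B' at *
  generalize (x : ℂ) ^ (1 / 2 : ℂ) = X
  have e6 : A' * (1 / X⁻¹ * B' / (I * (1 / x)) * (-J' - 2 * π * I * (p + q * (I * (1 / x))) * J) / (2 * π * I)
      + q * (1 / X⁻¹ * B' * J)) = X * (A' * B') * (I * x) * (J' / (2 * π * I) + p * J) := by
    rw [one_div X⁻¹, inv_inv]
    field_simp
    linear_combination (-X * A' * B' * (J' * x + 2 * π * I * x * p * J)) * I_sq
  rw [e6, e4]
  ring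
end LZ

open scoped Classical
namespace LZ
open Complex Filter Topology Asymptotics Set MeasureTheory
open scoped Real

lemma continuousOn_KE (p q : ℝ) : ContinuousOn (KE p q) (Ioi 0) := by
  unfold KE
  refine fun x hx ↦ ((Continuous.continuousAt ?_).mul ?_).continuousWithinAt
  · fun_prop
  · have hf : Continuous fun u : ℝ ↦ ((p : ℂ) + q * (I * u), I * (u : ℂ)) := by fun_prop
    exact (continuousAt_jacobiTheta₂ (p + q * (I * x)) (τ := I * x)
      (by rwa [I_mul_im, ofReal_re])).comp (f := fun u : ℝ ↦ ((p : ℂ) + q * (I * u), I * (u : ℂ))) hf.continuousAt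

lemma continuousOn_KO (p q : ℝ) : ContinuousOn (KO p q) (Ioi 0) := by
  unfold KO
  refine fun x hx ↦ ((Continuous.continuousAt ?_).mul ?_).continuousWithinAt
  · fun_prop
  · have hf : Continuous fun u : ℝ ↦ ((p : ℂ) + q * (I * u), I * (u : ℂ)) := by fun_prop
    apply ContinuousAt.add
    · exact ((continuousAt_jacobiTheta₂' (p + q * (I * x)) (τ := I * x)
        (by rwa [I_mul_im, ofReal_re])).comp (f := fun u : ℝ ↦ ((p : ℂ) + q * (I * u), I * (u : ℂ)))
          hf.continuousAt).div_const _
    · exact continuousAt_const.mul ((continuousAt_jacobiTheta₂ (p + q * (I * x)) (τ := I * x)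
        (by rwa [I_mul_im, ofReal_re])).comp (f := fun u : ℝ ↦ ((p : ℂ) + q * (I * u), I * (u : ℂ)))
          hf.continuousAt)

noncomputable def cE (p q : ℝ) : ℂ := if q = 1 then ee p (-1) else 0

lemma coe_eq_zero_iff {q : ℝ} (h0 : 0 < q) (h1 : q ≤ 1) : ((q : UnitAddCircle) = 0) ↔ q = 1 := by
  constructor
  · intro h
    rw [AddCircle.coe_eq_zero_iff] at h
    obtain ⟨n, hn⟩ := h
    simp at hn
    have a1 : (0 : ℝ) < n := by linarith
    have a2 : (n : ℝ) ≤ 1 := by linarith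
    have a3 : 0 < n := by exact_mod_cast a1
    have a4 : n ≤ 1 := by exact_mod_cast a2
    have : n = 1 := by omega
    subst this; simpa using hn.symm
  · rintro rfl; exact AddCircle.coe_period 1

lemma add_eq_zero_iff' {q : ℝ} (h0 : 0 < q) (h1 : q ≤ 1) (n : ℤ) : ((n : ℝ) + q = 0) ↔ (q = 1 ∧ n = -1) := by
  constructor
  · intro h
    have a1 : (n : ℝ) < 0 := by linarith
    have a2 : (-1 : ℝ) ≤ n := by linarith
    have a3 : n < 0 := by exact_mod_cast a1
    have a4 : -1 ≤ n := by exact_mod_cast a2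
    have : n = -1 := by omega
    subst this; push_cast at h; exact ⟨by linarith, rfl⟩
  · rintro ⟨rfl, rfl⟩; simp

lemma hasSum_KE_sub (p : ℝ) {q x : ℝ} (h0 : 0 < q) (h1 : q ≤ 1) (hx : 0 < x) :
    HasSum (fun n : ℤ => if (n : ℝ) + q = 0 then 0 else
      ee p n * (Real.exp (-π * (n + q) ^ 2 * x) : ℂ)) (KE p q x - cE p q) := by
  have h2 : HasSum (fun n : ℤ => if n = -1 then cE p q else 0) (cE p q) := hasSum_ite_eq (-1 : ℤ) _
  refine ((hasSum_KE p q hx).sub h2).congr_fun fun n => ?_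
  simp only [add_eq_zero_iff' h0 h1]
  by_cases hq : q = 1 <;> by_cases hn : n = -1 <;> simp [hq, hn, cE]

lemma hasSum_F_sub {q x : ℝ} (h0 : 0 < q) (h1 : q ≤ 1) (hx : 0 < x) :
    HasSum (fun n : ℤ => if (n : ℝ) + q = 0 then 0 else
      (Real.exp (-π * (n + q) ^ 2 * x))) (HurwitzKernelBounds.F_int 0 q x - (if (q : UnitAddCircle) = 0 then 1 else 0)) := by
  have h2 : HasSum (fun n : ℤ => if n = -1 then (if (q : UnitAddCircle) = 0 then 1 else 0 : ℝ) else 0) (if (q : UnitAddCircle) = 0 then 1 else 0 : ℝ) := hasSum_ite_eq (-1 : ℤ) _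
  have h3 := (HurwitzKernelBounds.summable_f_int 0 q hx).hasSum
  simp only [coe_eq_zero_iff h0 h1] at *
  have h4 : HurwitzKernelBounds.F_int 0 q x = ∑' n : ℤ, HurwitzKernelBounds.f_int 0 q x n := by
    simp [HurwitzKernelBounds.F_int]
  rw [h4]
  refine (h3.sub h2).congr_fun fun n => ?_
  simp only [add_eq_zero_iff' h0 h1]
  by_cases hq : q = 1 <;> by_cases hn : n = -1 <;> simp [hq, hn, HurwitzKernelBounds.f_int]

lemma KE_top (p : ℝ) {q : ℝ} (h0 : 0 < q) (h1 : q ≤ 1) (r : ℝ) :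
    (fun x => KE p q x - cE p q) =O[atTop] (fun x : ℝ => x ^ r) := by
  obtain ⟨v, hv, hv'⟩ := HurwitzKernelBounds.isBigO_atTop_F_int_zero_sub q
  refine (IsBigO.trans ?_ hv').trans (isLittleO_exp_neg_mul_rpow_atTop hv _).isBigO
  refine Eventually.isBigO ?_
  filter_upwards [eventually_gt_atTop 0] with t ht
  rw [← (hasSum_KE_sub p h0 h1 ht).tsum_eq]
  refine tsum_of_norm_bounded (hasSum_F_sub h0 h1 ht) fun n => ?_
  split_ifs
  · simp
  · rw [norm_mul, norm_ee, one_mul, norm_real, Real.norm_eq_abs, abs_of_pos (Real.exp_pos _)]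

lemma KO_top (p q : ℝ) (r : ℝ) :
    (fun x => KO p q x - 0) =O[atTop] (fun x : ℝ => x ^ r) := by
  obtain ⟨v, hv, hv'⟩ := HurwitzKernelBounds.isBigO_atTop_F_int_one q
  refine (IsBigO.trans ?_ hv').trans (isLittleO_exp_neg_mul_rpow_atTop hv _).isBigO
  refine Eventually.isBigO ?_
  filter_upwards [eventually_gt_atTop 0] with t ht
  have h4 : HurwitzKernelBounds.F_int 1 q t = ∑' n : ℤ, HurwitzKernelBounds.f_int 1 q t n := by
    simp [HurwitzKernelBounds.F_int]
  rw [sub_zero, ← (hasSum_KO p q ht).tsum_eq, h4]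
  refine tsum_of_norm_bounded (HurwitzKernelBounds.summable_f_int 1 q ht).hasSum fun n => ?_
  rw [norm_mul, norm_mul, norm_ee, one_mul, norm_real, norm_real, Real.norm_eq_abs, Real.norm_eq_abs,
    abs_of_pos (Real.exp_pos _), HurwitzKernelBounds.f_int, pow_one]

/-- the even FE pair -/
@[simps]
noncomputable def PE (l a : ℝ) (hl0 : 0 < l) (hl1 : l ≤ 1) (ha0 : 0 < a) (ha1 : a ≤ 1) : WeakFEPair ℂ where
  f := KE l a
  g := KE (-a) l
  hf_int := (continuousOn_KE l a).locallyIntegrableOn measurableSet_Ioi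
  hg_int := (continuousOn_KE (-a) l).locallyIntegrableOn measurableSet_Ioi
  k := 1 / 2
  hk := by norm_num
  ε := cexp (-(2 * π * I * l * a))
  hε := Complex.exp_ne_zero _
  f₀ := cE l a
  g₀ := cE (-a) l
  hf_top := KE_top l ha0 ha1
  hg_top := KE_top (-a) hl0 hl1
  h_feq x hx := KE_feq l a hx

@[simps]
noncomputable def PO (l a : ℝ) : WeakFEPair ℂ where
  f := KO l a
  g := KO (-a) l
  hf_int := (continuousOn_KO l a).locallyIntegrableOn measurableSet_Ioi
  hg_int := (continuousOn_KO (-a) l).locallyIntegrableOn measurableSet_Ioi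
  k := 3 / 2
  hk := by norm_num
  ε := I * cexp (-(2 * π * I * l * a))
  hε := mul_ne_zero I_ne_zero (Complex.exp_ne_zero _)
  f₀ := 0
  g₀ := 0
  hf_top := KO_top l a
  hg_top := KO_top (-a) l
  h_feq x hx := KO_feq l a hx

lemma PO_strong (l a : ℝ) : IsStrongFEPair (PO l a) := ⟨rfl, rfl⟩

/-- the positive-part series -/
noncomputable def LS (p q : ℝ) (s : ℂ) : ℂ := ∑' m : ℕ, ee p m / ((m : ℂ) + q) ^ s
/-- negative part series -/
noncomputable def LN (p q : ℝ) (s : ℂ) : ℂ := ∑' m : ℕ, ee p (-(m + 1 : ℕ)) / (((m : ℂ) + (1 - q : ℝ))) ^ s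

end LZ

open scoped Classical
namespace LZ
open Complex Filter Topology Asymptotics Set MeasureTheory
open scoped Real


lemma hasSum_split {f : ℤ → ℂ} {A : ℂ} (H : HasSum f A) :
    A = ∑' n : ℕ, f n + ∑' n : ℕ, f (-((n : ℤ) + 1)) := by
  have S := H.summable
  rw [← H.tsum_eq]
  refine tsum_of_nat_of_neg_add_one ?_ ?_
  · exact S.comp_injective Nat.cast_injective
  · exact S.comp_injective (i := fun n : ℕ => -((n : ℤ) + 1)) (fun a b h => by simpa using h)

lemma mellin_E (p : ℝ) {q : ℝ} (h0 : 0 < q) (h1 : q ≤ 1) {s : ℂ} (hs : 1 < s.re) :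
    mellin (fun x => KE p q x - cE p q) (s / 2) = Gammaℝ s * (LS p q s + LN p q s) := by
  have H := hasSum_mellin_pi_mul_sq (a := fun n : ℤ => ee p n) (r := fun n : ℤ => (n : ℝ) + q)
    (F := fun x => KE p q x - cE p q) (s := s) (by linarith) (fun t ht => hasSum_KE_sub p h0 h1 ht) (by
      simpa only [norm_ee] using (Real.summable_one_div_int_add_rpow q s.re).2 hs)
  rw [hasSum_split H, mul_add, LS, LN, ← tsum_mul_left, ← tsum_mul_left]
  congr 1
  · refine tsum_congr fun m => ?_
    rw [abs_of_pos (by positivity)]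
    push_cast
    rw [mul_div_assoc]
  · refine tsum_congr fun m => ?_
    have : |((-((m : ℤ) + 1) : ℤ) : ℝ) + q| = m + (1 - q) := by
      rw [abs_of_nonpos (by push_cast; linarith [(Nat.cast_nonneg m : (0:ℝ) ≤ m)])]; push_cast; ring
    rw [this]
    push_cast
    rw [mul_div_assoc]

lemma mellin_O (p : ℝ) {q : ℝ} (h0 : 0 < q) (h1 : q ≤ 1) {s : ℂ} (hs : 1 < s.re) :
    mellin (KO p q) ((s + 1) / 2) = Gammaℝ (s + 1) * (LS p q s - LN p q s) := by
  have H := hasSum_mellin_pi_mul_sq' (a := fun n : ℤ => ee p n) (r := fun n : ℤ => (n : ℝ) + q)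
    (F := KO p q) (s := s) (by linarith) (fun t ht => hasSum_KO p q ht) (by
      simpa only [norm_ee] using (Real.summable_one_div_int_add_rpow q s.re).2 hs)
  rw [hasSum_split H, mul_sub, sub_eq_add_neg, LS, LN, ← tsum_mul_left, ← tsum_mul_left, ← tsum_neg]
  congr 1
  · refine tsum_congr fun m => ?_
    rw [abs_of_pos (by positivity), sign_pos (by positivity)]
    push_cast
    rw [mul_div_assoc]; simp; ring
  · refine tsum_congr fun m => ?_
    have hm := (Nat.cast_nonneg m : (0:ℝ) ≤ m)
    have : |((-((m : ℤ) + 1) : ℤ) : ℝ) + q| = m + (1 - q) := by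
      rw [abs_of_nonpos (by push_cast; linarith [(Nat.cast_nonneg m : (0:ℝ) ≤ m)])]; push_cast; ring
    rw [this]
    rcases eq_or_lt_of_le (show (0:ℝ) ≤ m + (1 - q) by linarith) with h | h
    · have hs0 : s ≠ 0 := fun h => by simp [h] at hs; linarith
      have h' : ((m : ℂ) + (1 - q : ℝ)) = 0 := by exact_mod_cast h.symm
      rw [h', ← h]; simp [zero_cpow hs0]
    · rw [sign_neg (by push_cast; linarith)]
      push_cast
      rw [mul_div_assoc]; simp; ring


section
variable {l a : ℝ} (hl0 : 0 < l) (hl1 : l ≤ 1) (ha0 : 0 < a) (ha1 : a ≤ 1)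

/-- the explicit continuation -/
noncomputable def HF (s : ℂ) : ℂ :=
  (1 / 2) * ((PE l a hl0 hl1 ha0 ha1).Λ (s / 2) * (Gammaℝ s)⁻¹ + (PO l a).Λ ((s + 1) / 2) * (Gammaℝ (s + 1))⁻¹)

lemma HF_eq_LS {s : ℂ} (hs : 1 < s.re) : HF hl0 hl1 ha0 ha1 s = LS l a s := by
  have e1 : (PE l a hl0 hl1 ha0 ha1).Λ (s / 2) = Gammaℝ s * (LS l a s + LN l a s) := by
    rw [← mellin_E l ha0 ha1 hs]
    exact ((PE l a hl0 hl1 ha0 ha1).hasMellin (s := s / 2) (by simp; linarith)).2.symm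
  have e2 : (PO l a).Λ ((s + 1) / 2) = Gammaℝ (s + 1) * (LS l a s - LN l a s) := by
    rw [← mellin_O l ha0 ha1 hs, (PO_strong l a).Λ_eq]; rfl
  have g1 := Gammaℝ_ne_zero_of_re_pos (s := s) (by linarith)
  have g2 := Gammaℝ_ne_zero_of_re_pos (s := s + 1) (by simp; linarith)
  rw [HF, e1, e2]
  field_simp
  ring

lemma HF_one_sub {w : ℂ} (hs : 1 < w.re) : HF hl0 hl1 ha0 ha1 (1 - w) =
    (1 / 2) * cexp (-(2 * π * I * l * a)) * Gammaℂ w *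
      (cexp (π * w / 2 * I) * LS (-a) l w + cexp (-(π * w / 2) * I) * LN (-a) l w) := by
  have e1 : (PE l a hl0 hl1 ha0 ha1).Λ ((1 - w) / 2) = cexp (-(2 * π * I * l * a)) * (Gammaℝ w * (LS (-a) l w + LN (-a) l w)) := by
    have h1 := (PE l a hl0 hl1 ha0 ha1).functional_equation (w / 2)
    rw [← mellin_E (-a) hl0 hl1 hs, smul_eq_mul] at *
    have h2 : (((PE l a hl0 hl1 ha0 ha1).k : ℂ) - w / 2) = (1 - w) / 2 := by simp; ring
    rw [← h2, h1]
    congr 1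
    exact ((PE l a hl0 hl1 ha0 ha1).symm.hasMellin (s := w / 2) (by simp; linarith)).2.symm
  have e2 : (PO l a).Λ ((1 - w + 1) / 2) = I * cexp (-(2 * π * I * l * a)) * (Gammaℝ (w + 1) * (LS (-a) l w - LN (-a) l w)) := by
    have h1 := (PO l a).functional_equation ((w + 1) / 2)
    rw [← mellin_O (-a) hl0 hl1 hs, smul_eq_mul] at *
    have h2 : (((PO l a).k : ℂ) - (w + 1) / 2) = (1 - w + 1) / 2 := by simp; ring
    rw [← h2, h1, (PO_strong l a).symm_Λ_eq]
    rfl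
  have g1 := Gammaℝ_ne_zero_of_re_pos (s := w) (by linarith)
  have g2 := Gammaℝ_ne_zero_of_re_pos (s := w + 1) (by simp; linarith)
  have hn : ∀ n : ℕ, w ≠ -n := by
    intro n h; rw [h] at hs; simp at hs; linarith [(Nat.cast_nonneg n : (0:ℝ) ≤ n)]
  have hc : cexp (π * w / 2 * I) = cos (π * w / 2) + sin (π * w / 2) * I := exp_mul_I _
  have hc' : cexp (-(π * w / 2) * I) = cos (π * w / 2) - sin (π * w / 2) * I := by
    rw [exp_mul_I, Complex.cos_neg, Complex.sin_neg]; ring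
  rw [HF, e1, e2, inv_Gammaℝ_one_sub hn, show 1 - w + 1 = 2 - w by ring, inv_Gammaℝ_two_sub hn, hc, hc']
  field_simp
  ring

lemma HF_diff {s : ℂ} (h0 : s ≠ 0) (h1 : s ≠ 1) : DifferentiableAt ℂ (HF hl0 hl1 ha0 ha1) s := by
  have d1 : DifferentiableAt ℂ (fun s => (PE l a hl0 hl1 ha0 ha1).Λ (s / 2)) s := by
    simp only [WeakFEPair.Λ]
    have := (PE l a hl0 hl1 ha0 ha1).differentiable_Λ₀
    have h2 : s / 2 ≠ 0 := by simpa
    have h3 : ((PE l a hl0 hl1 ha0 ha1).k : ℂ) - s / 2 ≠ 0 := by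
      simp; intro h; apply h1; linear_combination (-2) * h
    refine ((DifferentiableAt.comp s this.differentiableAt (by fun_prop)).sub ?_).sub ?_
    · have : DifferentiableAt ℂ (fun s : ℂ => 1 / (s / 2)) s :=
        (differentiableAt_const _).div (differentiableAt_id.div_const 2) h2
      exact this.smul_const _
    · have : DifferentiableAt ℂ (fun s : ℂ => (PE l a hl0 hl1 ha0 ha1).ε / (((PE l a hl0 hl1 ha0 ha1).k : ℂ) - s / 2)) s :=
        (differentiableAt_const _).div ((differentiableAt_id.div_const 2).const_sub _) h3
      exact this.smul_const _
  have d2 : DifferentiableAt ℂ (fun s => (PO l a).Λ ((s + 1) / 2)) s :=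
    DifferentiableAt.comp s ((PO_strong l a).differentiable_Λ.differentiableAt) (by fun_prop)
  have d3 := differentiable_Gammaℝ_inv s
  have d4 : DifferentiableAt ℂ (fun s : ℂ => (Gammaℝ (s + 1))⁻¹) s :=
    DifferentiableAt.comp (g := fun s : ℂ => (Gammaℝ s)⁻¹) (f := fun s : ℂ => s + 1) s
      (differentiable_Gammaℝ_inv (s + 1)) (by fun_prop)
  unfold HF
  exact (differentiableAt_const _).mul ((d1.mul d3).add (d2.mul d4))

lemma F_eq_HF {F : ℂ → ℂ} (hF : IsLerch l a F) {s : ℂ} (h0 : s ≠ 0) (h1 : s ≠ 1) :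
    F s = HF hl0 hl1 ha0 ha1 s := by
  have hU : IsOpen ({0, 1}ᶜ : Set ℂ) := (Set.toFinite _).isClosed.isOpen_compl
  have hc : IsPreconnected ({0, 1}ᶜ : Set ℂ) := by
    refine (Set.Countable.isPathConnected_compl_of_one_lt_rank ?_ ?_).isConnected.isPreconnected
    · simp
    · exact (Set.toFinite _).countable
  have a1 : AnalyticOnNhd ℂ F ({0, 1}ᶜ : Set ℂ) := by
    refine DifferentiableOn.analyticOnNhd (fun z hz => ?_) hU
    simp at hz
    exact (hF.1 z hz.2).differentiableWithinAt
  have a2 : AnalyticOnNhd ℂ (HF hl0 hl1 ha0 ha1) ({0, 1}ᶜ : Set ℂ) := by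
    refine DifferentiableOn.analyticOnNhd (fun z hz => ?_) hU
    simp at hz
    exact (HF_diff hl0 hl1 ha0 ha1 hz.1 hz.2).differentiableWithinAt
  refine a1.eqOn_of_preconnected_of_eventuallyEq a2 hc (z₀ := 2) (by simp) ?_ (by simp [h0, h1])
  have : {z : ℂ | 1 < z.re} ∈ 𝓝 (2 : ℂ) := (isOpen_lt continuous_const continuous_re).mem_nhds (by simp)
  filter_upwards [this] with z hz
  rw [hF.2 z hz, HF_eq_LS hl0 hl1 ha0 ha1 hz, lerchSeries, LS]
  simp [ee]

end

end LZ

open scoped Classical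
namespace LZ
open Complex Filter Topology Asymptotics Set MeasureTheory
open scoped Real

/-- terms of the normalised Dirichlet series, m ≥ 1 shifted -/
noncomputable def dt (p μ : ℝ) (m : ℕ) (s : ℂ) : ℂ :=
  ee p (m + 1 : ℕ) * ((μ / (m + 1 + μ) : ℝ) : ℂ) ^ s

noncomputable def DD (p μ : ℝ) (s : ℂ) : ℂ := 1 + ∑' m : ℕ, dt p μ m s

lemma norm_dt {p μ : ℝ} (h0 : 0 < μ) (m : ℕ) (s : ℂ) : ‖dt p μ m s‖ = (μ / (m + 1 + μ)) ^ s.re := by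
  rw [dt, norm_mul, norm_ee, one_mul, norm_cpow_eq_rpow_re_of_pos (by positivity)]

lemma ratio_le {μ : ℝ} (h0 : 0 < μ) (h1 : μ ≤ 1) (m : ℕ) : μ / (m + 1 + μ) ≤ 1 / (m + 2) := by
  rw [div_le_div_iff₀ (by positivity) (by positivity)]
  have : (0:ℝ) ≤ m := Nat.cast_nonneg m
  nlinarith

lemma norm_dt_le {p μ : ℝ} (h0 : 0 < μ) (h1 : μ ≤ 1) (m : ℕ) {s : ℂ} {σ : ℝ} (hσ : 0 ≤ σ) (hs : σ ≤ s.re) :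
    ‖dt p μ m s‖ ≤ (1 / 2) ^ (s.re - σ) * (1 / (m + 2 : ℝ)) ^ σ := by
  rw [norm_dt h0]
  have h2 := ratio_le h0 h1 m
  have : (0:ℝ) ≤ m := Nat.cast_nonneg m
  have h3 : 1 / ((m:ℝ) + 2) ≤ 1 / 2 := by
    apply one_div_le_one_div_of_le <;> linarith
  calc (μ / (m + 1 + μ)) ^ s.re ≤ (1 / (m + 2 : ℝ)) ^ s.re :=
        Real.rpow_le_rpow (by positivity) h2 (by linarith)
    _ = (1 / (m + 2 : ℝ)) ^ (s.re - σ) * (1 / (m + 2 : ℝ)) ^ σ := by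
        rw [← Real.rpow_add (by positivity)]; ring_nf
    _ ≤ _ := by
        gcongr

lemma summable_aux {σ : ℝ} (hσ : 1 < σ) : Summable (fun m : ℕ => (1 / (m + 2 : ℝ)) ^ σ) := by
  have := (summable_nat_add_iff 2).2 (Real.summable_one_div_nat_rpow.2 hσ)
  refine this.congr fun m => ?_
  rw [Real.div_rpow (by positivity) (by positivity), Real.one_rpow]; push_cast; rfl

lemma sum_two : ∑' m : ℕ, (1 / (m + 2 : ℝ)) ^ (2 : ℝ) ≤ 2 / 3 := by
  have h := hasSum_zeta_two
  have h2 := h.summable.sum_add_tsum_nat_add 2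
  rw [h.tsum_eq] at h2
  simp [Finset.sum_range_succ] at h2
  have e : ∑' m : ℕ, (1 / (m + 2 : ℝ)) ^ (2 : ℝ) = ∑' i : ℕ, (((i : ℝ) + 2) ^ 2)⁻¹ := by
    refine tsum_congr fun m => ?_
    rw [Real.rpow_two]; simp
  rw [e]
  have hp := Real.pi_lt_d2
  have := Real.pi_pos
  nlinarith

lemma summable_dt {p μ : ℝ} (h0 : 0 < μ) (h1 : μ ≤ 1) {s : ℂ} (hs : 1 < s.re) : Summable (fun m => dt p μ m s) := by
  refine Summable.of_norm_bounded (summable_aux hs) fun m => ?_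
  simpa using norm_dt_le (p := p) h0 h1 m (by linarith) (le_refl s.re)

lemma LS_eq {p μ : ℝ} (h0 : 0 < μ) (h1 : μ ≤ 1) {s : ℂ} (hs : 1 < s.re) :
    LS p μ s = (μ : ℂ) ^ (-s) * DD p μ s := by
  have hμ : (μ : ℂ) ≠ 0 := by exact_mod_cast h0.ne'
  have key : ∀ m : ℕ, ee p (m + 1 : ℕ) / (((m + 1 : ℕ) : ℂ) + μ) ^ s = (μ : ℂ) ^ (-s) * dt p μ m s := by
    intro m
    have : (((m + 1 : ℕ) : ℂ) + μ) = ((m + 1 + μ : ℝ) : ℂ) := by push_cast; ring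
    have hx : (0:ℝ) < m + 1 + μ := by positivity
    have hx' : ((m + 1 + μ : ℝ) : ℂ) ^ s ≠ 0 := by
      rw [Ne, cpow_eq_zero_iff]; rintro ⟨h, -⟩; exact hx.ne' (by exact_mod_cast h)
    have hμ' : (μ : ℂ) ^ s ≠ 0 := by
      rw [Ne, cpow_eq_zero_iff]; rintro ⟨h, -⟩; exact hμ h
    have e : ((μ / (m + 1 + μ) : ℝ) : ℂ) ^ s * ((m + 1 + μ : ℝ) : ℂ) ^ s = (μ : ℂ) ^ s := by
      rw [← mul_cpow_ofReal_nonneg (by positivity) hx.le, ← ofReal_mul, div_mul_cancel₀ _ hx.ne']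
    rw [this, dt, cpow_neg, div_eq_iff hx']
    calc ee p (m + 1 : ℕ) = ((μ : ℂ) ^ s)⁻¹ * (μ : ℂ) ^ s * ee p (m + 1 : ℕ) := by
          rw [inv_mul_cancel₀ hμ', one_mul]
      _ = _ := by rw [← e]; ring
  have hS : Summable (fun m : ℕ => ee p m / ((m : ℂ) + μ) ^ s) := by
    rw [← summable_nat_add_iff 1]
    refine ((summable_dt (p := p) h0 h1 hs).mul_left ((μ : ℂ) ^ (-s))).congr fun m => ?_
    rw [← key]
  rw [LS, hS.tsum_eq_zero_add, DD, mul_add, ← tsum_mul_left]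
  congr 1
  · simp [ee, cpow_neg]
  · exact tsum_congr fun m => key m

lemma norm_DD_sub_one {p μ : ℝ} (h0 : 0 < μ) (h1 : μ ≤ 1) {s : ℂ} (hs : 2 ≤ s.re) :
    ‖DD p μ s - 1‖ ≤ 2 / 3 * (1 / 2) ^ (s.re - 2) := by
  rw [DD, add_sub_cancel_left]
  have h := ((summable_aux (σ := 2) (by norm_num)).hasSum.mul_left ((1 / 2 : ℝ) ^ (s.re - 2)))
  refine (tsum_of_norm_bounded h fun m => norm_dt_le h0 h1 m (by norm_num) hs).trans ?_
  rw [mul_comm]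
  gcongr
  exact sum_two

lemma norm_DD_sub_one' {p μ : ℝ} (h0 : 0 < μ) (h1 : μ ≤ 1) {s : ℂ} (hs : 2 ≤ s.re) :
    ‖DD p μ s - 1‖ ≤ 2 / 3 := by
  refine (norm_DD_sub_one h0 h1 hs).trans ?_
  have : (1 / 2 : ℝ) ^ (s.re - 2) ≤ 1 := Real.rpow_le_one (by norm_num) (by norm_num) (by linarith)
  linarith

lemma DD_diff {p μ : ℝ} (h0 : 0 < μ) (h1 : μ ≤ 1) {s : ℂ} (hs : 3 / 2 < s.re) :
    DifferentiableAt ℂ (DD p μ) s := by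
  have hU : IsOpen {z : ℂ | 3 / 2 < z.re} := isOpen_lt continuous_const continuous_re
  have : DifferentiableOn ℂ (fun s => ∑' m : ℕ, dt p μ m s) {z : ℂ | 3 / 2 < z.re} := by
    refine differentiableOn_tsum_of_summable_norm (summable_aux (σ := 3 / 2) (by norm_num)) ?_ hU ?_
    · intro m z hz
      have : ((μ / (m + 1 + μ) : ℝ) : ℂ) ≠ 0 := by
        have : (μ / (m + 1 + μ) : ℝ) ≠ 0 := by positivity
        exact_mod_cast this
      unfold dt
      exact ((differentiableAt_id.const_cpow (Or.inl this)).const_mul _).differentiableWithinAt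
    · intro m z hz
      refine (norm_dt_le h0 h1 m (by norm_num) (le_of_lt hz)).trans ?_
      have : (1 / 2 : ℝ) ^ (z.re - 3 / 2) ≤ 1 :=
        Real.rpow_le_one (by norm_num) (by norm_num) (by have : 3 / 2 < z.re := hz; linarith)
      have h4 : (0 : ℝ) ≤ (1 / ((m : ℝ) + 2)) ^ (3 / 2 : ℝ) := by positivity
      nlinarith
  exact (differentiableAt_const _).add (this.differentiableAt (hU.mem_nhds hs))

/-- zero-free region -/
lemma DD_ne_zero {p μ : ℝ} (h0 : 0 < μ) (h1 : μ ≤ 1) {s : ℂ} (hs : 1 + μ ≤ s.re) :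
    DD p μ s ≠ 0 := by
  have hμ0 : (0:ℝ) ≤ μ := h0.le
  set f : ℕ → ℝ := fun m => (μ / (m + 1 + μ)) ^ (1 + μ)
  set h : ℕ → ℝ := fun m => (μ / (m + μ)) ^ μ with hh
  have hlt : ∀ m, f m < h m - h (m + 1) := by
    intro m
    have hm : (0:ℝ) ≤ m := Nat.cast_nonneg m
    have p1 : (0:ℝ) < m + μ := by positivity
    have p2 : (0:ℝ) < m + 1 + μ := by positivity
    have e1 : h m = h (m + 1) * ((m + μ) / (m + 1 + μ)) ^ (-μ) := by
      simp only [hh]; push_cast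
      rw [Real.rpow_neg (by positivity), ← Real.inv_rpow (by positivity), ← Real.mul_rpow (by positivity) (by positivity)]
      congr 1; field_simp
    have e2 : f m = h (m + 1) * (μ / (m + 1 + μ)) := by
      simp only [f, hh]; push_cast
      rw [add_comm 1 μ, Real.rpow_add_one (by positivity)]
    have hp : 0 < h (m + 1) := by simp only [hh]; positivity
    have hb : 1 + μ / (m + 1 + μ) < ((m + μ) / (m + 1 + μ)) ^ (-μ) := by
      rw [Real.rpow_def_of_pos (by positivity)]
      have l1 : Real.log ((m + μ) / (m + 1 + μ)) < (m + μ) / (m + 1 + μ) - 1 := by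
        apply Real.log_lt_sub_one_of_pos (by positivity)
        intro h; rw [div_eq_one_iff_eq p2.ne'] at h; linarith
      have l2 : (m + μ) / (m + 1 + μ) - 1 = - (1 / (m + 1 + μ)) := by field_simp; ring
      have l3 := Real.add_one_le_exp (Real.log ((m + μ) / (m + 1 + μ)) * -μ)
      have l4 : μ / (m + 1 + μ) = μ * (1 / (m + 1 + μ)) := by ring
      rw [l2] at l1
      nlinarith
    rw [e1, e2]
    nlinarith
  have hsum : ∀ n, ∑ i ∈ Finset.range n, (h i - h (i + 1)) ≤ 1 := by
    intro n
    rw [Finset.sum_range_sub']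
    have : 0 ≤ h n := by simp only [hh]; positivity
    have : h 0 = 1 := by simp [hh, h0.ne']
    linarith
  have hf0 : ∀ m, 0 ≤ f m := fun m => by simp only [f]; positivity
  set δ := h 0 - h (0 + 1) - f 0
  have hδ : 0 < δ := by have := hlt 0; simp only [δ]; linarith
  have hfs : ∀ n, ∑ i ∈ Finset.range n, f i ≤ 1 - δ := by
    have hfs' : ∀ n, ∑ i ∈ Finset.range (n + 1), f i ≤ 1 - δ := by
      intro n
      have h1 := hsum (n + 1)
      rw [Finset.sum_range_succ'] at h1 ⊢
      have h2 : ∑ i ∈ Finset.range n, f (i + 1) ≤ ∑ i ∈ Finset.range n, (h (i + 1) - h (i + 1 + 1)) :=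
        Finset.sum_le_sum fun i _ => (hlt _).le
      simp only [δ]; linarith
    intro n
    refine le_trans ?_ (hfs' n)
    rw [Finset.sum_range_succ]; linarith [hf0 n]
  have hsf : Summable f := summable_of_sum_range_le hf0 hfs
  have ht : ∑' m, f m ≤ 1 - δ := hsf.tsum_le_of_sum_range_le hfs
  have hb : ‖∑' m : ℕ, dt p μ m s‖ ≤ 1 - δ := by
    refine (tsum_of_norm_bounded hsf.hasSum fun m => ?_).trans ht
    rw [norm_dt h0]
    refine Real.rpow_le_rpow_of_exponent_ge (by positivity) ?_ hs
    rw [div_le_one (by positivity)]; linarith [(Nat.cast_nonneg m : (0:ℝ) ≤ m)]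
  intro h0
  rw [DD] at h0
  have : ∑' m : ℕ, dt p μ m s = -1 := by linear_combination h0
  rw [this] at hb; simp at hb; linarith


lemma log_bound {z : ℂ} (hz : ‖z‖ ≤ 2 / 3) : ‖Complex.log (1 + z)‖ ≤ 2 * ‖z‖ := by
  have h := Complex.norm_log_one_add_le (z := z) (by linarith)
  have h1 : (1 - ‖z‖)⁻¹ ≤ 3 := by
    rw [inv_le_comm₀ (by linarith) (by norm_num)]; linarith
  have h2 := norm_nonneg z
  have h3 : ‖z‖ ^ 2 * (1 - ‖z‖)⁻¹ ≤ ‖z‖ ^ 2 * 3 := by gcongr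
  nlinarith

lemma slit_of_norm {z : ℂ} (hz : ‖z - 1‖ ≤ 2 / 3) : z ∈ slitPlane := by
  left
  have := (abs_re_le_norm (z - 1)).trans hz
  rw [sub_re, one_re, abs_le] at this
  linarith

lemma logDD_bound {p μ : ℝ} (h0 : 0 < μ) (h1 : μ ≤ 1) {s : ℂ} (hs : 2 ≤ s.re) :
    ‖Complex.log (DD p μ s)‖ ≤ 2 * (1 / 2) ^ (s.re - 2) := by
  have h := log_bound (norm_DD_sub_one' (p := p) h0 h1 hs)
  rw [add_sub_cancel] at h
  have h2 := norm_DD_sub_one (p := p) h0 h1 hs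
  have : (0:ℝ) < (1 / 2) ^ (s.re - 2) := by positivity
  linarith

lemma logDD_bound' {p μ : ℝ} (h0 : 0 < μ) (h1 : μ ≤ 1) {s : ℂ} (hs : 2 ≤ s.re) :
    ‖Complex.log (DD p μ s)‖ ≤ 2 := by
  have h := logDD_bound (p := p) h0 h1 hs
  have : (1 / 2 : ℝ) ^ (s.re - 2) ≤ 1 := Real.rpow_le_one (by norm_num) (by norm_num) (by linarith)
  linarith

lemma logDD_diff {p μ : ℝ} (h0 : 0 < μ) (h1 : μ ≤ 1) {s : ℂ} (hs : 2 ≤ s.re) :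
    DifferentiableAt ℂ (fun s => Complex.log (DD p μ s)) s :=
  (DD_diff h0 h1 (by linarith)).clog (slit_of_norm (norm_DD_sub_one' h0 h1 hs))

lemma int_half_pow {A : ℝ} (σ : ℝ) (hσ : 2 ≤ σ) (hA : σ ≤ A) :
    ∫ x in σ..A, (2 : ℝ) * (1 / 2) ^ (x - 2) ≤ 4 := by
  have hl : 0 < Real.log 2 := Real.log_pos (by norm_num)
  have hd : ∀ x : ℝ, HasDerivAt (fun x : ℝ => -(2 / Real.log 2) * (1 / 2 : ℝ) ^ (x - 2)) (2 * (1 / 2) ^ (x - 2)) x := by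
    intro x
    have h := (((hasDerivAt_id x).sub_const 2).const_rpow (a := (1 / 2 : ℝ)) (by norm_num)).const_mul (-(2 / Real.log 2))
    have : Real.log (1 / 2) = - Real.log 2 := by rw [one_div, Real.log_inv]
    rw [this] at h
    refine h.congr_deriv ?_
    simp; field_simp
  rw [intervalIntegral.integral_eq_sub_of_hasDerivAt (fun x _ => hd x)]
  · have h1 : (1 / 2 : ℝ) ^ (σ - 2) ≤ 1 := Real.rpow_le_one (by norm_num) (by norm_num) (by linarith)
    have h2 : (0 : ℝ) < (1 / 2) ^ (A - 2) := by positivity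
    have h3 : 2 / Real.log 2 ≤ 4 := by
      rw [div_le_iff₀ hl]; have := Real.log_two_gt_d9; linarith
    have h4 : 0 < 2 / Real.log 2 := by positivity
    nlinarith
  · apply Continuous.intervalIntegrable
    have : Continuous (fun x : ℝ => (1 / 2 : ℝ) ^ (x - 2)) := by
      apply Continuous.rpow continuous_const (by fun_prop)
      intro x; left; norm_num
    fun_prop

lemma int_logDD {p μ : ℝ} (h0 : 0 < μ) (h1 : μ ≤ 1) {σ t₁ t₂ : ℝ} (hσ : 2 ≤ σ) (ht : t₁ ≤ t₂) :
    ‖∫ t in t₁..t₂, Complex.log (DD p μ (σ + t * I))‖ ≤ 9 := by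
  set f := fun s => Complex.log (DD p μ s) with hf
  have hlim : Tendsto (fun A : ℝ => (t₂ - t₁) * (2 * (1 / 2 : ℝ) ^ (A - 2))) atTop (𝓝 0) := by
    have h := (tendsto_rpow_atTop_of_base_lt_one (1 / 2 : ℝ) (by norm_num) (by norm_num)).comp
      (tendsto_atTop_add_const_right atTop (-2 : ℝ) tendsto_id)
    have h2 := (h.const_mul 2).const_mul (t₂ - t₁)
    simpa [Function.comp_def, sub_eq_add_neg] using h2
  obtain ⟨A, hA1, hA2⟩ := ((hlim.eventually (gt_mem_nhds (show (0:ℝ) < 1 by norm_num))).and (eventually_ge_atTop σ)).exists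
  have hR : DifferentiableOn ℂ f (uIcc σ A ×ℂ uIcc t₁ t₂) := by
    intro z hz
    rw [mem_reProdIm, uIcc_of_le hA2] at hz
    exact (logDD_diff h0 h1 (by linarith [hz.1.1])).differentiableWithinAt
  have hC := Complex.integral_boundary_rect_eq_zero_of_differentiableOn f (⟨σ, t₁⟩ : ℂ) ⟨A, t₂⟩ hR
  simp only [smul_eq_mul] at hC
  have b1 : ∀ y : ℝ, ‖∫ x in σ..A, f (x + y * I)‖ ≤ 4 := by
    intro y
    refine le_trans (intervalIntegral.norm_integral_le_of_norm_le hA2 (Eventually.of_forall fun x hx => ?_) ?_) (int_half_pow σ hσ hA2)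
    · have := logDD_bound (p := p) h0 h1 (s := x + y * I) (by simp; linarith [hx.1])
      simpa using this
    · apply Continuous.intervalIntegrable
      have : Continuous (fun x : ℝ => (1 / 2 : ℝ) ^ (x - 2)) := by
        apply Continuous.rpow continuous_const (by fun_prop)
        intro x; left; norm_num
      fun_prop
  have b2 : ‖∫ y in t₁..t₂, f (A + y * I)‖ ≤ 1 := by
    refine (intervalIntegral.norm_integral_le_of_norm_le_const (C := 2 * (1 / 2 : ℝ) ^ (A - 2)) fun y hy => ?_).trans ?_
    · have := logDD_bound (p := p) h0 h1 (s := A + y * I) (by simp; linarith)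
      simpa using this
    · rw [abs_of_nonneg (by linarith), mul_comm]; exact hA1.le
  have e : I * ∫ y in t₁..t₂, f (σ + y * I) = (∫ x in σ..A, f (x + t₁ * I)) - (∫ x in σ..A, f (x + t₂ * I)) + I * ∫ y in t₁..t₂, f (A + y * I) := by
    linear_combination -hC
  have : ‖I * ∫ y in t₁..t₂, f (σ + y * I)‖ ≤ 4 + 4 + 1 := by
    rw [e]
    refine (norm_add_le _ _).trans (add_le_add ((norm_sub_le _ _).trans (add_le_add (b1 _) (b1 _))) ?_)
    rw [norm_mul, norm_I, one_mul]; exact b2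
  rw [norm_mul, norm_I, one_mul] at this
  linarith

end LZ

open scoped Classical
namespace LZ
open Complex Filter Topology Asymptotics Set MeasureTheory
open scoped Real

lemma norm_Gamma_neg (n : ℕ) (t : ℝ) : ‖Complex.Gamma (n + 1 + (-t : ℝ) * I)‖ = ‖Complex.Gamma (n + 1 + t * I)‖ := by
  have : ((n : ℂ) + 1 + (-t : ℝ) * I) = (starRingEnd ℂ) (n + 1 + t * I) := by
    simp
  rw [this, Complex.Gamma_conj, Complex.norm_conj]

lemma norm_Gamma_sq {t : ℝ} (ht : 0 < t) : ‖Complex.Gamma (1 + t * I)‖ ^ 2 = π * t / Real.sinh (π * t) := by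
  have h := Complex.Gamma_mul_Gamma_one_sub (t * I)
  have htI : (t : ℂ) * I ≠ 0 := by simp [ht.ne']
  have h1 := Complex.Gamma_add_one _ htI
  have h2 : Complex.Gamma (1 - t * I) = (starRingEnd ℂ) (Complex.Gamma (1 + t * I)) := by
    rw [← Complex.Gamma_conj]; simp [sub_eq_add_neg]
  have h3 : Complex.sin (π * (t * I)) = Complex.sinh (π * t) * I := by
    rw [← mul_assoc, Complex.sin_mul_I]
  have hs : 0 < Real.sinh (π * t) := Real.sinh_pos_iff.2 (by positivity)
  have hs' : Complex.sinh (π * t) ≠ 0 := by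
    rw [← ofReal_mul, ← ofReal_sinh]; exact_mod_cast hs.ne'
  have h4 : Complex.Gamma (1 + t * I) * (starRingEnd ℂ) (Complex.Gamma (1 + t * I)) = π * t / Complex.sinh (π * t) := by
    rw [← h2, add_comm (1 : ℂ), h1, mul_assoc, h, h3]
    field_simp
  rw [Complex.mul_conj] at h4
  rw [← Complex.normSq_eq_norm_sq]
  rw [← ofReal_mul, ← ofReal_sinh, ← ofReal_div] at h4
  exact_mod_cast h4

lemma logGamma_zero {t : ℝ} (ht : 1 ≤ t) :
    |Real.log ‖Complex.Gamma (1 + t * I)‖ - ((1 / 2) * Real.log t + (1 / 2) * Real.log (2 * π) - π * t / 2)| ≤ 1 / t := by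
  have hp := Real.pi_pos
  have hs : 0 < Real.sinh (π * t) := Real.sinh_pos_iff.2 (by positivity)
  have h1 : 2 * Real.log ‖Complex.Gamma (1 + t * I)‖ = Real.log (π * t / Real.sinh (π * t)) := by
    rw [← norm_Gamma_sq (by linarith), Real.log_pow]; norm_num
  set x := Real.exp (-(2 * π * t)) with hx
  have hx0 : 0 < x := Real.exp_pos _
  have hx1 : x ≤ 1 / (2 * π * t) := by
    rw [hx, Real.exp_neg, inv_eq_one_div]
    apply one_div_le_one_div_of_le (by positivity)
    linarith [Real.add_one_le_exp (2 * π * t)]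
  have hx2 : 1 / (2 * π * t) ≤ 1 / 6 * (1 / t) := by
    rw [← one_div_mul_one_div]; gcongr; linarith [Real.pi_gt_three]
  have hx3 : 1 / t ≤ 1 := by rw [div_le_one (by linarith)]; exact ht
  have e1 : Real.sinh (π * t) = Real.exp (π * t) * (1 - x) / 2 := by
    rw [Real.sinh_eq, hx, mul_sub, ← Real.exp_add]; ring_nf
  have h1x : 0 < 1 - x := by linarith
  have e2 : π * t / Real.sinh (π * t) = (2 * π) * t * (Real.exp (π * t))⁻¹ * (1 - x)⁻¹ := by
    rw [e1]; have := Real.exp_pos (π * t); field_simp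
  have t0 : t ≠ 0 := by linarith
  rw [e2, Real.log_mul (by positivity) (by positivity), Real.log_mul (by positivity) (by positivity), Real.log_mul (by positivity) t0,
    Real.log_inv, Real.log_inv, Real.log_exp] at h1
  have l1 : Real.log (1 - x) ≤ 0 := Real.log_nonpos h1x.le (by linarith)
  have l2 := Real.one_sub_inv_le_log_of_pos h1x
  have l3 : (1 - x)⁻¹ ≤ 1 + 2 * x := by
    rw [inv_eq_one_div, div_le_iff₀ h1x]; nlinarith
  have : 0 < 1 / t := by positivity
  rw [abs_le]; constructor <;> linarith

lemma logGamma (n : ℕ) : ∃ C : ℝ, 0 ≤ C ∧ ∀ t : ℝ, 1 ≤ t →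
    |Real.log ‖Complex.Gamma (n + 1 + t * I)‖ - ((n + 1 / 2) * Real.log t + (1 / 2) * Real.log (2 * π) - π * t / 2)| ≤ C / t := by
  induction n with
  | zero => exact ⟨1, by norm_num, fun t ht => by simpa using logGamma_zero ht⟩
  | succ n ih =>
    obtain ⟨C, hC0, hC⟩ := ih
    refine ⟨C + (n + 1) ^ 2, by positivity, fun t ht => ?_⟩
    have ht0 : 0 < t := by linarith
    have h := hC t ht
    have hne : ((n : ℂ) + 1 + t * I) ≠ 0 := by
      intro h; have := congrArg im h; simp at this; linarith
    have hG : Complex.Gamma (n + 1 + t * I) ≠ 0 := Complex.Gamma_ne_zero_of_re_pos (by simp; positivity)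
    have e : (((n + 1 : ℕ) : ℂ) + 1 + t * I) = (n + 1 + t * I) + 1 := by push_cast; ring
    rw [e, Complex.Gamma_add_one _ hne, norm_mul, Real.log_mul (by simpa using hne) (by simpa using hG)]
    have hn : ‖((n : ℂ) + 1 + t * I)‖ ^ 2 = t ^ 2 * (1 + (n + 1) ^ 2 / t ^ 2) := by
      rw [← Complex.normSq_eq_norm_sq, Complex.normSq_apply]; simp; field_simp; ring
    have hl : 2 * Real.log ‖((n : ℂ) + 1 + t * I)‖ = 2 * Real.log t + Real.log (1 + (n + 1) ^ 2 / t ^ 2) := by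
      have := congrArg Real.log hn
      rw [Real.log_pow, Real.log_mul (by positivity) (by positivity), Real.log_pow] at this
      exact_mod_cast this
    have l1 : 0 ≤ Real.log (1 + ((n : ℝ) + 1) ^ 2 / t ^ 2) := Real.log_nonneg (by
      have : 0 ≤ ((n : ℝ) + 1) ^ 2 / t ^ 2 := by positivity
      linarith)
    have l2 : Real.log (1 + ((n : ℝ) + 1) ^ 2 / t ^ 2) ≤ ((n : ℝ) + 1) ^ 2 / t := by
      have a1 := Real.log_le_sub_one_of_pos (show 0 < 1 + ((n : ℝ) + 1) ^ 2 / t ^ 2 by positivity)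
      have a2 : ((n : ℝ) + 1) ^ 2 / t ^ 2 ≤ ((n : ℝ) + 1) ^ 2 / t := by
        gcongr; nlinarith
      linarith
    rw [add_div]
    push_cast
    rw [abs_le] at h ⊢
    constructor <;> linarith [h.1, h.2]

lemma Gamma_growth (n : ℕ) : ∃ C : ℝ, 0 ≤ C ∧ ∀ t : ℝ, 1 ≤ |t| →
    ‖Complex.Gamma (n + 1 + t * I)‖ * Real.exp (π * |t| / 2) ≤ C * |t| ^ (n + 1) := by
  obtain ⟨C, hC0, hC⟩ := logGamma n
  refine ⟨Real.exp (C + 1 / 2 * Real.log (2 * π)), by positivity, fun t ht => ?_⟩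
  have e : ‖Complex.Gamma (n + 1 + t * I)‖ = ‖Complex.Gamma (n + 1 + |t| * I)‖ := by
    rcases abs_choice t with h | h
    · rw [h]
    · rw [h, norm_Gamma_neg]
  have h := (abs_le.1 (hC |t| ht)).2
  have hG : Complex.Gamma (n + 1 + |t| * I) ≠ 0 := Complex.Gamma_ne_zero_of_re_pos (by simp; positivity)
  have hG' : 0 < ‖Complex.Gamma (n + 1 + |t| * I)‖ := by simpa using hG
  have h0 : 0 < |t| := by linarith
  have hd : C / |t| ≤ C := div_le_self hC0 ht
  have hl : 0 ≤ Real.log |t| := Real.log_nonneg ht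
  rw [e, ← Real.exp_log hG', ← Real.exp_add]
  have e2 : |t| ^ (n + 1) = Real.exp ((n + 1) * Real.log |t|) := by
    rw [mul_comm, ← Real.rpow_def_of_pos h0]; exact_mod_cast (Real.rpow_natCast _ _).symm
  rw [e2, ← Real.exp_add, Real.exp_le_exp]
  linarith

end LZ

open scoped Classical
namespace LZ
open Complex Filter Topology Asymptotics Set MeasureTheory
open scoped Real

lemma norm_eLN (p : ℝ) {q : ℝ} (h1 : q ≤ 1) (R : ℝ) (m : ℕ) {w : ℂ} (hw : 2 ≤ w.re) (hw' : w.re ≤ R) :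
    ‖ee p (-(m + 1 : ℕ)) / (((m : ℂ) + (1 - q : ℝ))) ^ w‖ ≤ 1 / |(m : ℝ) + (1 - q)| ^ (2 : ℝ) + 1 / |(m : ℝ) + (1 - q)| ^ R := by
  have hm : (0:ℝ) ≤ m := Nat.cast_nonneg m
  rw [norm_div, norm_ee]
  have e : ((m : ℂ) + (1 - q : ℝ)) = ((m + (1 - q) : ℝ) : ℂ) := by push_cast; ring
  rw [e]
  rcases eq_or_lt_of_le (show (0:ℝ) ≤ m + (1 - q) by linarith) with h | h
  · have hw0 : w ≠ 0 := by rintro rfl; simp at hw; linarith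
    rw [← h]; simp [zero_cpow hw0]; positivity
  · rw [norm_cpow_eq_rpow_re_of_pos h, abs_of_pos h, one_div, one_div, one_div, ← Real.rpow_neg h.le, ← Real.rpow_neg h.le, ← Real.rpow_neg h.le]
    have p1 : 0 < (m + (1 - q)) ^ (-(2:ℝ)) := by positivity
    have p2 : 0 < (m + (1 - q)) ^ (-R) := by positivity
    rcases le_total 1 (m + (1 - q)) with h3 | h3
    · have := Real.rpow_le_rpow_of_exponent_le h3 (show -w.re ≤ -2 by linarith)
      linarith
    · have := Real.rpow_le_rpow_of_exponent_ge h h3 (show -R ≤ -w.re by linarith)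
      linarith

lemma LN_bound (p : ℝ) {q : ℝ} (h1 : q ≤ 1) (R : ℝ) (hR : 1 < R) : ∃ C : ℝ, 0 ≤ C ∧ ∀ w : ℂ, 2 ≤ w.re → w.re ≤ R →
    ‖LN p q w‖ ≤ C := by
  have S := ((Real.summable_one_div_nat_add_rpow (1 - q) 2).2 (by norm_num)).add ((Real.summable_one_div_nat_add_rpow (1 - q) R).2 hR)
  refine ⟨_, tsum_nonneg (fun i => by positivity), fun w h2 h3 => tsum_of_norm_bounded S.hasSum fun m => norm_eLN p h1 R m h2 h3⟩

section
variable {l a : ℝ} (hl0 : 0 < l) (hl1 : l ≤ 1) (ha0 : 0 < a) (ha1 : a ≤ 1) {F : ℂ → ℂ} (hF : IsLerch l a F)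

include hF in
lemma F_eq_LS {s : ℂ} (hs : 1 < s.re) : F s = LS l a s := by
  rw [hF.2 s hs, lerchSeries, LS]; simp [ee]

include hl0 hl1 ha0 ha1 hF in
lemma F_left_raw {s : ℂ} (hs : s.re < 0) : F s = (1 / 2) * cexp (-(2 * π * I * l * a)) * Gammaℂ (1 - s) *
      (cexp (π * (1 - s) / 2 * I) * LS (-a) l (1 - s) + cexp (-(π * (1 - s) / 2) * I) * LN (-a) l (1 - s)) := by
  have h0 : s ≠ 0 := by rintro rfl; simp at hs
  have h1 : s ≠ 1 := by rintro rfl; simp at hs; linarith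
  rw [F_eq_HF hl0 hl1 ha0 ha1 hF h0 h1, ← HF_one_sub hl0 hl1 ha0 ha1 (w := 1 - s) (by simp; linarith)]
  simp

lemma norm_eps : ‖cexp (-(2 * π * I * l * a))‖ = 1 := by
  have : -(2 * π * I * l * a) = ((-(2 * π * l * a) : ℝ) : ℂ) * I := by push_cast; ring
  rw [this, norm_exp_ofReal_mul_I]

lemma norm_eI (w : ℂ) : ‖cexp (π * w / 2 * I)‖ = Real.exp (-(π * w.im / 2)) := by
  rw [Complex.norm_exp]; congr 1; simp

lemma norm_eI' (w : ℂ) : ‖cexp (-(π * w / 2) * I)‖ = Real.exp (π * w.im / 2) := by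
  rw [Complex.norm_exp]; congr 1; simp

lemma norm_Gammaℂ (w : ℂ) : ‖Gammaℂ w‖ = 2 * (2 * π) ^ (-w.re) * ‖Complex.Gamma w‖ := by
  rw [Gammaℂ_def, norm_mul, norm_mul]
  have : (2 * π : ℂ) = ((2 * π : ℝ) : ℂ) := by push_cast; ring
  rw [this, norm_cpow_eq_rpow_re_of_pos (by positivity)]
  simp

lemma norm_LS_lower {p μ : ℝ} (h0 : 0 < μ) (h1 : μ ≤ 1) {s : ℂ} (hs : 2 ≤ s.re) : 1 / 3 ≤ ‖LS p μ s‖ := by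
  rw [LS_eq h0 h1 (by linarith), norm_mul, norm_cpow_eq_rpow_re_of_pos h0]
  have h := norm_DD_sub_one' (p := p) h0 h1 hs
  have h2 : 1 / 3 ≤ ‖DD p μ s‖ := by
    have := norm_sub_norm_le (1 : ℂ) (1 - DD p μ s)
    rw [norm_sub_rev] at h
    simp at this; linarith
  have h3 : 1 ≤ μ ^ ((-s).re) := Real.one_le_rpow_of_pos_of_le_one_of_nonpos h0 h1 (by simp; linarith)
  nlinarith

lemma norm_LS_upper {p μ : ℝ} (h0 : 0 < μ) (h1 : μ ≤ 1) {s : ℂ} (hs : 2 ≤ s.re) : ‖LS p μ s‖ ≤ 2 * μ ^ (-s.re) := by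
  rw [LS_eq h0 h1 (by linarith), norm_mul, norm_cpow_eq_rpow_re_of_pos h0]
  have h := norm_DD_sub_one' (p := p) h0 h1 hs
  have h2 : ‖DD p μ s‖ ≤ 2 := by
    have := norm_add_le (1 : ℂ) (DD p μ s - 1)
    simp at this; linarith
  rw [mul_comm, neg_re]
  gcongr

include hl0 hl1 ha0 ha1 hF in
lemma F_left (n : ℕ) (hn : 1 ≤ n) : ∃ C : ℝ, 0 ≤ C ∧ ∃ t₁ : ℝ, 1 ≤ t₁ ∧ ∀ s : ℂ, -n ≤ s.re → s.re ≤ -1 → t₁ ≤ s.im →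
    ∃ η : ℂ, ‖η‖ ≤ 1 / 2 ∧ ‖η‖ ≤ C / s.im ∧
    F s = (1 / 2) * cexp (-(2 * π * I * l * a)) * Gammaℂ (1 - s) * cexp (π * (1 - s) / 2 * I) *
      (l : ℂ) ^ (-(1 - s)) * DD (-a) l (1 - s) * (1 + η) := by
  have hn' : (1:ℝ) ≤ n := by exact_mod_cast hn
  obtain ⟨C, hC0, hC⟩ := LN_bound (-a) hl1 (1 + n) (by linarith)
  refine ⟨3 * C, by positivity, max 1 (6 * C), le_max_left _ _, fun s h1 h2 h3 => ?_⟩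
  have hw : 2 ≤ (1 - s).re := by simp; linarith
  have hw2 : (1 - s).re ≤ 1 + n := by simp; linarith
  have t1 : 1 ≤ s.im := (le_max_left _ _).trans h3
  have t2 : 6 * C ≤ s.im := (le_max_right _ _).trans h3
  have hLS := norm_LS_lower (p := -a) hl0 hl1 hw
  have hLS0 : LS (-a) l (1 - s) ≠ 0 := by
    intro h; rw [h] at hLS; simp at hLS; linarith
  set η : ℂ := cexp (-(π * (1 - s) / 2) * I) * LN (-a) l (1 - s) / (cexp (π * (1 - s) / 2 * I) * LS (-a) l (1 - s)) with hη
  have hb : ‖η‖ ≤ 3 * C / s.im := by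
    rw [hη, norm_div, norm_mul, norm_mul, norm_eI, norm_eI']
    have e1 : (1 - s).im = - s.im := by simp
    rw [e1, mul_div_mul_comm, ← Real.exp_sub]
    have e2 : Real.exp (π * -s.im / 2 - -(π * -s.im / 2)) ≤ 1 / s.im := by
      have : π * -s.im / 2 - -(π * -s.im / 2) = -(π * s.im) := by ring
      rw [this, Real.exp_neg, inv_eq_one_div]
      apply one_div_le_one_div_of_le (by linarith)
      have := Real.add_one_le_exp (π * s.im)
      nlinarith [Real.pi_gt_three]
    have e3 : ‖LN (-a) l (1 - s)‖ / ‖LS (-a) l (1 - s)‖ ≤ 3 * C := by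
      rw [div_le_iff₀ (by linarith)]
      have := hC _ hw hw2
      nlinarith
    calc _ ≤ (1 / s.im) * (3 * C) := by gcongr
      _ = _ := by ring
  refine ⟨η, hb.trans ?_, hb, ?_⟩
  · rw [div_le_iff₀ (by linarith)]; linarith
  · rw [F_left_raw hl0 hl1 ha0 ha1 hF (by linarith)]
    have e : (l : ℂ) ^ (-(1 - s)) * DD (-a) l (1 - s) = LS (-a) l (1 - s) := (LS_eq hl0 hl1 (by linarith)).symm
    have hE := Complex.exp_ne_zero (π * (1 - s) / 2 * I)
    rw [mul_assoc _ ((l : ℂ) ^ _), e, hη]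
    field_simp

include hl0 hl1 ha0 ha1 hF in
/-- nonvanishing and asymptotic on the left line -/
lemma F_left_line (n : ℕ) (hn : 1 ≤ n) : ∃ C : ℝ, 0 ≤ C ∧ ∃ t₁ : ℝ, 1 ≤ t₁ ∧
    (∀ s : ℂ, -n ≤ s.re → s.re ≤ -1 → t₁ ≤ s.im → F s ≠ 0) ∧
    (∀ t : ℝ, t₁ ≤ t → |Real.log ‖(a : ℂ) ^ (-(n : ℂ) + t * I) * F (-n + t * I)‖
      - (-n * Real.log a - (n + 1) * Real.log l + (n + 1 / 2) * Real.log (t / (2 * π))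
          + Real.log ‖DD (-a) l (((n + 1 : ℝ) : ℂ) + (-t : ℝ) * I)‖)| ≤ C / t) := by
  obtain ⟨C, hC0, t₁, ht1, hC⟩ := F_left hl0 hl1 ha0 ha1 hF n hn
  obtain ⟨C2, hC20, hC2⟩ := logGamma n
  have hn' : (1:ℝ) ≤ n := by exact_mod_cast hn
  have hl : (l : ℂ) ≠ 0 := by exact_mod_cast hl0.ne'
  have ha : (a : ℂ) ≠ 0 := by exact_mod_cast ha0.ne'
  have hDD : ∀ w : ℂ, 2 ≤ w.re → DD (-a) l w ≠ 0 := fun w hw => DD_ne_zero hl0 hl1 (by linarith)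
  have hη : ∀ η : ℂ, ‖η‖ ≤ 1 / 2 → 1 + η ≠ 0 := by
    intro η h h2
    have : η = -1 := by linear_combination h2
    rw [this] at h; norm_num at h
  refine ⟨2 * C + C2, by positivity, t₁, ht1, fun s h1 h2 h3 => ?_, fun t ht => ?_⟩
  · obtain ⟨η, h4, -, h5⟩ := hC s h1 h2 h3
    have g : Gammaℂ (1 - s) ≠ 0 := by
      have : 0 < ‖Gammaℂ (1 - s)‖ := by
        rw [norm_Gammaℂ]
        have := norm_pos_iff.2 (Complex.Gamma_ne_zero_of_re_pos (s := 1 - s) (by simp; linarith))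
        positivity
      exact norm_pos_iff.1 this
    rw [h5]
    have h6 := hDD (1 - s) (by simp; linarith)
    have h7 := hη _ h4
    have h8 : (l : ℂ) ^ (-(1 - s)) ≠ 0 := by rw [Ne, cpow_eq_zero_iff]; tauto
    exact mul_ne_zero (mul_ne_zero (mul_ne_zero (mul_ne_zero (mul_ne_zero (mul_ne_zero (by norm_num)
      (Complex.exp_ne_zero _)) g) (Complex.exp_ne_zero _)) h8) h6) h7
  · have t0 : 0 < t := by linarith
    obtain ⟨η, h4, h4', h5⟩ := hC (-n + t * I) (by simp) (by simp; linarith) (by simpa using ht)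
    have ew : (1 - (-n + t * I) : ℂ) = ((n + 1 : ℝ) : ℂ) + (-t : ℝ) * I := by push_cast; ring
    set w : ℂ := ((n + 1 : ℝ) : ℂ) + (-t : ℝ) * I with hw
    have wre : w.re = n + 1 := by simp [hw]
    have wim : w.im = -t := by simp [hw]
    have hG := hC2 t (by linarith)
    have eG : ‖Complex.Gamma w‖ = ‖Complex.Gamma (n + 1 + t * I)‖ := by
      rw [← norm_Gamma_neg, hw]; push_cast; ring_nf
    have hGp : 0 < ‖Complex.Gamma w‖ := norm_pos_iff.2 (Complex.Gamma_ne_zero_of_re_pos (by rw [wre]; linarith))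
    have hDp := norm_pos_iff.2 (hDD w (by rw [wre]; linarith))
    have hηp := norm_pos_iff.2 (hη _ h4)
    have hnorm : ‖(a : ℂ) ^ (-(n : ℂ) + t * I) * F (-n + t * I)‖ =
        a ^ (-n : ℝ) * ((2 * π) ^ (-(n + 1 : ℝ)) * ‖Complex.Gamma w‖ * Real.exp (π * t / 2) * l ^ (-(n + 1 : ℝ)) * ‖DD (-a) l w‖ * ‖1 + η‖) := by
      rw [h5, ew]
      simp only [norm_mul]
      rw [norm_eps, norm_Gammaℂ, norm_eI, norm_cpow_eq_rpow_re_of_pos ha0, norm_cpow_eq_rpow_re_of_pos hl0, neg_re, wre, wim]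
      simp
      ring_nf
      tauto
    rw [hnorm, Real.log_mul (by positivity) (by positivity), Real.log_mul (by positivity) (by positivity),
      Real.log_mul (by positivity) (by positivity), Real.log_mul (by positivity) (by positivity),
      Real.log_mul (by positivity) (by positivity), Real.log_mul (by positivity) (by positivity), Real.log_rpow ha0,
      Real.log_rpow hl0, Real.log_rpow (by positivity), Real.log_exp, Real.log_div (by positivity) (by positivity)]
    have hlog : |Real.log ‖1 + η‖| ≤ 2 * (C / t) := by
      have h6 := log_bound (z := η) (by linarith)
      have h7 := abs_re_le_norm (Complex.log (1 + η))
      rw [Complex.log_re] at h7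
      have : (-(n : ℂ) + t * I).im = t := by simp
      rw [this] at h4'
      linarith
    rw [eG]
    rw [add_div, mul_div_assoc 2 C t]
    rw [abs_le] at hlog hG ⊢
    constructor <;> linarith [hlog.1, hlog.2, hG.1, hG.2]

end
end LZ

open scoped Classical
namespace LZ
open Complex Filter Topology Asymptotics Set MeasureTheory
open scoped Real

lemma mellin_bound {f : ℝ → ℂ} (hf : ∀ s, MellinConvergent f s) (x₁ x₂ : ℝ) :
    ∃ C : ℝ, 0 ≤ C ∧ ∀ s : ℂ, x₁ ≤ s.re → s.re ≤ x₂ → ‖mellin f s‖ ≤ C := by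
  have i1 := (hf x₁).norm
  have i2 := (hf x₂).norm
  have hn : ∀ s : ℂ, ∀ t ∈ Ioi (0:ℝ), ‖(t : ℂ) ^ (s - 1) • f t‖ = t ^ (s.re - 1) * ‖f t‖ := by
    intro s t ht
    rw [norm_smul, norm_cpow_eq_rpow_re_of_pos ht]; simp
  refine ⟨∫ t in Ioi (0:ℝ), (‖(t : ℂ) ^ ((x₁ : ℂ) - 1) • f t‖ + ‖(t : ℂ) ^ ((x₂ : ℂ) - 1) • f t‖),
    integral_nonneg fun t => by positivity, fun s h1 h2 => ?_⟩
  refine norm_integral_le_of_norm_le (i1.add i2) ?_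
  refine (ae_restrict_iff' measurableSet_Ioi).2 (Eventually.of_forall fun t ht => ?_)
  have ht' : 0 < t := ht
  rw [hn s t ht, hn x₁ t ht, hn x₂ t ht, ← add_mul, ofReal_re, ofReal_re]
  gcongr
  have p1 : 0 < t ^ (x₁ - 1) := by positivity
  have p2 : 0 < t ^ (x₂ - 1) := by positivity
  rcases le_total 1 t with h3 | h3
  · have := Real.rpow_le_rpow_of_exponent_le h3 (show s.re - 1 ≤ x₂ - 1 by linarith)
    linarith
  · have := Real.rpow_le_rpow_of_exponent_ge ht' h3 (show x₁ - 1 ≤ s.re - 1 by linarith)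
    linarith

lemma norm_Gamma_le {w : ℂ} (hw : 0 < w.re) : ‖Complex.Gamma w‖ ≤ Real.Gamma w.re := by
  rw [Complex.Gamma_eq_integral hw, Real.Gamma_eq_integral hw, Complex.GammaIntegral]
  refine norm_integral_le_of_norm_le (Real.GammaIntegral_convergent hw) ?_
  refine (ae_restrict_iff' measurableSet_Ioi).2 (Eventually.of_forall fun t ht => ?_)
  rw [norm_mul, norm_cpow_eq_rpow_re_of_pos ht, norm_real, Real.norm_eq_abs, abs_of_pos (Real.exp_pos _)]
  simp

lemma norm_sin_le (z : ℂ) : ‖Complex.sin z‖ ≤ Real.exp |z.im| := by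
  rw [Complex.sin]
  rw [norm_div, norm_mul, norm_I, mul_one]
  have h1 : ‖cexp (-z * I)‖ ≤ Real.exp |z.im| := by
    rw [Complex.norm_exp]; apply Real.exp_le_exp.2; simp; exact le_abs_self _
  have h2 : ‖cexp (z * I)‖ ≤ Real.exp |z.im| := by
    rw [Complex.norm_exp]; apply Real.exp_le_exp.2; simp; exact neg_le_abs _
  have := norm_sub_le (cexp (-z * I)) (cexp (z * I))
  rw [Complex.norm_ofNat]
  linarith

lemma inv_Gamma_bound (x₁ : ℝ) (k : ℕ) : ∃ C : ℝ, 0 ≤ C ∧ ∀ z : ℂ, x₁ ≤ z.re → z.re ≤ k → 1 ≤ |z.im| →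
    ‖(Complex.Gamma z)⁻¹‖ ≤ C * Real.exp (π * |z.im|) := by
  induction k generalizing x₁ with
  | zero =>
    have hc : ContinuousOn Real.Gamma (Icc 1 (1 - x₁)) := by
      intro x hx
      refine (Real.differentiableAt_Gamma (fun m h => ?_)).continuousAt.continuousWithinAt
      have := hx.1; rw [h] at this; linarith [(Nat.cast_nonneg m : (0:ℝ) ≤ m)]
    obtain ⟨C, hC⟩ := isCompact_Icc.exists_bound_of_continuousOn hc
    refine ⟨|C|, abs_nonneg _, fun z h1 h2 h3 => ?_⟩
    have h2' : z.re ≤ 0 := by simpa using h2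
    have hr := Complex.Gamma_mul_Gamma_one_sub z
    have hG1 : Complex.Gamma (1 - z) ≠ 0 := Complex.Gamma_ne_zero_of_re_pos (by simp; linarith)
    have hp : (π : ℂ) ≠ 0 := by exact_mod_cast Real.pi_ne_zero
    have e : (Complex.Gamma z)⁻¹ = Complex.Gamma (1 - z) * Complex.sin (π * z) / π := by
      have := congrArg Inv.inv hr
      rw [inv_div, mul_inv] at this
      rw [mul_div_assoc, ← this]; field_simp
    rw [e, norm_div, norm_mul]
    have b1 : ‖Complex.Gamma (1 - z)‖ ≤ |C| := by
      refine (norm_Gamma_le (by simp; linarith)).trans (((le_abs_self _).trans (hC _ ?_)).trans (le_abs_self _))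
      simp; constructor <;> linarith
    have b2 := norm_sin_le (π * z)
    have e2 : (π * z).im = π * z.im := by simp
    rw [e2, abs_mul, abs_of_pos Real.pi_pos] at b2
    have e3 : ‖(π : ℂ)‖ = π := by rw [norm_real, Real.norm_eq_abs, abs_of_pos Real.pi_pos]
    rw [e3]
    refine (div_le_self (by positivity) (by linarith [Real.pi_gt_three])).trans ?_
    gcongr
  | succ k ih =>
    obtain ⟨C, hC0, hC⟩ := ih (x₁ - 1)
    refine ⟨C, hC0, fun z h1 h2 h3 => ?_⟩
    have hz : z - 1 ≠ 0 := by
      intro h; have := congrArg im h; simp at this; rw [this] at h3; simp at h3; linarith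
    have h := hC (z - 1) (by simp; linarith) (by push_cast at h2; simp; linarith) (by simpa using h3)
    have e := Complex.Gamma_add_one _ hz
    rw [sub_add_cancel] at e
    rw [e, mul_inv, norm_mul]
    have h4 : ‖(z - 1)⁻¹‖ ≤ 1 := by
      rw [norm_inv]
      apply inv_le_one_of_one_le₀
      have := abs_im_le_norm (z - 1)
      simp at this; linarith
    have e5 : (z - 1).im = z.im := by simp
    rw [e5] at h
    have := norm_nonneg (Complex.Gamma (z - 1))⁻¹
    nlinarith

lemma inv_Gammaℝ_bound (x₁ x₂ : ℝ) : ∃ C : ℝ, 0 ≤ C ∧ ∀ z : ℂ, x₁ ≤ z.re → z.re ≤ x₂ → 2 ≤ |z.im| →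
    ‖(Gammaℝ z)⁻¹‖ ≤ C * Real.exp (π * |z.im|) := by
  obtain ⟨k, hk⟩ := exists_nat_ge (x₂ / 2)
  obtain ⟨C, hC0, hC⟩ := inv_Gamma_bound (x₁ / 2) k
  refine ⟨π ^ (x₂ / 2) * C, by positivity, fun z h1 h2 h3 => ?_⟩
  rw [Gammaℝ_def, mul_inv, norm_mul, ← cpow_neg, norm_cpow_eq_rpow_re_of_pos Real.pi_pos]
  have hre : (z / 2).re = z.re / 2 := by simp
  have him : (z / 2).im = z.im / 2 := by simp
  have hab : |(z / 2).im| = |z.im| / 2 := by rw [him, abs_div]; simp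
  have h := hC (z / 2) (by rw [hre]; linarith) (by rw [hre]; linarith) (by rw [hab]; linarith)
  rw [hab] at h
  have e1 : π ^ ((-(-z / 2)).re) ≤ π ^ (x₂ / 2) := by
    apply Real.rpow_le_rpow_of_exponent_le (by linarith [Real.pi_gt_three])
    have : (-(-z / 2)).re = z.re / 2 := by simp [neg_div]
    rw [this]; linarith
  have e2 : Real.exp (π * (|z.im| / 2)) ≤ Real.exp (π * |z.im|) := by
    apply Real.exp_le_exp.2
    have := Real.pi_pos
    nlinarith
  calc _ ≤ π ^ (x₂ / 2) * (C * Real.exp (π * (|z.im| / 2))) := by gcongr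
    _ ≤ π ^ (x₂ / 2) * (C * Real.exp (π * |z.im|)) := by gcongr
    _ = _ := by ring

section
variable {l a : ℝ} (hl0 : 0 < l) (hl1 : l ≤ 1) (ha0 : 0 < a) (ha1 : a ≤ 1)

/-- entire version -/
noncomputable def EN (s : ℂ) : ℂ :=
  (1 / 2) * ((s * (s - 1) * (PE l a hl0 hl1 ha0 ha1).Λ₀ (s / 2) - 2 * (s - 1) * cE l a
     + 2 * cexp (-(2 * π * I * l * a)) * s * cE (-a) l) * (Gammaℝ s)⁻¹
     + s * (s - 1) * (PO l a).Λ ((s + 1) / 2) * (Gammaℝ (s + 1))⁻¹)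

lemma EN_eq {F : ℂ → ℂ} (hF : IsLerch l a F) {s : ℂ} (h0 : s ≠ 0) (h1 : s ≠ 1) :
    EN hl0 hl1 ha0 ha1 s = s * (s - 1) * F s := by
  rw [F_eq_HF hl0 hl1 ha0 ha1 hF h0 h1, HF, EN]
  have h2 : s - 1 ≠ 0 := sub_ne_zero.2 h1
  have h3 : (1 / 2 - s / 2 : ℂ) ≠ 0 := by
    intro h; apply h2; linear_combination (-2) * h
  have e : s * (s - 1) * (PE l a hl0 hl1 ha0 ha1).Λ (s / 2) = (s * (s - 1) * (PE l a hl0 hl1 ha0 ha1).Λ₀ (s / 2) - 2 * (s - 1) * cE l a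
     + 2 * cexp (-(2 * π * I * l * a)) * s * cE (-a) l) := by
    rw [WeakFEPair.Λ]
    simp only [PE_k, PE_f₀, PE_g₀, PE_ε, smul_eq_mul]
    push_cast
    have h4 : 1 - s ≠ 0 := fun h => h2 (by linear_combination -h)
    field_simp
    ring
  rw [← e]
  ring

lemma EN_diff : Differentiable ℂ (EN hl0 hl1 ha0 ha1) := by
  intro s
  have d1 : DifferentiableAt ℂ (fun s => (PE l a hl0 hl1 ha0 ha1).Λ₀ (s / 2)) s :=
    DifferentiableAt.comp s ((PE l a hl0 hl1 ha0 ha1).differentiable_Λ₀ _) (by fun_prop)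
  have d2 : DifferentiableAt ℂ (fun s => (PO l a).Λ ((s + 1) / 2)) s :=
    DifferentiableAt.comp s ((PO_strong l a).differentiable_Λ.differentiableAt) (by fun_prop)
  have d3 := differentiable_Gammaℝ_inv s
  have d4 : DifferentiableAt ℂ (fun s : ℂ => (Gammaℝ (s + 1))⁻¹) s :=
    DifferentiableAt.comp (g := fun s : ℂ => (Gammaℝ s)⁻¹) (f := fun s : ℂ => s + 1) s
      (differentiable_Gammaℝ_inv (s + 1)) (by fun_prop)
  unfold EN
  fun_prop

/-- crude bound -/
lemma EN_crude (x₁ x₂ : ℝ) : ∃ C : ℝ, 0 ≤ C ∧ ∀ s : ℂ, x₁ ≤ s.re → s.re ≤ x₂ → 2 ≤ |s.im| →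
    ‖EN hl0 hl1 ha0 ha1 s‖ ≤ C * (1 + ‖s‖) ^ 2 * Real.exp (π * |s.im|) := by
  set P := PE l a hl0 hl1 ha0 ha1
  obtain ⟨C1, c1, hC1⟩ := mellin_bound (f := P.f_modif) (fun s => (P.isStrongFEPair_toStrongFEPair.hasMellin s).1) (x₁ / 2) (x₂ / 2)
  obtain ⟨C2, c2, hC2⟩ := mellin_bound (f := KO l a) (fun s => ((PO_strong l a).hasMellin s).1) ((x₁ + 1) / 2) ((x₂ + 1) / 2)
  obtain ⟨C3, c3, hC3⟩ := inv_Gammaℝ_bound x₁ x₂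
  obtain ⟨C4, c4, hC4⟩ := inv_Gammaℝ_bound (x₁ + 1) (x₂ + 1)
  refine ⟨(1 / 2) * ((C1 + 2 * ‖cE l a‖ + 2 * ‖cE (-a) l‖) * C3 + C2 * C4), by positivity, fun s h1 h2 h3 => ?_⟩
  have b1 : ‖P.Λ₀ (s / 2)‖ ≤ C1 := hC1 _ (by simp; linarith) (by simp; linarith)
  have b2 : ‖(PO l a).Λ ((s + 1) / 2)‖ ≤ C2 := by
    rw [(PO_strong l a).Λ_eq]; exact hC2 _ (by simp; linarith) (by simp; linarith)
  have b3 := hC3 s h1 h2 h3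
  have b4 := hC4 (s + 1) (by simp; linarith) (by simp; linarith) (by simpa using h3)
  have e4 : (s + 1).im = s.im := by simp
  rw [e4] at b4
  have n1 : ‖s‖ ≤ 1 + ‖s‖ := by linarith
  have n2 : ‖s - 1‖ ≤ 1 + ‖s‖ := by
    have := norm_sub_le s 1; simp at this; linarith
  have n3 : 1 + ‖s‖ ≤ (1 + ‖s‖) ^ 2 := by nlinarith [norm_nonneg s]
  have n4 : ‖s * (s - 1)‖ ≤ (1 + ‖s‖) ^ 2 := by
    rw [norm_mul, sq]; gcongr
  have m1 : ‖s * (s - 1) * P.Λ₀ (s / 2) - 2 * (s - 1) * cE l a + 2 * cexp (-(2 * π * I * l * a)) * s * cE (-a) l‖ ≤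
     (1 + ‖s‖) ^ 2 * (C1 + 2 * ‖cE l a‖ + 2 * ‖cE (-a) l‖) := by
    refine (norm_add_le _ _).trans ?_
    have k1 := norm_sub_le (s * (s - 1) * P.Λ₀ (s / 2)) (2 * (s - 1) * cE l a)
    have k2 : ‖s * (s - 1) * P.Λ₀ (s / 2)‖ ≤ (1 + ‖s‖) ^ 2 * C1 := by rw [norm_mul]; gcongr
    have k3 : ‖2 * (s - 1) * cE l a‖ ≤ 2 * (1 + ‖s‖) ^ 2 * ‖cE l a‖ := by
      rw [norm_mul, norm_mul]; simp only [Complex.norm_ofNat]; gcongr; linarith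
    have k4 : ‖2 * cexp (-(2 * π * I * l * a)) * s * cE (-a) l‖ ≤ 2 * (1 + ‖s‖) ^ 2 * ‖cE (-a) l‖ := by
      rw [norm_mul, norm_mul, norm_mul, norm_eps]; simp only [Complex.norm_ofNat, mul_one]; gcongr; linarith
    linarith
  have m2 : ‖s * (s - 1) * (PO l a).Λ ((s + 1) / 2)‖ ≤ (1 + ‖s‖) ^ 2 * C2 := by rw [norm_mul]; gcongr
  rw [EN, norm_mul]
  have m3 : ‖(1 / 2 : ℂ)‖ = 1 / 2 := by simp
  rw [m3]
  calc _ ≤ (1 / 2) * ((1 + ‖s‖) ^ 2 * (C1 + 2 * ‖cE l a‖ + 2 * ‖cE (-a) l‖) * (C3 * Real.exp (π * |s.im|))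
       + (1 + ‖s‖) ^ 2 * C2 * (C4 * Real.exp (π * |s.im|))) := by
        gcongr
        refine (norm_add_le _ _).trans ?_
        rw [norm_mul, norm_mul _ ((Gammaℝ (s + 1))⁻¹)]
        gcongr
    _ = _ := by ring

end
end LZ

open scoped Classical
namespace LZ
open Complex Filter Topology Asymptotics Set MeasureTheory
open scoped Real

section
variable {l a : ℝ} (hl0 : 0 < l) (hl1 : l ≤ 1) (ha0 : 0 < a) (ha1 : a ≤ 1) {F : ℂ → ℂ} (hF : IsLerch l a F)

include hl0 hl1 ha0 ha1 hF in
lemma F_left_growth : ∃ C : ℝ, 0 ≤ C ∧ ∀ s : ℂ, s.re = -25 → 1 ≤ |s.im| → ‖F s‖ ≤ C * |s.im| ^ 26 := by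
  obtain ⟨C1, c1, h1⟩ := Gamma_growth 25
  obtain ⟨C2, c2, h2⟩ := LN_bound (-a) hl1 26 (by norm_num)
  refine ⟨(2 * π) ^ (-26:ℝ) * (2 * l ^ (-26 : ℝ) + C2) * C1, by positivity, fun s hs ht => ?_⟩
  rw [F_left_raw hl0 hl1 ha0 ha1 hF (by linarith)]
  have hw : (1 - s).re = 26 := by simp [hs]; norm_num
  have hi : (1 - s).im = - s.im := by simp
  have g := h1 (-s.im) (by simpa using ht)
  have es : 1 - s = ((25:ℕ) : ℂ) + 1 + ((-s.im : ℝ) : ℂ) * I := by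
    apply Complex.ext <;> simp [hs]; norm_num
  have b2 := h2 (1 - s) (by linarith) hw.le
  have b3 := norm_LS_upper (p := -a) hl0 hl1 (s := 1 - s) (by linarith)
  rw [hw] at b3
  rw [← es, abs_neg] at g
  have hs2 : ‖cexp (π * (1 - s) / 2 * I) * LS (-a) l (1 - s) + cexp (-(π * (1 - s) / 2) * I) * LN (-a) l (1 - s)‖
      ≤ Real.exp (π * |s.im| / 2) * (2 * l ^ (-26 : ℝ) + C2) := by
    refine (norm_add_le _ _).trans ?_
    rw [norm_mul, norm_mul, norm_eI, norm_eI', hi, mul_add]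
    have q1 : -(π * -s.im / 2) ≤ π * |s.im| / 2 := by
      have := le_abs_self s.im; have := Real.pi_pos; nlinarith
    have q2 : (π * -s.im / 2) ≤ π * |s.im| / 2 := by
      have := neg_abs_le s.im; have := Real.pi_pos; nlinarith
    gcongr
  rw [norm_mul, norm_mul, norm_mul, norm_eps, norm_Gammaℂ, hw]
  calc _ ≤ ‖(1/2 : ℂ)‖ * 1 * (2 * (2 * π) ^ (-26:ℝ) * ‖Complex.Gamma (1 - s)‖) * (Real.exp (π * |s.im| / 2) * (2 * l ^ (-26 : ℝ) + C2)) := by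
        gcongr
    _ = (2 * π) ^ (-26:ℝ) * (2 * l ^ (-26 : ℝ) + C2) * (‖Complex.Gamma (1 - s)‖ * Real.exp (π * |s.im| / 2)) := by
        simp; ring
    _ ≤ (2 * π) ^ (-26:ℝ) * (2 * l ^ (-26 : ℝ) + C2) * (C1 * |s.im| ^ 26) := by gcongr
    _ = _ := by ring

include hl0 hl1 ha0 ha1 hF in
lemma F_growth : ∃ C : ℝ, 1 ≤ C ∧ ∀ s : ℂ, -25 ≤ s.re → s.re ≤ 31 → 1 ≤ s.im → ‖F s‖ ≤ C * s.im ^ 28 := by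
  set E := EN hl0 hl1 ha0 ha1
  set f : ℂ → ℂ := fun s => E s / (s + 26) ^ 28 with hf
  have hEd : Differentiable ℂ E := EN_diff hl0 hl1 ha0 ha1
  have hge : ∀ s : ℂ, -25 ≤ s.re → 1 ≤ ‖s + 26‖ := by
    intro s hs
    have := re_le_norm (s + 26)
    simp at this; linarith
  have hne : ∀ s : ℂ, -25 ≤ s.re → s + 26 ≠ 0 := by
    intro s hs h
    have := hge s hs
    rw [h] at this; simp at this; linarith
  have hfc : ∀ s : ℂ, -25 ≤ s.re → DifferentiableAt ℂ f s := by
    intro s hs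
    have := pow_ne_zero 28 (hne s hs)
    have := hEd s
    simp only [hf]
    fun_prop (disch := assumption)
  have nrm : ∀ s : ℂ, -25 ≤ s.re → ‖s * (s - 1)‖ ≤ 27 * 28 * ‖s + 26‖ ^ 2 := by
    intro s hs
    have h1 := hge s hs
    have h2 : ‖s‖ ≤ 27 * ‖s + 26‖ := by
      have := norm_sub_le (s + 26) 26
      simp at this; linarith
    have h3 : ‖s - 1‖ ≤ 28 * ‖s + 26‖ := by
      have := norm_sub_le (s + 26) 27
      have e : s + 26 - 27 = s - 1 := by ring
      rw [e] at this
      simp at this; linarith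
    rw [norm_mul]
    calc _ ≤ (27 * ‖s + 26‖) * (28 * ‖s + 26‖) := by gcongr
      _ = _ := by ring
  obtain ⟨C1, c1, hC1⟩ := F_left_growth hl0 hl1 ha0 ha1 hF
  obtain ⟨C2, c2, hC2⟩ := EN_crude hl0 hl1 ha0 ha1 (-25) 31
  -- compact piece
  obtain ⟨C3, hC3⟩ : ∃ C3, ∀ t ∈ Icc (-1:ℝ) 1, ‖f (-25 + t * I)‖ ≤ C3 := by
    apply isCompact_Icc.exists_bound_of_continuousOn
    intro t ht
    apply ContinuousAt.continuousWithinAt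
    have : ContinuousAt f (-25 + t * I) := (hfc _ (by simp)).continuousAt
    exact ContinuousAt.comp (g := f) (f := fun t : ℝ => (-25 + t * I : ℂ)) this (by fun_prop)
  set C := |C3| + 27 * 28 * C1 + 27 * 28 * (2 * a ^ (-31:ℝ)) with hC
  have c0 : 0 ≤ C := by positivity
  have left : ∀ z : ℂ, re z = -25 → ‖f z‖ ≤ C := by
    intro z hz
    rcases le_total 1 |z.im| with h | h
    · have h0 : z ≠ 0 := by rintro rfl; simp at hz
      have h1 : z ≠ 1 := by rintro rfl; norm_num at hz
      simp only [hf]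
      rw [show E z = z * (z - 1) * F z from EN_eq hl0 hl1 ha0 ha1 hF h0 h1, norm_div, norm_mul, norm_pow]
      have b1 := nrm z hz.ge
      have b2 := hC1 z hz h
      have b3 := hge z hz.ge
      have b4 : |z.im| ≤ ‖z + 26‖ := by simpa using abs_im_le_norm (z + 26)
      rw [div_le_iff₀ (by positivity)]
      calc _ ≤ (27 * 28 * ‖z + 26‖ ^ 2) * (C1 * ‖z + 26‖ ^ 26) := by
            gcongr; exact b2.trans (by gcongr)
        _ = (27 * 28 * C1) * ‖z + 26‖ ^ 28 := by ring
        _ ≤ _ := by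
            gcongr
            have : 0 ≤ 27 * 28 * (2 * a ^ (-31:ℝ)) := by positivity
            linarith [abs_nonneg C3]
    · have := hC3 z.im (abs_le.1 h)
      have e : (-25 + z.im * I : ℂ) = z := by apply Complex.ext <;> simp [hz]
      rw [e] at this
      have : 0 ≤ 27 * 28 * (2 * a ^ (-31:ℝ)) := by positivity
      linarith [le_abs_self C3]
  have right : ∀ z : ℂ, re z = 31 → ‖f z‖ ≤ C := by
    intro z hz
    have h0 : z ≠ 0 := by rintro rfl; simp at hz
    have h1 : z ≠ 1 := by rintro rfl; norm_num at hz
    simp only [hf]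
    rw [show E z = z * (z - 1) * F z from EN_eq hl0 hl1 ha0 ha1 hF h0 h1, norm_div, norm_mul, norm_pow,
       F_eq_LS hF (by linarith)]
    have b1 := nrm z (by linarith)
    have b2 := norm_LS_upper (p := l) ha0 ha1 (s := z) (by linarith)
    rw [hz] at b2
    have b3 := hge z (by linarith)
    rw [div_le_iff₀ (by positivity)]
    calc _ ≤ (27 * 28 * ‖z + 26‖ ^ 2) * (2 * a ^ (-31:ℝ)) := by gcongr
      _ = (27 * 28 * (2 * a ^ (-31:ℝ))) * ‖z + 26‖ ^ 2 := by ring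
      _ ≤ (27 * 28 * (2 * a ^ (-31:ℝ))) * ‖z + 26‖ ^ 28 := by
            exact mul_le_mul_of_nonneg_left (pow_le_pow_right₀ b3 (by norm_num)) (by positivity)
      _ ≤ _ := by
          gcongr
          have : 0 ≤ 27 * 28 * C1 := by positivity
          linarith [abs_nonneg C3]
  have main : ∀ z : ℂ, -25 ≤ z.re → z.re ≤ 31 → ‖f z‖ ≤ C := by
    intro z h1 h2
    refine PhragmenLindelof.vertical_strip (a := -25) (b := 31) ?_ ⟨1 / 40, ?_, (π + 2) * 40, ?_⟩ left right h1 h2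
    · apply DifferentiableOn.diffContOnCl
      intro s hs
      refine (hfc s ?_).differentiableWithinAt
      have : closure (re ⁻¹' Ioo (-25) 31) ⊆ {s : ℂ | -25 ≤ s.re} := by
        apply closure_minimal _ (isClosed_le continuous_const continuous_re)
        intro s hs; exact hs.1.le
      exact this hs
    · rw [lt_div_iff₀ (by norm_num)]; linarith [Real.pi_gt_three]
    · apply IsBigO.of_bound (C2 * Real.exp 64)
      have ev : ∀ᶠ s : ℂ in comap (_root_.abs ∘ im) atTop, 2 ≤ |s.im| :=
        (eventually_ge_atTop (2:ℝ)).comap (_root_.abs ∘ im)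
      rw [eventually_inf_principal]
      filter_upwards [ev] with s hs hst
      have k1 := hC2 s hst.1.le hst.2.le hs
      have k2 := hge s hst.1.le
      simp only [hf]
      rw [norm_div, norm_pow]
      refine (div_le_self (norm_nonneg _) (one_le_pow₀ k2)).trans (k1.trans ?_)
      have n1 : ‖s‖ ≤ 31 + |s.im| := by
        have := norm_le_abs_re_add_abs_im s
        have h3 : |s.re| ≤ 31 := abs_le.2 ⟨by linarith [hst.1], hst.2.le⟩
        linarith
      have n2 : (1 + ‖s‖) ^ 2 ≤ Real.exp (64 + 2 * |s.im|) := by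
        have : 1 + ‖s‖ ≤ Real.exp (32 + |s.im|) := by
          have := Real.add_one_le_exp (32 + |s.im|); linarith
        calc _ ≤ (Real.exp (32 + |s.im|)) ^ 2 := by gcongr
          _ = _ := by rw [← Real.exp_nat_mul]; congr 1; push_cast; ring
      rw [Real.norm_eq_abs, abs_of_pos (Real.exp_pos _)]
      have n3 : (π + 2) * |s.im| ≤ (π + 2) * 40 * Real.exp (1 / 40 * |s.im|) := by
        have := Real.add_one_le_exp (1 / 40 * |s.im|)
        rw [mul_assoc]
        gcongr
        linarith
      calc _ ≤ C2 * Real.exp (64 + 2 * |s.im|) * Real.exp (π * |s.im|) := by gcongr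
        _ = C2 * Real.exp 64 * Real.exp ((π + 2) * |s.im|) := by
            rw [mul_assoc, mul_assoc, ← Real.exp_add, ← Real.exp_add]; congr 2; ring
        _ ≤ _ := by gcongr
  have hpos : 0 ≤ C * 58 ^ 28 := by positivity
  refine ⟨C * 58 ^ 28 + 1, by linarith, fun s h1 h2 h3 => ?_⟩
  have h0 : s ≠ 0 := by rintro rfl; simp at h3; linarith
  have h1' : s ≠ 1 := by rintro rfl; simp at h3; linarith
  have k := main s h1 h2
  have b3 := hge s h1
  simp only [hf] at k
  rw [show E s = s * (s - 1) * F s from EN_eq hl0 hl1 ha0 ha1 hF h0 h1', norm_div, norm_mul, norm_mul, norm_pow,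
    div_le_iff₀ (by positivity)] at k
  have m1 : 1 ≤ ‖s‖ := h3.trans (im_le_norm s)
  have m2 : 1 ≤ ‖s - 1‖ := by
    have := im_le_norm (s - 1)
    simp at this; linarith
  have m3 : ‖F s‖ ≤ ‖s‖ * ‖s - 1‖ * ‖F s‖ := by
    have : 1 ≤ ‖s‖ * ‖s - 1‖ := by nlinarith
    nlinarith [norm_nonneg (F s)]
  have m4 : ‖s + 26‖ ≤ 58 * s.im := by
    have := norm_le_abs_re_add_abs_im (s + 26)
    have h3 : |(s + 26).re| ≤ 57 := abs_le.2 ⟨by simp; linarith, by simp; linarith⟩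
    have h4 : |(s + 26).im| = s.im := by simp; linarith
    linarith
  calc _ ≤ C * ‖s + 26‖ ^ 28 := m3.trans k
    _ ≤ C * (58 * s.im) ^ 28 := by gcongr
    _ = C * 58 ^ 28 * s.im ^ 28 := by ring
    _ ≤ _ := by gcongr; linarith

end
end LZ

open scoped Classical
namespace LZ
open Complex Filter Topology Asymptotics Set MeasureTheory
open scoped Real

lemma exists_log {U : Set ℂ} (hU : IsOpen U) (hc : Convex ℝ U) {g : ℂ → ℂ} (hg : DifferentiableOn ℂ g U)
    (h0 : ∀ s ∈ U, g s ≠ 0) : ∃ h : ℂ → ℂ, DifferentiableOn ℂ h U ∧ ∀ s ∈ U, cexp (h s) = g s := by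
  rcases U.eq_empty_or_nonempty with rfl | ⟨x, hx⟩
  · exact ⟨0, by simp, by simp⟩
  have hd : DifferentiableOn ℂ (fun s => deriv g s / g s) U := (hg.deriv hU).div hg h0
  obtain ⟨k, hk⟩ := hc.exists_forall_hasDerivWithinAt hd
  have hk' : ∀ s ∈ U, HasDerivAt k (deriv g s / g s) s := fun s hs => (hk s hs).hasDerivAt (hU.mem_nhds hs)
  -- exp(-k) * g is constant
  set q : ℂ → ℂ := fun s => cexp (-k s) * g s with hq
  have dq : ∀ s ∈ U, HasDerivAt q 0 s := by
    intro s hs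
    have h1 := ((hk' s hs).neg.cexp).mul ((hg.differentiableAt (hU.mem_nhds hs)).hasDerivAt)
    have := h0 s hs
    refine (show HasDerivAt q _ s from h1).congr_deriv ?_
    rw [mul_neg, neg_mul, mul_assoc, div_mul_cancel₀ _ this]
    simp
  have cst : ∀ s ∈ U, q s = q x := by
    intro s hs
    refine hc.is_const_of_fderivWithin_eq_zero (𝕜 := ℂ) (f := q) (fun y hy => (dq y hy).differentiableAt.differentiableWithinAt) (fun y hy => ?_) hs hx
    rw [fderivWithin_of_isOpen hU hy]
    have := (dq y hy).hasFDerivAt.fderiv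
    rw [this]; ext; simp
  have hqx : q x ≠ 0 := mul_ne_zero (Complex.exp_ne_zero _) (h0 x hx)
  refine ⟨fun s => k s + Complex.log (q x), fun s hs => ((hk' s hs).differentiableAt.add_const _).differentiableWithinAt, fun s hs => ?_⟩
  rw [Complex.exp_add, Complex.exp_log hqx, ← cst s hs, hq]
  simp only
  rw [← mul_assoc, ← Complex.exp_add]; simp

lemma factor_one {U : Set ℂ} (hU : IsOpen U) {G : ℂ → ℂ} (hG : DifferentiableOn ℂ G U) {ρ : ℂ} (hρ : ρ ∈ U) {m : ℕ}
    (hm : analyticOrderAt G ρ = m) : ∃ g : ℂ → ℂ, DifferentiableOn ℂ g U ∧ (∀ s ∈ U, G s = (s - ρ) ^ m * g s) ∧ g ρ ≠ 0 := by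
  have ha : AnalyticAt ℂ G ρ := hG.analyticAt (hU.mem_nhds hρ)
  obtain ⟨g0, h1, h2, h3⟩ := (ha.analyticOrderAt_eq_natCast).1 hm
  set g : ℂ → ℂ := fun s => if s = ρ then g0 ρ else G s / (s - ρ) ^ m with hg
  have e : g =ᶠ[𝓝 ρ] g0 := by
    filter_upwards [h3] with s hs
    by_cases h : s = ρ
    · simp [hg, h]
    · have : s - ρ ≠ 0 := sub_ne_zero.2 h
      simp only [hg, if_neg h, hs, smul_eq_mul]
      field_simp
  refine ⟨g, fun s hs => ?_, fun s hs => ?_, by simpa [hg] using h2⟩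
  · by_cases h : s = ρ
    · rw [h]; exact (h1.differentiableAt.congr_of_eventuallyEq e).differentiableWithinAt
    · apply DifferentiableAt.differentiableWithinAt
      have e2 : g =ᶠ[𝓝 s] fun s => G s / (s - ρ) ^ m := by
        filter_upwards [isOpen_ne.mem_nhds h] with z hz
        simp only [hg, if_neg hz]
      refine DifferentiableAt.congr_of_eventuallyEq ?_ e2
      exact (hG.differentiableAt (hU.mem_nhds hs)).div (by fun_prop) (pow_ne_zero _ (sub_ne_zero.2 h))
  · by_cases h : s = ρ
    · have := h3.self_of_nhds
      rw [h, this, hg]; simp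
    · have : s - ρ ≠ 0 := sub_ne_zero.2 h
      simp only [hg, if_neg h]; field_simp

lemma factor {U : Set ℂ} (hU : IsOpen U) {G : ℂ → ℂ} (hG : DifferentiableOn ℂ G U) (ord : ℂ → ℕ) (Z : Finset ℂ) (hZ : ∀ ρ ∈ Z, ρ ∈ U)
    (hm : ∀ ρ ∈ Z, analyticOrderAt G ρ = ord ρ) :
    ∃ g : ℂ → ℂ, DifferentiableOn ℂ g U ∧ (∀ s ∈ U, G s = (∏ ρ ∈ Z, (s - ρ) ^ ord ρ) * g s) ∧ ∀ ρ ∈ Z, g ρ ≠ 0 := by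
  induction Z using Finset.induction_on with
  | empty => exact ⟨G, hG, by simp, by simp⟩
  | insert ρ Z hn ih =>
    obtain ⟨g1, d1, e1, n1⟩ := ih (fun r hr => hZ r (Finset.mem_insert_of_mem hr)) (fun r hr => hm r (Finset.mem_insert_of_mem hr))
    have hρ := hZ ρ (Finset.mem_insert_self _ _)
    have hpa : AnalyticAt ℂ (fun s => ∏ r ∈ Z, (s - r) ^ ord r) ρ := by
      have : Differentiable ℂ (fun s : ℂ => ∏ r ∈ Z, (s - r) ^ ord r) := by fun_prop
      exact this.analyticAt ρ
    have hp0 : (∏ r ∈ Z, (ρ - r) ^ ord r) ≠ 0 := by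
      rw [Finset.prod_ne_zero_iff]
      intro r hr
      exact pow_ne_zero _ (sub_ne_zero.2 (by rintro rfl; exact hn hr))
    have hga : AnalyticAt ℂ g1 ρ := d1.analyticAt (hU.mem_nhds hρ)
    have ho : analyticOrderAt g1 ρ = ord ρ := by
      rw [← hm ρ (Finset.mem_insert_self _ _)]
      have e : G =ᶠ[𝓝 ρ] (fun s => ∏ r ∈ Z, (s - r) ^ ord r) * g1 := by
        filter_upwards [hU.mem_nhds hρ] with s hs using e1 s hs
      rw [analyticOrderAt_congr e, analyticOrderAt_mul hpa hga, (hpa.analyticOrderAt_eq_zero).2 hp0, zero_add]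
    obtain ⟨g, d, e, n⟩ := factor_one hU d1 hρ ho
    refine ⟨g, d, fun s hs => ?_, fun r hr => ?_⟩
    · rw [Finset.prod_insert hn, e1 s hs, e s hs]; ring
    · rcases Finset.mem_insert.1 hr with rfl | h
      · exact n
      · have := n1 r h
        rw [e r (hZ r hr)] at this
        exact right_ne_zero_of_mul this

end LZ

open scoped Classical
namespace LZ
open Complex Filter Topology Asymptotics Set MeasureTheory
open scoped Real

lemma re_int {f : ℝ → ℂ} {x y : ℝ} (hf : ContinuousOn f (uIcc x y)) : ∫ t in x..y, (f t).re = (∫ t in x..y, f t).re := by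
  have := Complex.reCLM.intervalIntegral_comp_comm (hf.intervalIntegrable (μ := volume))
  simpa using this

/-- bottom plus right -/
noncomputable def BR (x0 x1 t0 Y : ℝ) (L : ℂ → ℂ) : ℝ :=
  (∫ σ in x0..x1, (((σ - x0 : ℝ) : ℂ) + (t0 - Y : ℝ) * I) * L (σ + t0 * I)).re +
  (∫ t in t0..Y, I * (((x1 - x0 : ℝ) : ℂ) + (t - Y : ℝ) * I) * L (x1 + t * I)).re

/-- top plus left -/
noncomputable def TL (x0 x1 t0 Y : ℝ) (u : ℂ → ℝ) : ℝ :=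
  (∫ σ in x0..x1, (σ - x0) * u (σ + Y * I)) + ∫ t in t0..Y, (Y - t) * u (x0 + t * I)

lemma hol_ident {x0 x1 t0 Y : ℝ} (hx : x0 ≤ x1) (ht : t0 ≤ Y) {L : ℂ → ℂ}
    (hL : DifferentiableOn ℂ L (Icc x0 x1 ×ℂ Icc t0 Y)) :
    TL x0 x1 t0 Y (fun s => (L s).re) = BR x0 x1 t0 Y L := by
  set z : ℂ := x0 + t0 * I with hz
  set w : ℂ := x1 + Y * I with hw
  have zr : z.re = x0 := by simp [hz]
  have zi : z.im = t0 := by simp [hz]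
  have wr : w.re = x1 := by simp [hw]
  have wi : w.im = Y := by simp [hw]
  have hd : DifferentiableOn ℂ (fun s => (s - (x0 + Y * I)) * L s) (uIcc z.re w.re ×ℂ uIcc z.im w.im) := by
    rw [zr, zi, wr, wi, uIcc_of_le hx, uIcc_of_le ht]
    exact DifferentiableOn.mul (by fun_prop) hL
  have key := Complex.integral_boundary_rect_eq_zero_of_differentiableOn _ z w hd
  rw [zr, zi, wr, wi] at key
  have cH : ∀ y ∈ Icc t0 Y, ContinuousOn (fun σ : ℝ => L (σ + y * I)) (uIcc x0 x1) := by
    intro y hy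
    refine hL.continuousOn.comp (by fun_prop) fun σ hσ => ?_
    rw [uIcc_of_le hx] at hσ
    simpa [mem_reProdIm] using ⟨hσ, hy⟩
  have cV : ∀ x ∈ Icc x0 x1, ContinuousOn (fun t : ℝ => L (x + t * I)) (uIcc t0 Y) := by
    intro x hx'
    refine hL.continuousOn.comp (by fun_prop) fun σ hσ => ?_
    rw [uIcc_of_le ht] at hσ
    simpa [mem_reProdIm] using ⟨hx', hσ⟩
  have e1 : ∫ σ in x0..x1, (σ - x0) * (L (σ + Y * I)).re = (∫ σ in x0..x1, ((σ : ℂ) + Y * I - (x0 + Y * I)) * L (σ + Y * I)).re := by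
    rw [← re_int]
    · congr 1; ext σ
      rw [show ((σ : ℂ) + Y * I - (x0 + Y * I)) = ((σ - x0 : ℝ) : ℂ) by push_cast; ring, re_ofReal_mul]
    · exact ContinuousOn.mul (by fun_prop) (cH Y (right_mem_Icc.2 ht))
  have e2 : ∫ t in t0..Y, (Y - t) * (L (x0 + t * I)).re = (I • ∫ t in t0..Y, ((x0 : ℂ) + t * I - (x0 + Y * I)) * L (x0 + t * I)).re := by
    rw [← intervalIntegral.integral_smul, ← re_int]
    · congr 1; ext t
      rw [smul_eq_mul, ← mul_assoc, show I * ((x0 : ℂ) + t * I - (x0 + Y * I)) = ((Y - t : ℝ) : ℂ) by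
        push_cast; linear_combination (t - Y : ℂ) * I_mul_I, re_ofReal_mul]
    · have := cV x0 (left_mem_Icc.2 hx)
      refine ContinuousOn.const_smul (ContinuousOn.mul (f := fun t : ℝ => ((x0 : ℂ) + t * I - (x0 + Y * I))) (by fun_prop) this) I
  rw [TL, BR, e1, e2]
  have e3 : ∫ σ in x0..x1, (((σ - x0 : ℝ) : ℂ) + (t0 - Y : ℝ) * I) * L (σ + t0 * I) = ∫ σ in x0..x1, ((σ : ℂ) + t0 * I - (x0 + Y * I)) * L (σ + t0 * I) := by
    congr 1; ext σ; push_cast; ring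
  have e4 : ∫ t in t0..Y, I * (((x1 - x0 : ℝ) : ℂ) + (t - Y : ℝ) * I) * L (x1 + t * I) = I • ∫ t in t0..Y, ((x1 : ℂ) + t * I - (x0 + Y * I)) * L (x1 + t * I) := by
    rw [← intervalIntegral.integral_smul]
    congr 1; ext σ; rw [smul_eq_mul]; push_cast; ring
  rw [e3, e4]
  have := congrArg re key
  simp only [add_re, sub_re, zero_re] at this ⊢
  linarith

lemma log_sub_of_im_pos {s ρ : ℂ} (h : 0 < (s - ρ).im) : log (s - ρ) = log (ρ - s) + π * I := by
  rw [← neg_sub s ρ, log, log, norm_neg, arg_neg_eq_arg_sub_pi_of_im_pos h]; push_cast; ring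

lemma log_sub_of_im_neg {s ρ : ℂ} (h : (s - ρ).im < 0) : log (s - ρ) = log (ρ - s) - π * I := by
  rw [← neg_sub s ρ, log, log, norm_neg, arg_neg_eq_arg_add_pi_of_im_neg h]; push_cast; ring

lemma zero_ident {x0 x1 t0 Y : ℝ} {ρ : ℂ} (h1 : x0 < ρ.re) (h2 : ρ.re < x1) (h3 : t0 < ρ.im) (h4 : ρ.im < Y) :
    TL x0 x1 t0 Y (fun s => (log (s - ρ)).re) = BR x0 x1 t0 Y (fun s => log (s - ρ)) + 2 * π * ((ρ.re - x0) * (Y - ρ.im)) := by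
  set S : ℂ := x0 + Y * I with hS
  set Q : ℂ → ℂ := fun s => ((s - S) ^ 2 - (ρ - S) ^ 2) / 2 with hQ
  set R : ℂ → ℂ := fun s => ((s - S) ^ 2 / 2 + (ρ - S) * s) / 2 with hR
  have dQ : ∀ s, HasDerivAt Q (s - S) s := by
    intro s
    have := (((((hasDerivAt_id s).sub_const S).pow 2).sub_const ((ρ - S) ^ 2)).div_const 2)
    refine this.congr_deriv ?_
    simp
  have dR : ∀ s, HasDerivAt R (((s - S) + (ρ - S)) / 2) s := by
    intro s
    have := (((((hasDerivAt_id s).sub_const S).pow 2).div_const 2).add ((hasDerivAt_id s).const_mul (ρ - S))).div_const 2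
    refine this.congr_deriv ?_
    simp
  have dP1 : ∀ s, s - ρ ∈ slitPlane → HasDerivAt (fun s => Q s * log (s - ρ) - R s) ((s - S) * log (s - ρ)) s := by
    intro s hs
    have := ((dQ s).mul (((hasDerivAt_id s).sub_const ρ).clog hs)).sub (dR s)
    refine this.congr_deriv ?_
    have hne : s - ρ ≠ 0 := slitPlane_ne_zero hs
    simp only [hQ, id]
    field_simp
    ring
  have dP2 : ∀ s, ρ - s ∈ slitPlane → HasDerivAt (fun s => Q s * log (ρ - s) - R s) ((s - S) * log (ρ - s)) s := by
    intro s hs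
    have := ((dQ s).mul (((hasDerivAt_id s).const_sub ρ).clog hs)).sub (dR s)
    refine this.congr_deriv ?_
    have hne : ρ - s ≠ 0 := slitPlane_ne_zero hs
    have hne' : s - ρ ≠ 0 := fun h => hne (by linear_combination -h)
    simp only [hQ, id]
    field_simp
    ring
  have hHd : ∀ (y σ : ℝ), HasDerivAt (fun σ : ℝ => (σ : ℂ) + y * I) 1 σ := by
    intro y σ
    simpa using (hasDerivAt_id σ).ofReal_comp.add_const (y * I : ℂ)
  have hVd : ∀ (x t : ℝ), HasDerivAt (fun t : ℝ => (x : ℂ) + t * I) I t := by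
    intro x t
    simpa using ((hasDerivAt_id t).ofReal_comp.mul_const I).const_add (x : ℂ)
  -- horizontal
  have hor : ∀ y : ℝ, y ≠ ρ.im → ContinuousOn (fun σ : ℝ => log (σ + y * I - ρ)) (uIcc x0 x1) ∧
      ∫ σ in x0..x1, ((σ : ℂ) + y * I - S) * log (σ + y * I - ρ) =
      (Q (x1 + y * I) * log (x1 + y * I - ρ) - R (x1 + y * I)) - (Q (x0 + y * I) * log (x0 + y * I - ρ) - R (x0 + y * I)) := by
    intro y hy
    have sl : ∀ σ : ℝ, (σ + y * I - ρ : ℂ) ∈ slitPlane := by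
      intro σ; right; simp; exact sub_ne_zero.2 hy
    have c : Continuous (fun σ : ℝ => log (σ + y * I - ρ)) := by
      apply Continuous.clog (by fun_prop) sl
    refine ⟨c.continuousOn, ?_⟩
    rw [intervalIntegral.integral_eq_sub_of_hasDerivAt (f := fun σ : ℝ => Q (σ + y * I) * log (σ + y * I - ρ) - R (σ + y * I))]
    · intro σ _
      have := HasDerivAt.comp (𝕜' := ℂ) σ (dP1 (σ + y * I) (sl σ)) (hHd y σ)
      refine this.congr_deriv ?_
      ring
    · apply Continuous.intervalIntegrable; fun_prop
  have ver : ContinuousOn (fun t : ℝ => log (x1 + t * I - ρ)) (uIcc t0 Y) ∧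
      ∫ t in t0..Y, I * ((x1 : ℂ) + t * I - S) * log (x1 + t * I - ρ) =
      (Q (x1 + Y * I) * log (x1 + Y * I - ρ) - R (x1 + Y * I)) - (Q (x1 + t0 * I) * log (x1 + t0 * I - ρ) - R (x1 + t0 * I)) := by
    have sl : ∀ t : ℝ, (x1 + t * I - ρ : ℂ) ∈ slitPlane := by
      intro σ; left; simp; exact h2
    have c : Continuous (fun t : ℝ => log (x1 + t * I - ρ)) := by
      apply Continuous.clog (by fun_prop) sl
    refine ⟨c.continuousOn, ?_⟩
    rw [intervalIntegral.integral_eq_sub_of_hasDerivAt (f := fun t : ℝ => Q (x1 + t * I) * log (x1 + t * I - ρ) - R (x1 + t * I))]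
    · intro t _
      have := HasDerivAt.comp (𝕜' := ℂ) t (dP1 (x1 + t * I) (sl t)) (hVd x1 t)
      refine this.congr_deriv ?_
      ring
    · apply Continuous.intervalIntegrable; fun_prop
  have ver2 : ContinuousOn (fun t : ℝ => log (ρ - (x0 + t * I))) (uIcc t0 Y) ∧
      ∫ t in t0..Y, I * ((x0 : ℂ) + t * I - S) * log (ρ - (x0 + t * I)) =
      (Q (x0 + Y * I) * log (ρ - (x0 + Y * I)) - R (x0 + Y * I)) - (Q (x0 + t0 * I) * log (ρ - (x0 + t0 * I)) - R (x0 + t0 * I)) := by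
    have sl : ∀ t : ℝ, (ρ - (x0 + t * I) : ℂ) ∈ slitPlane := by
      intro σ; left; simp; exact h1
    have c : Continuous (fun t : ℝ => log (ρ - (x0 + t * I))) := by
      apply Continuous.clog (by fun_prop) sl
    refine ⟨c.continuousOn, ?_⟩
    rw [intervalIntegral.integral_eq_sub_of_hasDerivAt (f := fun t : ℝ => Q (x0 + t * I) * log (ρ - (x0 + t * I)) - R (x0 + t * I))]
    · intro t _
      have := HasDerivAt.comp (𝕜' := ℂ) t (dP2 (x0 + t * I) (sl t)) (hVd x0 t)
      refine this.congr_deriv ?_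
      ring
    · apply Continuous.intervalIntegrable; fun_prop
  obtain ⟨cT, iT⟩ := hor Y h4.ne'
  obtain ⟨cB, iB⟩ := hor t0 h3.ne
  have e1 : ∫ σ in x0..x1, (σ - x0) * (log (σ + Y * I - ρ)).re = (∫ σ in x0..x1, ((σ : ℂ) + Y * I - S) * log (σ + Y * I - ρ)).re := by
    rw [← re_int]
    · congr 1; ext σ
      rw [show ((σ : ℂ) + Y * I - S) = ((σ - x0 : ℝ) : ℂ) by rw [hS]; push_cast; ring, re_ofReal_mul]
    · exact ContinuousOn.mul (by fun_prop) cT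
  have e2 : ∫ t in t0..Y, (Y - t) * (log (x0 + t * I - ρ)).re = (∫ t in t0..Y, I * ((x0 : ℂ) + t * I - S) * log (ρ - (x0 + t * I))).re := by
    rw [← re_int]
    · congr 1; ext t
      rw [show I * ((x0 : ℂ) + t * I - S) = ((Y - t : ℝ) : ℂ) by
        rw [hS]; push_cast; linear_combination (t - Y : ℂ) * I_mul_I, re_ofReal_mul, log_re, log_re, norm_sub_rev]
    · exact ContinuousOn.mul (by fun_prop) ver2.1
  have e3 : ∫ σ in x0..x1, (((σ - x0 : ℝ) : ℂ) + (t0 - Y : ℝ) * I) * log (σ + t0 * I - ρ) = ∫ σ in x0..x1, ((σ : ℂ) + t0 * I - S) * log (σ + t0 * I - ρ) := by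
    congr 1; ext σ; rw [hS]; push_cast; ring
  have e4 : ∫ t in t0..Y, I * (((x1 - x0 : ℝ) : ℂ) + (t - Y : ℝ) * I) * log (x1 + t * I - ρ) = ∫ t in t0..Y, I * ((x1 : ℂ) + t * I - S) * log (x1 + t * I - ρ) := by
    congr 1; ext σ; rw [hS]; push_cast; ring
  rw [TL, BR, e1, e2, e3, e4, iT, iB, ver.2, ver2.2, log_sub_of_im_pos (s := x0 + Y * I) (ρ := ρ) (by simp; exact h4),
    log_sub_of_im_neg (s := x0 + t0 * I) (ρ := ρ) (by simp; exact h3)]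
  have q1 : (Q (x0 + Y * I) * (π * I)).re = π * ((ρ.re - x0) * (ρ.im - Y)) := by
    simp [hQ, hS, pow_two]; ring
  have q2 : (Q (x0 + t0 * I) * (π * I)).re = π * ((ρ.re - x0) * (ρ.im - Y)) := by
    simp [hQ, hS, pow_two]; ring
  rw [mul_add, mul_sub]
  simp only [add_re, sub_re, q1, q2]
  ring

end LZ

open scoped Classical
namespace LZ
open Complex Filter Topology Asymptotics Set MeasureTheory
open scoped Real

structure Ident (x0 x1 t0 Y : ℝ) (u : ℂ → ℝ) (L : ℂ → ℂ) (c : ℝ) : Prop where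
  c1 : ContinuousOn (fun σ : ℝ => u (σ + Y * I)) (uIcc x0 x1)
  c2 : ContinuousOn (fun t : ℝ => u (x0 + t * I)) (uIcc t0 Y)
  c3 : ContinuousOn (fun σ : ℝ => L (σ + t0 * I)) (uIcc x0 x1)
  c4 : ContinuousOn (fun t : ℝ => L (x1 + t * I)) (uIcc t0 Y)
  e : TL x0 x1 t0 Y u = BR x0 x1 t0 Y L + c

lemma Ident.add {x0 x1 t0 Y : ℝ} {u u' : ℂ → ℝ} {L L' : ℂ → ℂ} {c c' : ℝ}
    (h : Ident x0 x1 t0 Y u L c) (h' : Ident x0 x1 t0 Y u' L' c') :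
    Ident x0 x1 t0 Y (fun s => u s + u' s) (fun s => L s + L' s) (c + c') := by
  refine ⟨h.c1.add h'.c1, h.c2.add h'.c2, h.c3.add h'.c3, h.c4.add h'.c4, ?_⟩
  have c1 := h.c1
  have c2 := h.c2
  have c3 := h.c3
  have c4 := h.c4
  have c1' := h'.c1
  have c2' := h'.c2
  have c3' := h'.c3
  have c4' := h'.c4
  have e1 := h.e
  have e2 := h'.e
  rw [TL, BR] at e1 e2 ⊢
  simp only [mul_add]
  have i1 : ∀ {v : ℂ → ℝ}, ContinuousOn (fun σ : ℝ => v (σ + Y * I)) (uIcc x0 x1) → IntervalIntegrable (fun σ : ℝ => (σ - x0) * v (σ + Y * I)) volume x0 x1 :=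
    fun hv => ContinuousOn.intervalIntegrable (ContinuousOn.mul (by fun_prop) hv)
  have i2 : ∀ {v : ℂ → ℝ}, ContinuousOn (fun t : ℝ => v (x0 + t * I)) (uIcc t0 Y) → IntervalIntegrable (fun t : ℝ => (Y - t) * v (x0 + t * I)) volume t0 Y :=
    fun hv => ContinuousOn.intervalIntegrable (ContinuousOn.mul (by fun_prop) hv)
  have i3 : ∀ {v : ℂ → ℂ}, ContinuousOn (fun σ : ℝ => v (σ + t0 * I)) (uIcc x0 x1) → IntervalIntegrable (fun σ : ℝ => (((σ - x0 : ℝ) : ℂ) + (t0 - Y : ℝ) * I) * v (σ + t0 * I)) volume x0 x1 :=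
    fun hv => ContinuousOn.intervalIntegrable (ContinuousOn.mul (by fun_prop) hv)
  have i4 : ∀ {v : ℂ → ℂ}, ContinuousOn (fun t : ℝ => v (x1 + t * I)) (uIcc t0 Y) → IntervalIntegrable (fun t : ℝ => I * (((x1 - x0 : ℝ) : ℂ) + (t - Y : ℝ) * I) * v (x1 + t * I)) volume t0 Y :=
    fun hv => ContinuousOn.intervalIntegrable (ContinuousOn.mul (by fun_prop) hv)
  rw [intervalIntegral.integral_add (i1 c1) (i1 c1'), intervalIntegral.integral_add (i2 c2) (i2 c2')]
  have e3 := intervalIntegral.integral_add (i3 c3) (i3 c3')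
  have e4 := intervalIntegral.integral_add (i4 c4) (i4 c4')
  simp only [mul_add] at e3 e4
  simp only [mul_add] at e1 e2
  rw [e3, e4, add_re, add_re]
  linarith

lemma Ident.zero {x0 x1 t0 Y : ℝ} : Ident x0 x1 t0 Y (fun _ => 0) (fun _ => 0) 0 := by
  refine ⟨continuousOn_const, continuousOn_const, continuousOn_const, continuousOn_const, ?_⟩
  simp [TL, BR]

lemma Ident.nsmul {x0 x1 t0 Y : ℝ} {u : ℂ → ℝ} {L : ℂ → ℂ} {c : ℝ}
    (h : Ident x0 x1 t0 Y u L c) (m : ℕ) :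
    Ident x0 x1 t0 Y (fun s => m * u s) (fun s => m * L s) (m * c) := by
  induction m with
  | zero => simpa using Ident.zero
  | succ m ih =>
    have := ih.add h
    convert this using 1
    · ext s; push_cast; ring
    · ext s; push_cast; ring
    · push_cast; ring

lemma Ident.sum {x0 x1 t0 Y : ℝ} {u : ℂ → ℂ → ℝ} {L : ℂ → ℂ → ℂ} {c : ℂ → ℝ} (Z : Finset ℂ)
    (h : ∀ ρ ∈ Z, Ident x0 x1 t0 Y (u ρ) (L ρ) (c ρ)) :
    Ident x0 x1 t0 Y (fun s => ∑ ρ ∈ Z, u ρ s) (fun s => ∑ ρ ∈ Z, L ρ s) (∑ ρ ∈ Z, c ρ) := by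
  induction Z using Finset.induction_on with
  | empty => simpa using Ident.zero
  | insert ρ Z hn ih =>
    have := (h ρ (Finset.mem_insert_self _ _)).add (ih (fun r hr => h r (Finset.mem_insert_of_mem hr)))
    simpa only [Finset.sum_insert hn] using this

lemma Ident.hol {x0 x1 t0 Y : ℝ} (hx : x0 ≤ x1) (ht : t0 ≤ Y) {L : ℂ → ℂ}
    (hL : DifferentiableOn ℂ L (Icc x0 x1 ×ℂ Icc t0 Y)) :
    Ident x0 x1 t0 Y (fun s => (L s).re) L 0 := by
  have cH : ∀ y ∈ Icc t0 Y, ContinuousOn (fun σ : ℝ => L (σ + y * I)) (uIcc x0 x1) := by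
    intro y hy
    refine hL.continuousOn.comp (by fun_prop) fun σ hσ => ?_
    rw [uIcc_of_le hx] at hσ
    simpa [mem_reProdIm] using ⟨hσ, hy⟩
  have cV : ∀ x ∈ Icc x0 x1, ContinuousOn (fun t : ℝ => L (x + t * I)) (uIcc t0 Y) := by
    intro x hx'
    refine hL.continuousOn.comp (by fun_prop) fun σ hσ => ?_
    rw [uIcc_of_le ht] at hσ
    simpa [mem_reProdIm] using ⟨hx', hσ⟩
  refine ⟨continuous_re.comp_continuousOn (cH Y (right_mem_Icc.2 ht)), continuous_re.comp_continuousOn (cV x0 (left_mem_Icc.2 hx)),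
    cH t0 (left_mem_Icc.2 ht), cV x1 (right_mem_Icc.2 hx), ?_⟩
  rw [hol_ident hx ht hL, add_zero]

lemma Ident.log {x0 x1 t0 Y : ℝ} {ρ : ℂ} (ht : t0 ≤ Y) (h1 : x0 < ρ.re) (h2 : ρ.re < x1) (h3 : ρ.im ≠ t0) (h4 : ρ.im ≠ Y) :
    Ident x0 x1 t0 Y (fun s => (log (s - ρ)).re) (fun s => log (s - ρ)) (if t0 < ρ.im ∧ ρ.im < Y then 2 * π * ((ρ.re - x0) * (Y - ρ.im)) else 0) := by
  split_ifs with h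
  · refine ⟨?_, ?_, ?_, ?_, zero_ident h1 h2 h.1 h.2⟩
    · refine (continuous_re.comp (Continuous.clog (by fun_prop) fun σ => ?_)).continuousOn
      right; simp; exact sub_ne_zero.2 h4.symm
    · simp only [log_re]
      refine (Continuous.log (by fun_prop) fun t => ?_).continuousOn
      rw [norm_ne_zero_iff]; intro h; have := congrArg re h; simp at this; linarith
    · refine ((Continuous.clog (by fun_prop) fun σ => ?_)).continuousOn
      right; simp; exact sub_ne_zero.2 h3.symm
    · refine ((Continuous.clog (by fun_prop) fun σ => ?_)).continuousOn
      left; simp; exact h2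
  · refine Ident.hol (h1.le.trans h2.le) ht ?_
    intro s hs
    have := (mem_reProdIm.1 hs).2
    refine ((DifferentiableAt.clog (by fun_prop) ?_)).differentiableWithinAt
    right
    simp
    intro he
    have he : s.im = ρ.im := by linarith
    rw [he] at this
    exact h ⟨lt_of_le_of_ne this.1 h3.symm, lt_of_le_of_ne this.2 h4⟩

lemma TL_congr {x0 x1 t0 Y : ℝ} (hx : x0 ≤ x1) (ht : t0 ≤ Y) {u v : ℂ → ℝ}
    (h : ∀ σ ∈ Icc x0 x1, u (σ + Y * I) = v (σ + Y * I)) (h' : ∀ t ∈ Icc t0 Y, u (x0 + t * I) = v (x0 + t * I)) :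
    TL x0 x1 t0 Y u = TL x0 x1 t0 Y v := by
  rw [TL, TL]
  congr 1
  · apply intervalIntegral.integral_congr
    intro σ hσ
    rw [uIcc_of_le hx] at hσ
    simp only [h σ hσ]
  · apply intervalIntegral.integral_congr
    intro σ hσ
    rw [uIcc_of_le ht] at hσ
    simp only [h' σ hσ]

lemma littlewood {U : Set ℂ} (hU : IsOpen U) (hc : Convex ℝ U) {G : ℂ → ℂ} (hG : DifferentiableOn ℂ G U) (ord : ℂ → ℕ)
    (Z : Finset ℂ) (hZ : ∀ s, s ∈ Z ↔ s ∈ U ∧ G s = 0)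
    (hm : ∀ ρ ∈ Z, analyticOrderAt G ρ = ord ρ) {x0 x1 t0 Y1 : ℝ} (hx : x0 ≤ x1) (hY01 : t0 ≤ Y1)
    (hR : Icc x0 x1 ×ℂ Icc t0 Y1 ⊆ U) (hz : ∀ ρ ∈ Z, x0 < ρ.re ∧ ρ.re < x1 ∧ ρ.im ≠ t0)
    {ℓ : ℂ} (hℓ : cexp ℓ = G (x1 + t0 * I)) :
    ∃ H : ℂ → ℂ, H (x1 + t0 * I) = ℓ ∧ (∀ s ∈ U, s.im = t0 ∨ s.re = x1 → cexp (H s) = G s ∧ DifferentiableAt ℂ H s) ∧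
      ∀ Y, t0 ≤ Y → Y ≤ Y1 → (∀ ρ ∈ Z, ρ.im ≠ Y) → TL x0 x1 t0 Y (fun s => Real.log ‖G s‖) =
        BR x0 x1 t0 Y H + ∑ ρ ∈ Z, ord ρ * (if t0 < ρ.im ∧ ρ.im < Y then 2 * π * ((ρ.re - x0) * (Y - ρ.im)) else 0) := by
  obtain ⟨g, dg, eg, ng⟩ := factor hU hG ord Z (fun ρ hρ => ((hZ ρ).1 hρ).1) hm
  have ng' : ∀ s ∈ U, g s ≠ 0 := by
    intro s hs h0
    by_cases h : s ∈ Z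
    · exact ng s h h0
    · apply h; rw [hZ]; refine ⟨hs, ?_⟩; rw [eg s hs, h0, mul_zero]
  obtain ⟨h₁, dh₁, eh₁⟩ := exists_log hU hc dg ng'
  have ex₁ : ∀ s ∈ U, s ∉ Z → cexp ((∑ ρ ∈ Z, ord ρ * Complex.log (s - ρ)) + h₁ s) = G s := by
    intro s hs hsZ
    rw [Complex.exp_add, eh₁ s hs, eg s hs, Complex.exp_sum]
    congr 1
    refine Finset.prod_congr rfl fun ρ hρ => ?_
    rw [Complex.exp_nat_mul, Complex.exp_log]
    exact sub_ne_zero.2 (by rintro rfl; exact hsZ hρ)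
  obtain ⟨k, hk1, hk2⟩ : ∃ k : ℂ, cexp k = 1 ∧ (∑ ρ ∈ Z, ord ρ * Complex.log (x1 + t0 * I - ρ)) + (h₁ (x1 + t0 * I) + k) = ℓ := by
    have hp : (x1 + t0 * I : ℂ) ∈ U := hR (by simpa [mem_reProdIm] using ⟨hx, hY01⟩)
    have hpZ : (x1 + t0 * I : ℂ) ∉ Z := fun hsZ => (hz _ hsZ).2.2 (by simp)
    refine ⟨ℓ - ((∑ ρ ∈ Z, ord ρ * Complex.log (x1 + t0 * I - ρ)) + h₁ (x1 + t0 * I)), ?_, by ring⟩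
    rw [Complex.exp_sub, ex₁ _ hp hpZ, hℓ]
    apply div_self
    intro h0
    exact hpZ ((hZ _).2 ⟨hp, h0⟩)
  obtain ⟨h, dh, eh, hhe⟩ : ∃ h : ℂ → ℂ, DifferentiableOn ℂ h U ∧ (∀ s ∈ U, cexp (h s) = g s) ∧ h (x1 + t0 * I) = h₁ (x1 + t0 * I) + k :=
    ⟨fun s => h₁ s + k, dh₁.add_const _, fun s hs => by rw [Complex.exp_add, hk1, mul_one, eh₁ s hs], rfl⟩
  have ex : ∀ s ∈ U, s ∉ Z → cexp ((∑ ρ ∈ Z, ord ρ * Complex.log (s - ρ)) + h s) = G s := by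
    intro s hs hsZ
    rw [Complex.exp_add, eh s hs, eg s hs, Complex.exp_sum]
    congr 1
    refine Finset.prod_congr rfl fun ρ hρ => ?_
    rw [Complex.exp_nat_mul, Complex.exp_log]
    exact sub_ne_zero.2 (by rintro rfl; exact hsZ hρ)
  refine ⟨fun s => (∑ ρ ∈ Z, ord ρ * Complex.log (s - ρ)) + h s, by simp only [hhe]; exact hk2, fun s hs hs2 => ⟨ex s hs ?_, ?_⟩, fun Y hY hY1 hn => ?_⟩
  · intro hsZ
    obtain ⟨h1, h2, h3⟩ := hz s hsZ
    rcases hs2 with h | h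
    · exact h3 h
    · exact h2.ne h
  · refine DifferentiableAt.add (DifferentiableAt.fun_sum fun ρ hρ => ?_) (dh.differentiableAt (hU.mem_nhds hs))
    refine DifferentiableAt.const_mul (DifferentiableAt.clog (by fun_prop) ?_) _
    obtain ⟨h1, h2, h3⟩ := hz ρ hρ
    rcases hs2 with h | h
    · right; simp [h]; exact sub_ne_zero.2 h3.symm
    · left; simp [h]; exact h2
  · have key := (Ident.sum Z (fun ρ hρ => (Ident.log (x0 := x0) (x1 := x1) hY (hz ρ hρ).1 (hz ρ hρ).2.1 (hz ρ hρ).2.2 (hn ρ hρ)).nsmul (ord ρ))).add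
      (Ident.hol (Y := Y) hx hY (dh.mono (fun s hs => hR ⟨hs.1, hs.2.1, hs.2.2.trans hY1⟩)))
    rw [add_zero] at key
    rw [← key.e]
    have hre : ∀ s ∈ U, s ∉ Z → Real.log ‖G s‖ = (∑ ρ ∈ Z, ord ρ * (Complex.log (s - ρ)).re) + (h s).re := by
      intro s hs hsZ
      rw [← ex s hs hsZ, norm_exp, Real.log_exp, add_re, re_sum]
      congr 1
      refine Finset.sum_congr rfl fun ρ hρ => ?_
      simp
    apply TL_congr hx hY
    · intro σ hσ
      apply hre
      · apply hR; simpa [mem_reProdIm] using ⟨hσ, hY, hY1⟩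
      · intro hsZ; exact hn _ hsZ (by simp)
    · intro t ht
      apply hre
      · apply hR; simpa [mem_reProdIm] using ⟨hx, ht.1, ht.2.trans hY1⟩
      · intro hsZ; have := (hz _ hsZ).1; simp at this

end LZ

open scoped Classical
namespace LZ
open Complex Filter Topology Asymptotics Set MeasureTheory
open scoped Real

lemma zeros_finite {U K : Set ℂ} (hU : IsOpen U) (hc : IsPreconnected U) {G : ℂ → ℂ} (hG : DifferentiableOn ℂ G U)
    {x : ℂ} (hx : x ∈ U) (hx0 : G x ≠ 0) (hK : IsCompact K) (hKU : K ⊆ U) : {s | s ∈ K ∧ G s = 0}.Finite := by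
  by_contra hinf
  obtain ⟨z, hz, hacc⟩ := Set.Infinite.exists_accPt_of_subset_isCompact hinf hK (fun s hs => hs.1)
  rw [accPt_iff_frequently_nhdsNE] at hacc
  have := AnalyticOnNhd.eqOn_zero_of_preconnected_of_frequently_eq_zero (hG.analyticOnNhd hU) hc (hKU hz)
    (hacc.mono fun s hs => hs.2)
  exact hx0 (this hx)

lemma order_finite {U : Set ℂ} (hU : IsOpen U) (hc : IsPreconnected U) {G : ℂ → ℂ} (hG : DifferentiableOn ℂ G U)
    {x : ℂ} (hx : x ∈ U) (hx0 : G x ≠ 0) {z : ℂ} (hz : z ∈ U) : analyticOrderAt G z = ((analyticOrderAt G z).toNat : ℕ) := by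
  have ha := hG.analyticOnNhd hU
  have h1 : analyticOrderAt G x ≠ ⊤ := by
    rw [((ha x hx).analyticOrderAt_eq_zero).2 hx0]; simp
  have := ha.analyticOrderAt_ne_top_of_isPreconnected hc hx hz h1
  exact (ENat.natCast_toNat this).symm

lemma zero_int_lower : ∃ K : ℝ, 0 ≤ K ∧ ∀ (x0 y : ℝ) (ρ : ℂ), -4 ≤ x0 → x0 ≤ 3 → |ρ.re - 3| ≤ 9 → (∀ σ ∈ Icc x0 3, (σ + y * I : ℂ) ≠ ρ) →
    -K ≤ ∫ σ in x0..3, (σ - x0) * Real.log ‖(σ + y * I - ρ : ℂ)‖ := by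
  obtain ⟨K, hK⟩ := (isCompact_Icc (a := (-16:ℝ)) (b := 16)).exists_bound_of_continuousOn Real.continuous_mul_log.continuousOn
  refine ⟨7 * (2 * |K| + 7 + 7 * Real.log 16), by positivity, fun x0 y ρ h1 h2 h3 h4 => ?_⟩
  obtain ⟨h3a, h3b⟩ := abs_le.1 h3
  have hl16 : 0 ≤ Real.log 16 := Real.log_nonneg (by norm_num)
  have i1 : IntervalIntegrable (fun σ : ℝ => Real.log (σ - ρ.re)) volume x0 3 := by
    have := (intervalIntegral.intervalIntegrable_log' (a := x0 - ρ.re) (b := 3 - ρ.re)).comp_sub_right ρ.re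
    simpa using this
  have i2 : IntervalIntegrable (fun σ : ℝ => (σ - x0) * Real.log ‖(σ + y * I - ρ : ℂ)‖) volume x0 3 := by
    apply ContinuousOn.intervalIntegrable
    refine ContinuousOn.mul (by fun_prop) (ContinuousOn.log (by fun_prop) fun σ hσ => ?_)
    rw [uIcc_of_le h2] at hσ
    rw [norm_ne_zero_iff]; exact sub_ne_zero.2 (h4 σ hσ)
  have key : ∫ σ in x0..3, 7 * (Real.log (σ - ρ.re) - Real.log 16) ≤ ∫ σ in x0..3, (σ - x0) * Real.log ‖(σ + y * I - ρ : ℂ)‖ := by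
    refine intervalIntegral.integral_mono_ae_restrict h2 ((i1.sub intervalIntegrable_const).const_mul 7) i2 ?_
    have : ∀ᵐ σ : ℝ, σ ≠ ρ.re := by simp [ae_iff]
    rw [EventuallyLE, ae_restrict_iff' measurableSet_Icc]
    filter_upwards [this] with σ hσ hs
    have p : 0 < |σ - ρ.re| := abs_pos.2 (sub_ne_zero.2 hσ)
    have q : |σ - ρ.re| ≤ ‖(σ + y * I - ρ : ℂ)‖ := by
      have := abs_re_le_norm (σ + y * I - ρ : ℂ)
      simpa using this
    have r : |σ - ρ.re| ≤ 16 := abs_le.2 ⟨by linarith [hs.1], by linarith [hs.2]⟩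
    have l1 := Real.log_le_log p q
    have l2 := Real.log_le_log p r
    rw [Real.log_abs] at l1 l2
    have : 0 ≤ σ - x0 := by linarith [hs.1]
    have : σ - x0 ≤ 7 := by linarith [hs.2]
    nlinarith
  rw [intervalIntegral.integral_const_mul, intervalIntegral.integral_sub i1 intervalIntegrable_const, intervalIntegral.integral_comp_sub_right (fun x => Real.log x),
    integral_log, intervalIntegral.integral_const, smul_eq_mul] at key
  have b1 := hK (3 - ρ.re) ⟨by linarith, by linarith⟩
  have b2 := hK (x0 - ρ.re) ⟨by linarith, by linarith⟩
  rw [Real.norm_eq_abs] at b1 b2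
  have b1' := (abs_le.1 b1).1
  have b2' := (abs_le.1 b2).2
  have := le_abs_self K
  nlinarith

lemma disc_lower : ∃ K : ℝ, 0 ≤ K ∧ ∀ (x0 y M : ℝ) (G : ℂ → ℂ), -4 ≤ x0 → x0 ≤ 3 → 1 ≤ M →
    DifferentiableOn ℂ G (Metric.ball (3 + y * I) 28) → (∀ s ∈ Metric.closedBall (3 + y * I : ℂ) 27, ‖G s‖ ≤ M) →
    1 / 3 ≤ ‖G (3 + y * I)‖ → (∀ σ ∈ Icc x0 3, G (σ + y * I) ≠ 0) →
    -(K * (1 + Real.log M)) ≤ ∫ σ in x0..3, (σ - x0) * Real.log ‖G (σ + y * I)‖ := by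
  obtain ⟨K, hK0, hK⟩ := zero_int_lower
  refine ⟨4 * K + 2000, by positivity, fun x0 y M G hx1 hx2 hM hG hGM hGc hnz => ?_⟩
  set c : ℂ := 3 + y * I with hc
  have hcU : c ∈ Metric.ball c 28 := Metric.mem_ball_self (by norm_num)
  have hc0 : G c ≠ 0 := by intro h; rw [h, norm_zero] at hGc; norm_num at hGc
  have hpre : IsPreconnected (Metric.ball c 28) := (convex_ball c 28).isPreconnected
  have hfin := zeros_finite Metric.isOpen_ball hpre hG hcU hc0 (isCompact_closedBall c 9)
    (Metric.closedBall_subset_ball (by norm_num))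
  set Z := hfin.toFinset with hZ
  have memZ : ∀ s, s ∈ Z ↔ s ∈ Metric.closedBall c 9 ∧ G s = 0 := by intro s; rw [hZ, Set.Finite.mem_toFinset]; rfl
  set ord : ℂ → ℕ := fun z => (analyticOrderAt G z).toNat with hord
  have sub9 : Metric.closedBall c 9 ⊆ Metric.ball c 28 := Metric.closedBall_subset_ball (by norm_num)
  obtain ⟨g, dg, eg, ng⟩ := factor Metric.isOpen_ball hG ord Z (fun ρ hρ => sub9 ((memZ ρ).1 hρ).1)
    (fun ρ hρ => order_finite Metric.isOpen_ball hpre hG hcU hc0 (sub9 ((memZ ρ).1 hρ).1))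
  set N : ℕ := ∑ ρ ∈ Z, ord ρ with hN
  have ng' : ∀ s ∈ Metric.closedBall c 9, g s ≠ 0 := by
    intro s hs h0
    by_cases h : s ∈ Z
    · exact ng s h h0
    · apply h; rw [memZ]; refine ⟨hs, ?_⟩; rw [eg s (sub9 hs), h0, mul_zero]
  have sub27 : Metric.closedBall c 27 ⊆ Metric.ball c 28 := Metric.closedBall_subset_ball (by norm_num)
  have distZ : ∀ ρ ∈ Z, ‖ρ - c‖ ≤ 9 := by
    intro ρ hρ
    have := ((memZ ρ).1 hρ).1
    rwa [Metric.mem_closedBall, dist_eq_norm] at this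
  -- max modulus
  have mm : ∀ s ∈ Metric.closedBall c 27, ‖g s‖ ≤ M / 18 ^ N := by
    intro s hs
    refine Complex.norm_le_of_forall_mem_frontier_norm_le (U := Metric.ball c 27) Metric.isBounded_ball
      ?_ ?_ ?_
    · apply DifferentiableOn.diffContOnCl
      rw [closure_ball c (by norm_num)]
      exact dg.mono sub27
    · intro z hz
      rw [frontier_ball c (by norm_num)] at hz
      have hz27 : z ∈ Metric.closedBall c 27 := Metric.sphere_subset_closedBall hz
      have hz' : ‖z - c‖ = 27 := by rwa [Metric.mem_sphere, dist_eq_norm] at hz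
      have h1 := eg z (sub27 hz27)
      have h2 : (18:ℝ) ^ N ≤ ‖∏ ρ ∈ Z, (z - ρ) ^ ord ρ‖ := by
        rw [norm_prod, hN, ← Finset.prod_pow_eq_pow_sum]
        refine Finset.prod_le_prod (fun i _ => by positivity) fun ρ hρ => ?_
        rw [norm_pow]
        have : 18 ≤ ‖z - ρ‖ := by
          have h3 := norm_sub_norm_le (z - c) (ρ - c)
          have h4 := distZ ρ hρ
          have e : z - c - (ρ - c) = z - ρ := by ring
          rw [e] at h3
          linarith
        gcongr
      have h3 := hGM z hz27
      rw [h1, norm_mul] at h3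
      rw [le_div_iff₀ (by positivity)]
      calc _ = (18:ℝ) ^ N * ‖g z‖ := by ring
        _ ≤ _ := by gcongr
        _ ≤ _ := h3
    · rw [closure_ball c (by norm_num)]; exact hs
  have gc : 1 / 3 ≤ 9 ^ N * ‖g c‖ := by
    refine hGc.trans ?_
    rw [eg c hcU, norm_mul]
    gcongr
    rw [norm_prod, hN, ← Finset.prod_pow_eq_pow_sum]
    refine Finset.prod_le_prod (fun i _ => by positivity) fun ρ hρ => ?_
    rw [norm_pow]
    have := distZ ρ hρ
    rw [norm_sub_rev] at this
    gcongr
  have gc0 : 0 < ‖g c‖ := by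
    by_contra h
    have : ‖g c‖ = 0 := le_antisymm (not_lt.1 h) (norm_nonneg _)
    rw [this] at gc; norm_num at gc
  have mc := mm c (Metric.mem_closedBall_self (by norm_num))
  -- logs
  set L := Real.log M with hL
  have hL0 : 0 ≤ L := Real.log_nonneg hM
  have lg1 : -Real.log 3 - N * Real.log 9 ≤ Real.log ‖g c‖ := by
    have := Real.log_le_log (by norm_num) gc
    rw [Real.log_mul (by positivity) gc0.ne', Real.log_pow, one_div, Real.log_inv] at this
    linarith
  have lg2 : ∀ s ∈ Metric.closedBall c 9, Real.log ‖g s‖ ≤ L - N * Real.log 18 := by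
    intro s hs
    have := Real.log_le_log (norm_pos_iff.2 (ng' s hs)) (mm s (Metric.closedBall_subset_closedBall (by norm_num) hs))
    rw [Real.log_div (by positivity) (by positivity), Real.log_pow] at this
    exact this
  have l18 : Real.log 18 = Real.log 9 + Real.log 2 := by
    rw [← Real.log_mul (by norm_num) (by norm_num)]; norm_num
  have l2 := Real.log_two_gt_d9
  have l3 : Real.log 3 ≤ 2 := by have := Real.log_le_sub_one_of_pos (x := 3) (by norm_num); linarith
  have l3p : 0 < Real.log 3 := Real.log_pos (by norm_num)
  have l9 : Real.log 9 ≤ 4 := by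
    rw [show (9:ℝ) = 3 ^ 2 by norm_num, Real.log_pow]; push_cast; linarith
  have l9p : 0 < Real.log 9 := Real.log_pos (by norm_num)
  have hN0 : (0:ℝ) ≤ N := Nat.cast_nonneg _
  have NL : (N : ℝ) ≤ 4 + 2 * L := by
    have := lg2 c (Metric.mem_closedBall_self (by norm_num))
    rw [l18] at this
    nlinarith
  obtain ⟨h, dh, eh⟩ := exists_log Metric.isOpen_ball (convex_ball c 9) (dg.mono (Metric.ball_subset_closedBall.trans sub9))
    (fun s hs => ng' s (Metric.ball_subset_closedBall hs))
  have hre : ∀ s ∈ Metric.ball c 9, (h s).re = Real.log ‖g s‖ := by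
    intro s hs; rw [← eh s hs, norm_exp, Real.log_exp]
  have c9 : c ∈ Metric.ball c 9 := Metric.mem_ball_self (by norm_num)
  set B := L + Real.log 3 with hB
  have low : ∀ s : ℂ, ‖s - c‖ ≤ 7 → -(Real.log 3 + N * Real.log 9 + 7 * B) ≤ (h s).re := by
    intro s hs
    have bc := Complex.borelCaratheodory_zero (M := B) (f := fun z => h (c + z) - h c) (R := 9) (z := s - c) (by linarith)
      ?_ ?_ (by norm_num) (by rw [mem_ball_zero_iff]; linarith) (by simp)
    · rw [add_sub_cancel] at bc
      have b2 : 2 * B * ‖s - c‖ / (9 - ‖s - c‖) ≤ 7 * B := by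
        rw [div_le_iff₀ (by linarith)]
        have : 0 < B := by linarith
        nlinarith
      have b3 := (abs_le.1 ((abs_re_le_norm _).trans (bc.trans b2))).1
      rw [sub_re, hre c c9] at b3
      linarith
    · refine DifferentiableOn.sub_const (dh.comp (by fun_prop) fun z hz => ?_) _
      rw [mem_ball_zero_iff] at hz
      simpa [Metric.mem_ball, dist_eq_norm] using hz
    · intro z hz
      rw [mem_ball_zero_iff] at hz
      have hz' : c + z ∈ Metric.ball c 9 := by simpa [Metric.mem_ball, dist_eq_norm] using hz
      show (h (c + z) - h c).re ≤ B
      rw [sub_re, hre _ hz', hre _ c9]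
      have := lg2 (c + z) (Metric.ball_subset_closedBall hz')
      rw [l18] at this
      nlinarith
  set D := Real.log 3 + N * Real.log 9 + 7 * B with hD
  have hseg : ∀ σ ∈ Icc x0 3, ‖(σ + y * I : ℂ) - c‖ ≤ 7 := by
    intro σ hσ
    have : (σ + y * I : ℂ) - c = ((σ - 3 : ℝ) : ℂ) := by rw [hc]; push_cast; ring
    rw [this, norm_real, Real.norm_eq_abs, abs_le]
    constructor <;> linarith [hσ.1, hσ.2]
  have hsegU : ∀ σ ∈ Icc x0 3, (σ + y * I : ℂ) ∈ Metric.ball c 9 := by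
    intro σ hσ
    rw [Metric.mem_ball, dist_eq_norm]; linarith [hseg σ hσ]
  have hsegZ : ∀ σ ∈ Icc x0 3, ∀ ρ ∈ Z, (σ + y * I : ℂ) ≠ ρ := by
    intro σ hσ ρ hρ he
    apply hnz σ hσ; rw [he]; exact ((memZ ρ).1 hρ).2
  have ptw : ∀ σ ∈ Icc x0 3, Real.log ‖G (σ + y * I)‖ = (∑ ρ ∈ Z, ord ρ * Real.log ‖(σ + y * I - ρ : ℂ)‖) + (h (σ + y * I)).re := by
    intro σ hσ
    have hb := hsegU σ hσ
    rw [eg _ (sub9 (Metric.ball_subset_closedBall hb)), hre _ hb, norm_mul, Real.log_mul, norm_prod, Real.log_prod]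
    · congr 1
      refine Finset.sum_congr rfl fun ρ hρ => ?_
      rw [norm_pow, Real.log_pow]
    · intro ρ hρ
      rw [norm_ne_zero_iff]
      exact pow_ne_zero _ (sub_ne_zero.2 (hsegZ σ hσ ρ hρ))
    · rw [norm_ne_zero_iff, Finset.prod_ne_zero_iff]
      intro ρ hρ
      exact pow_ne_zero _ (sub_ne_zero.2 (hsegZ σ hσ ρ hρ))
    · rw [norm_ne_zero_iff]; exact ng' _ (Metric.ball_subset_closedBall hb)
  have iZ : ∀ ρ ∈ Z, IntervalIntegrable (fun σ : ℝ => (ord ρ : ℝ) * ((σ - x0) * Real.log ‖(σ + y * I - ρ : ℂ)‖)) volume x0 3 := by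
    intro ρ hρ
    apply ContinuousOn.intervalIntegrable
    refine ContinuousOn.mul (by fun_prop) (ContinuousOn.mul (by fun_prop) (ContinuousOn.log (by fun_prop) fun σ hσ => ?_))
    rw [uIcc_of_le hx2] at hσ
    rw [norm_ne_zero_iff]; exact sub_ne_zero.2 (hsegZ σ hσ ρ hρ)
  have ih : ContinuousOn (fun σ : ℝ => (σ - x0) * (h (σ + y * I)).re) (uIcc x0 3) := by
    refine ContinuousOn.mul (by fun_prop) (continuous_re.comp_continuousOn (dh.continuousOn.comp (by fun_prop) fun σ hσ => ?_))
    rw [uIcc_of_le hx2] at hσ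
    exact hsegU σ hσ
  have e1 : ∫ σ in x0..3, (σ - x0) * Real.log ‖G (σ + y * I)‖ = ∫ σ in x0..3, ((∑ ρ ∈ Z, (ord ρ : ℝ) * ((σ - x0) * Real.log ‖(σ + y * I - ρ : ℂ)‖)) + (σ - x0) * (h (σ + y * I)).re) := by
    apply intervalIntegral.integral_congr
    intro σ hσ
    rw [uIcc_of_le hx2] at hσ
    simp only
    rw [ptw σ hσ, mul_add, Finset.mul_sum]
    congr 1
    refine Finset.sum_congr rfl fun ρ hρ => by ring
  have iS : IntervalIntegrable (fun σ : ℝ => ∑ ρ ∈ Z, (ord ρ : ℝ) * ((σ - x0) * Real.log ‖(σ + y * I - ρ : ℂ)‖)) volume x0 3 := by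
    have e : (fun σ : ℝ => ∑ ρ ∈ Z, (ord ρ : ℝ) * ((σ - x0) * Real.log ‖(σ + y * I - ρ : ℂ)‖)) = ∑ ρ ∈ Z, fun σ : ℝ => (ord ρ : ℝ) * ((σ - x0) * Real.log ‖(σ + y * I - ρ : ℂ)‖) := by
      ext σ; simp
    rw [e]
    exact IntervalIntegrable.sum Z iZ
  rw [e1, intervalIntegral.integral_add iS ih.intervalIntegrable, intervalIntegral.integral_finsetSum iZ]
  have b1 : -(K * N) ≤ ∑ ρ ∈ Z, ∫ σ in x0..3, (ord ρ : ℝ) * ((σ - x0) * Real.log ‖(σ + y * I - ρ : ℂ)‖) := by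
    rw [hN]; push_cast
    rw [Finset.mul_sum, ← Finset.sum_neg_distrib]
    refine Finset.sum_le_sum fun ρ hρ => ?_
    rw [intervalIntegral.integral_const_mul]
    have hb := hK x0 y ρ hx1 hx2 ?_ (fun σ hσ => hsegZ σ hσ ρ hρ)
    · have : (0:ℝ) ≤ ord ρ := Nat.cast_nonneg _
      nlinarith
    · have := (abs_re_le_norm (ρ - c)).trans (distZ ρ hρ)
      simpa [hc] using this
  have b2 : -(D * 49) ≤ ∫ σ in x0..3, (σ - x0) * (h (σ + y * I)).re := by
    have hD0 : 0 ≤ D := by have : 0 ≤ N * Real.log 9 := by positivity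
                           linarith
    have : ∫ σ in x0..3, -(D * 7) ≤ ∫ σ in x0..3, (σ - x0) * (h (σ + y * I)).re := by
      refine intervalIntegral.integral_mono_on hx2 intervalIntegrable_const ih.intervalIntegrable fun σ hσ => ?_
      have h1 := low _ (hseg σ hσ)
      have h2 : 0 ≤ σ - x0 := by linarith [hσ.1]
      have h3 : σ - x0 ≤ 7 := by linarith [hσ.2]
      nlinarith
    rw [intervalIntegral.integral_const, smul_eq_mul] at this
    nlinarith
  have hD2 : D ≤ 2 + 4 * (4 + 2 * L) + 7 * (L + 2) := by
    have : (N : ℝ) * Real.log 9 ≤ (4 + 2 * L) * 4 := by gcongr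
    linarith
  nlinarith

end LZ

open scoped Classical
namespace LZ
open Complex Filter Topology Asymptotics Set MeasureTheory
open scoped Real

lemma log_unique {f g : ℝ → ℂ} {a b c : ℝ} (hf : DifferentiableOn ℝ f (Icc a b)) (hg : DifferentiableOn ℝ g (Icc a b))
    (he : ∀ x ∈ Icc a b, cexp (f x) = cexp (g x)) (hc : c ∈ Icc a b) (hfg : f c = g c) : ∀ x ∈ Icc a b, f x = g x := by
  rcases eq_or_lt_of_le (hc.1.trans hc.2) with hab | hab
  · intro x hx
    have : x = c := by
      have := hx.1; have := hx.2; have := hc.1; have := hc.2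
      linarith
    rw [this, hfg]
  have hd : DifferentiableOn ℝ (fun x => f x - g x) (Icc a b) := hf.sub hg
  have key : ∀ x ∈ Icc a b, (fun x => f x - g x) x = (fun x => f x - g x) a := by
    apply constant_of_derivWithin_zero hd
    intro x hx
    have hx' : x ∈ Icc a b := ⟨hx.1, hx.2.le⟩
    have h1 := (hd x hx').hasDerivWithinAt.cexp
    have h2 : HasDerivWithinAt (fun x => cexp (f x - g x)) 0 (Icc a b) x := by
      refine (hasDerivWithinAt_const x (Icc a b) (1:ℂ)).congr (fun y hy => ?_) ?_
      · rw [Complex.exp_sub, he y hy, div_self (Complex.exp_ne_zero _)]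
      · rw [Complex.exp_sub, he x hx', div_self (Complex.exp_ne_zero _)]
    have h3 := (uniqueDiffOn_Icc hab x hx').eq_deriv _ h1 h2
    rcases mul_eq_zero.1 h3 with h | h
    · exact absurd h (Complex.exp_ne_zero _)
    · exact h
  intro x hx
  have h1 := key x hx
  have h2 := key c hc
  simp only at h1 h2
  rw [← h2, hfg, sub_self] at h1
  exact sub_eq_zero.1 h1

lemma BR_diff {x0 x1 t0 Y K : ℝ} {H : ℂ → ℂ} (hx : x0 ≤ x1) (hY : t0 ≤ Y)
    (cb : ContinuousOn (fun σ : ℝ => H (σ + t0 * I)) (Icc x0 x1)) (bb : ∀ σ ∈ Icc x0 x1, ‖H (σ + t0 * I)‖ ≤ K)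
    (cr : ContinuousOn (fun t : ℝ => H (x1 + t * I)) (Icc t0 (Y + 1))) (br : ∀ t ∈ Icc t0 (Y + 1), ‖H (x1 + t * I)‖ ≤ 2)
    (ir : ‖∫ t in t0..Y, H (x1 + t * I)‖ ≤ 9) :
    |BR x0 x1 t0 (Y + 1) H - BR x0 x1 t0 Y H| ≤ K * (x1 - x0) + 9 + 2 * (x1 - x0 + 1) := by
  have hi : ∀ y : ℝ, IntervalIntegrable (fun σ : ℝ => (((σ - x0 : ℝ) : ℂ) + (t0 - y : ℝ) * I) * H (σ + t0 * I)) volume x0 x1 := by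
    intro y
    apply ContinuousOn.intervalIntegrable
    rw [uIcc_of_le hx]
    exact ContinuousOn.mul (by fun_prop) cb
  have e1 : (∫ σ in x0..x1, (((σ - x0 : ℝ) : ℂ) + (t0 - (Y + 1) : ℝ) * I) * H (σ + t0 * I)) -
      (∫ σ in x0..x1, (((σ - x0 : ℝ) : ℂ) + (t0 - Y : ℝ) * I) * H (σ + t0 * I)) = ∫ σ in x0..x1, -I * H (σ + t0 * I) := by
    rw [← intervalIntegral.integral_sub (hi _) (hi _)]
    apply intervalIntegral.integral_congr
    intro σ _
    simp only
    push_cast; ring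
  have b1 : ‖∫ σ in x0..x1, -I * H (σ + t0 * I)‖ ≤ K * (x1 - x0) := by
    have := intervalIntegral.norm_integral_le_of_norm_le_const (a := x0) (b := x1) (C := K) (f := fun σ : ℝ => -I * H (σ + t0 * I)) ?_
    · rwa [abs_of_nonneg (by linarith)] at this
    · intro σ hσ
      rw [uIoc_of_le hx] at hσ
      rw [norm_mul, norm_neg, norm_I, one_mul]
      exact bb σ ⟨hσ.1.le, hσ.2⟩
  have hr : ∀ y p q : ℝ, t0 ≤ p → p ≤ q → q ≤ Y + 1 → IntervalIntegrable (fun t : ℝ => I * (((x1 - x0 : ℝ) : ℂ) + (t - y : ℝ) * I) * H (x1 + t * I)) volume p q := by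
    intro y p q h1 h2 h3
    apply ContinuousOn.intervalIntegrable
    rw [uIcc_of_le h2]
    exact ContinuousOn.mul (by fun_prop) (cr.mono (Icc_subset_Icc h1 h3))
  have e2 : (∫ t in t0..(Y+1), I * (((x1 - x0 : ℝ) : ℂ) + (t - (Y+1) : ℝ) * I) * H (x1 + t * I)) -
      (∫ t in t0..Y, I * (((x1 - x0 : ℝ) : ℂ) + (t - Y : ℝ) * I) * H (x1 + t * I)) =
      (∫ t in t0..Y, H (x1 + t * I)) + ∫ t in Y..(Y+1), I * (((x1 - x0 : ℝ) : ℂ) + (t - (Y+1) : ℝ) * I) * H (x1 + t * I) := by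
    rw [← intervalIntegral.integral_add_adjacent_intervals (hr (Y+1) t0 Y le_rfl hY (by linarith)) (hr (Y+1) Y (Y+1) hY (by linarith) le_rfl)]
    rw [add_sub_right_comm, ← intervalIntegral.integral_sub (hr _ _ _ le_rfl hY (by linarith)) (hr _ _ _ le_rfl hY (by linarith))]
    congr 1
    apply intervalIntegral.integral_congr
    intro σ _
    simp only
    push_cast
    linear_combination (-H (x1 + σ * I)) * I_mul_I
  have b2 : ‖∫ t in Y..(Y+1), I * (((x1 - x0 : ℝ) : ℂ) + (t - (Y+1) : ℝ) * I) * H (x1 + t * I)‖ ≤ 2 * (x1 - x0 + 1) := by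
    have := intervalIntegral.norm_integral_le_of_norm_le_const (a := Y) (b := Y + 1) (C := 2 * (x1 - x0 + 1)) (f := fun t : ℝ => I * (((x1 - x0 : ℝ) : ℂ) + (t - (Y+1) : ℝ) * I) * H (x1 + t * I)) ?_
    · simpa using this
    · intro t ht
      rw [uIoc_of_le (by linarith)] at ht
      rw [norm_mul, norm_mul, norm_I, one_mul]
      have h1 : ‖((x1 - x0 : ℝ) : ℂ) + (t - (Y+1) : ℝ) * I‖ ≤ x1 - x0 + 1 := by
        refine (norm_add_le _ _).trans ?_
        rw [norm_mul, norm_I, mul_one, norm_real, norm_real, Real.norm_eq_abs, Real.norm_eq_abs, abs_of_nonneg (by linarith : 0 ≤ x1 - x0)]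
        have : |t - (Y + 1)| ≤ 1 := abs_le.2 ⟨by linarith [ht.1], by linarith [ht.2]⟩
        linarith
      have h2 := br t ⟨by linarith [ht.1], ht.2⟩
      calc _ ≤ (x1 - x0 + 1) * 2 := by gcongr
        _ = _ := by ring
  have e : BR x0 x1 t0 (Y + 1) H - BR x0 x1 t0 Y H = (∫ σ in x0..x1, -I * H (σ + t0 * I)).re +
      (∫ t in t0..Y, H (x1 + t * I)).re + (∫ t in Y..(Y+1), I * (((x1 - x0 : ℝ) : ℂ) + (t - (Y+1) : ℝ) * I) * H (x1 + t * I)).re := by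
    have f1 := congrArg re e1
    have f2 := congrArg re e2
    rw [sub_re] at f1 f2
    rw [add_re] at f2
    rw [BR, BR]
    linarith
  rw [e]
  refine (abs_add_le _ _).trans (add_le_add ((abs_add_le _ _).trans (add_le_add ?_ ?_)) ?_)
  · exact (abs_re_le_norm _).trans b1
  · exact (abs_re_le_norm _).trans ir
  · exact (abs_re_le_norm _).trans b2

lemma TL_diff {x0 x1 t0 Y : ℝ} {u : ℂ → ℝ} (hY : t0 ≤ Y)
    (cl : ContinuousOn (fun t : ℝ => u (x0 + t * I)) (Icc t0 (Y + 1))) :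
    TL x0 x1 t0 (Y + 1) u - TL x0 x1 t0 Y u = (∫ σ in x0..x1, (σ - x0) * u (σ + (Y + 1 : ℝ) * I)) - (∫ σ in x0..x1, (σ - x0) * u (σ + Y * I)) +
      (∫ t in t0..Y, u (x0 + t * I)) + ∫ t in Y..(Y+1), (Y + 1 - t) * u (x0 + t * I) := by
  have hr : ∀ y p q : ℝ, t0 ≤ p → p ≤ q → q ≤ Y + 1 → IntervalIntegrable (fun t : ℝ => (y - t) * u (x0 + t * I)) volume p q := by
    intro y p q h1 h2 h3
    apply ContinuousOn.intervalIntegrable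
    rw [uIcc_of_le h2]
    exact ContinuousOn.mul (by fun_prop) (cl.mono (Icc_subset_Icc h1 h3))
  have e2 : (∫ t in t0..(Y+1), (Y + 1 - t) * u (x0 + t * I)) - (∫ t in t0..Y, (Y - t) * u (x0 + t * I)) =
      (∫ t in t0..Y, u (x0 + t * I)) + ∫ t in Y..(Y+1), (Y + 1 - t) * u (x0 + t * I) := by
    rw [← intervalIntegral.integral_add_adjacent_intervals (hr (Y+1) t0 Y le_rfl hY (by linarith)) (hr (Y+1) Y (Y+1) hY (by linarith) le_rfl)]
    rw [add_sub_right_comm, ← intervalIntegral.integral_sub (hr _ _ _ le_rfl hY (by linarith)) (hr _ _ _ le_rfl hY (by linarith))]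
    congr 1
    apply intervalIntegral.integral_congr
    intro σ _
    simp only
    ring
  rw [TL, TL]
  linarith

lemma W_diff {Z : Finset ℂ} {ord : ℂ → ℕ} {x0 t0 Y T : ℝ} (hz : ∀ ρ ∈ Z, x0 < ρ.re) (hT : T ≤ Y) :
    2 * π * ∑ ρ ∈ Z, (if t0 < ρ.im ∧ ρ.im ≤ T then (ord ρ : ℝ) * (ρ.re - x0) else 0) ≤
     (∑ ρ ∈ Z, ord ρ * (if t0 < ρ.im ∧ ρ.im < Y + 1 then 2 * π * ((ρ.re - x0) * (Y + 1 - ρ.im)) else 0)) -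
     (∑ ρ ∈ Z, ord ρ * (if t0 < ρ.im ∧ ρ.im < Y then 2 * π * ((ρ.re - x0) * (Y - ρ.im)) else 0)) := by
  rw [Finset.mul_sum, ← Finset.sum_sub_distrib]
  refine Finset.sum_le_sum fun ρ hρ => ?_
  have h0 := hz ρ hρ
  have ho : (0:ℝ) ≤ ord ρ := Nat.cast_nonneg _
  have hp := Real.pi_pos
  have hm : 0 ≤ (ord ρ : ℝ) * (2 * π * (ρ.re - x0)) := by
    have : 0 ≤ ρ.re - x0 := by linarith
    positivity
  split_ifs with h1 h2 h3 h3 h4 h5 h6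
  · nlinarith
  · have : Y ≤ ρ.im := by by_contra hh; exact h3 ⟨h1.1, not_le.1 hh⟩
    have : ρ.im = Y := le_antisymm (h1.2.trans hT) this
    rw [this]
    nlinarith
  · exact absurd ⟨h1.1, by linarith [h1.2]⟩ h2
  · exact absurd ⟨h1.1, by linarith [h1.2]⟩ h2
  · nlinarith
  · have : 0 ≤ Y + 1 - ρ.im := by linarith [h4.2]
    nlinarith
  · exact absurd ⟨h6.1, by linarith [h6.2]⟩ h4
  · simp

lemma W_diff' {Z : Finset ℂ} {ord : ℂ → ℕ} {x0 t0 Y T : ℝ} (hz : ∀ ρ ∈ Z, x0 < ρ.re) (hT : Y + 1 ≤ T) :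
     (∑ ρ ∈ Z, ord ρ * (if t0 < ρ.im ∧ ρ.im < Y + 1 then 2 * π * ((ρ.re - x0) * (Y + 1 - ρ.im)) else 0)) -
     (∑ ρ ∈ Z, ord ρ * (if t0 < ρ.im ∧ ρ.im < Y then 2 * π * ((ρ.re - x0) * (Y - ρ.im)) else 0)) ≤ 
    2 * π * ∑ ρ ∈ Z, (if t0 < ρ.im ∧ ρ.im ≤ T then (ord ρ : ℝ) * (ρ.re - x0) else 0) := by
  rw [Finset.mul_sum, ← Finset.sum_sub_distrib]
  refine Finset.sum_le_sum fun ρ hρ => ?_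
  have h0 := hz ρ hρ
  have ho : (0:ℝ) ≤ ord ρ := Nat.cast_nonneg _
  have hp := Real.pi_pos
  have hm : 0 ≤ (ord ρ : ℝ) * (2 * π * (ρ.re - x0)) := by
    have : 0 ≤ ρ.re - x0 := by linarith
    positivity
  by_cases hT' : t0 < ρ.im ∧ ρ.im ≤ T
  · rw [if_pos hT']
    split_ifs with h1 h2 h3
    · nlinarith
    · have : Y ≤ ρ.im := by by_contra hh; exact h2 ⟨h1.1, not_le.1 hh⟩
      nlinarith
    · exact absurd ⟨h3.1, by linarith [h3.2]⟩ h1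
    · nlinarith
  · rw [if_neg hT', if_neg (fun h => hT' ⟨h.1, by linarith [h.2]⟩), if_neg (fun h => hT' ⟨h.1, by linarith [h.2]⟩)]
    simp

end LZ

open scoped Classical
namespace LZ
open Complex Filter Topology Asymptotics Set MeasureTheory
open scoped Real

noncomputable def GG (a : ℝ) (F : ℂ → ℂ) (s : ℂ) : ℂ := (a : ℂ) ^ s * F s

noncomputable def MM (l a : ℝ) (n : ℕ) (T : ℝ) : ℝ :=
  T * (-n * Real.log a - (n + 1) * Real.log l) + (n + 1 / 2) * (T * (Real.log (T / (2 * π)) - 1))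

section
variable {l a : ℝ} (hl0 : 0 < l) (hl1 : l ≤ 1) (ha0 : 0 < a) (ha1 : a ≤ 1) {F : ℂ → ℂ} (hF : IsLerch l a F)

include ha0 in
lemma GG_zero (s : ℂ) : GG a F s = 0 ↔ F s = 0 := by
  have : (a : ℂ) ^ s ≠ 0 := by
    rw [Ne, cpow_eq_zero_iff]; intro h; exact ha0.ne' (by exact_mod_cast h.1)
  simp [GG, this]

include ha0 ha1 hF in
lemma GG_right {s : ℂ} (hs : 1 < s.re) : GG a F s = DD l a s := by
  have h : (a : ℂ) ≠ 0 := by exact_mod_cast ha0.ne'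
  rw [GG, F_eq_LS hF hs, LS_eq ha0 ha1 hs, ← mul_assoc, ← cpow_add _ _ h, add_neg_cancel, cpow_zero, one_mul]

include ha0 in
lemma cpow_diff (s : ℂ) : DifferentiableAt ℂ (fun s => (a : ℂ) ^ s) s :=
  DifferentiableAt.const_cpow differentiableAt_id (Or.inl (by exact_mod_cast ha0.ne'))

include ha0 hF in
lemma GG_diff {s : ℂ} (hs : s ≠ 1) : DifferentiableAt ℂ (GG a F) s := by
  exact (cpow_diff ha0 s).mul (hF.1 s hs)

include hF in
lemma F_analytic {s : ℂ} (hs : s ≠ 1) : AnalyticAt ℂ F s := by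
  have : DifferentiableOn ℂ F ({1}ᶜ : Set ℂ) := fun z hz => (hF.1 z hz).differentiableWithinAt
  exact this.analyticAt (isOpen_compl_singleton.mem_nhds hs)

include ha0 hF in
lemma GG_order {s : ℂ} (hs : s ≠ 1) : analyticOrderAt (GG a F) s = analyticOrderAt F s := by
  have h1 : AnalyticAt ℂ (fun s : ℂ => (a : ℂ) ^ s) s := by
    have : Differentiable ℂ (fun s : ℂ => (a : ℂ) ^ s) := fun s => cpow_diff ha0 s
    exact this.analyticAt s
  have h2 : analyticOrderAt (fun s : ℂ => (a : ℂ) ^ s) s = 0 := by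
    rw [h1.analyticOrderAt_eq_zero, Ne, cpow_eq_zero_iff]; intro h; exact ha0.ne' (by exact_mod_cast h.1)
  have := analyticOrderAt_mul h1 (F_analytic hF hs)
  rw [h2, zero_add] at this
  exact this

include ha0 hF in
lemma GG_ord {U : Set ℂ} (hU : IsOpen U) (hc : IsPreconnected U) (h1 : (1:ℂ) ∉ U) {x : ℂ} (hx : x ∈ U) (hx0 : GG a F x ≠ 0) {z : ℂ} (hz : z ∈ U) :
    analyticOrderAt (GG a F) z = zeroOrder F z := by
  have hz1 : z ≠ 1 := fun h => h1 (h ▸ hz)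
  have hd : DifferentiableOn ℂ (GG a F) U := fun s hs => (GG_diff ha0 hF (fun h => h1 (h ▸ hs))).differentiableWithinAt
  rw [order_finite hU hc hd hx hx0 hz, zeroOrder, dif_pos (F_analytic hF hz1), GG_order ha0 hF hz1]

include hl0 hl1 ha0 ha1 hF in
lemma J_bound : ∃ C : ℝ, 0 ≤ C ∧ ∀ y x0 : ℝ, 40 ≤ y → -4 ≤ x0 → x0 ≤ 3 → (∀ σ ∈ Icc x0 3, F (σ + y * I) ≠ 0) →
    |∫ σ in x0..3, (σ - x0) * Real.log ‖GG a F (σ + y * I)‖| ≤ C * Real.log y := by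
  obtain ⟨C, hC1, hC⟩ := F_growth hl0 hl1 ha0 ha1 hF
  obtain ⟨K, hK0, hK⟩ := disc_lower
  set A : ℝ := a ^ (-24 : ℝ) with hA
  have hA1 : 1 ≤ A := Real.one_le_rpow_of_pos_of_le_one_of_nonpos ha0 ha1 (by norm_num)
  have hB0 : 0 ≤ Real.log (A * C) := Real.log_nonneg (by nlinarith)
  set B := Real.log (A * C) + 56 with hB
  have hB' : 0 ≤ B := by linarith
  refine ⟨(K + 49) * (1 + B), by positivity, fun y x0 hy h1 h2 hnz => ?_⟩
  have hly : 1 ≤ Real.log y := by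
    rw [Real.le_log_iff_exp_le (by linarith)]
    linarith [Real.exp_one_lt_d9]
  set M := A * C * (2 * y) ^ 28 with hM
  have hM1 : 1 ≤ M := by
    have h3 : 1 ≤ A * C := by nlinarith
    have h4 : 1 ≤ (2 * y) ^ 28 := one_le_pow₀ (by linarith)
    exact one_le_mul_of_one_le_of_one_le h3 h4
  have hlM : Real.log M ≤ B * Real.log y := by
    have hAC : A * C ≠ 0 := by nlinarith
    rw [hM, Real.log_mul hAC (by positivity), Real.log_pow, Real.log_mul two_ne_zero (by linarith)]
    have : Real.log 2 ≤ 1 := by linarith [Real.log_two_lt_d9]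
    push_cast
    nlinarith
  have hlM0 : 0 ≤ Real.log M := Real.log_nonneg hM1
  have gb : ∀ s ∈ Metric.closedBall (3 + y * I : ℂ) 27, ‖GG a F s‖ ≤ M := by
    intro s hs
    rw [Metric.mem_closedBall, dist_eq_norm] at hs
    have hr := abs_le.1 ((abs_re_le_norm _).trans hs)
    have hi := abs_le.1 ((abs_im_le_norm _).trans hs)
    simp at hr hi
    rw [GG, norm_mul, norm_cpow_eq_rpow_re_of_pos ha0, hM, mul_assoc]
    have b1 : a ^ s.re ≤ A := Real.rpow_le_rpow_of_exponent_ge ha0 ha1 (by linarith)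
    have b2 := hC s (by linarith) (by linarith) (by linarith)
    have b3 : s.im ^ 28 ≤ (2 * y) ^ 28 := by
      have : 0 ≤ s.im := by linarith
      gcongr
      linarith
    gcongr
    exact b2.trans (by gcongr)
  have nz : ∀ σ ∈ Icc x0 3, GG a F (σ + y * I) ≠ 0 := fun σ hσ h => hnz σ hσ ((GG_zero ha0 _).1 h)
  have ne1 : ∀ s : ℂ, s.im ≠ 0 → s ≠ 1 := by rintro s hs rfl; simp at hs
  rw [abs_le]
  constructor
  · have := hK x0 y M (GG a F) h1 h2 hM1 ?_ gb ?_ nz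
    · refine le_trans ?_ this
      nlinarith
    · intro s hs
      rw [Metric.mem_ball, dist_eq_norm] at hs
      have hi := abs_le.1 ((abs_im_le_norm _).trans hs.le)
      simp at hi
      exact (GG_diff ha0 hF (ne1 s (by linarith))).differentiableWithinAt
    · have hr : (3 + y * I : ℂ).re = 3 := by simp
      rw [GG_right ha0 ha1 hF (by rw [hr]; norm_num)]
      have h := norm_DD_sub_one' (p := l) ha0 ha1 (s := 3 + y * I) (by rw [hr]; norm_num)
      have := norm_sub_norm_le (1 : ℂ) (1 - DD l a (3 + y * I))
      rw [norm_sub_rev] at h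
      simp at this; linarith
  · have ic : ContinuousOn (fun σ : ℝ => (σ - x0) * Real.log ‖GG a F (σ + y * I)‖) (uIcc x0 3) := by
      rw [uIcc_of_le h2]
      refine ContinuousOn.mul (by fun_prop) (ContinuousOn.log ?_ fun σ hσ => norm_ne_zero_iff.2 (nz σ hσ))
      refine ContinuousOn.norm fun σ hσ => ?_
      have : ContinuousAt (GG a F) (σ + y * I) := (GG_diff ha0 hF (ne1 _ (by simp; linarith))).continuousAt
      exact (ContinuousAt.comp (f := fun σ : ℝ => (σ + y * I : ℂ)) this (by fun_prop)).continuousWithinAt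
    have : ∫ σ in x0..3, (σ - x0) * Real.log ‖GG a F (σ + y * I)‖ ≤ ∫ σ in x0..3, 7 * Real.log M := by
      refine intervalIntegral.integral_mono_on h2 ic.intervalIntegrable intervalIntegrable_const fun σ hσ => ?_
      have g1 : Real.log ‖GG a F (σ + y * I)‖ ≤ Real.log M := by
        refine Real.log_le_log (norm_pos_iff.2 (nz σ hσ)) (gb _ ?_)
        rw [Metric.mem_closedBall, dist_eq_norm]
        have : (σ + y * I : ℂ) - (3 + y * I) = ((σ - 3 : ℝ) : ℂ) := by push_cast; ring
        rw [this, norm_real, Real.norm_eq_abs, abs_le]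
        constructor <;> linarith [hσ.1, hσ.2]
      have h2 : 0 ≤ σ - x0 := by linarith [hσ.1]
      have h3 : σ - x0 ≤ 7 := by linarith [hσ.2]
      nlinarith
    rw [intervalIntegral.integral_const, smul_eq_mul] at this
    nlinarith

include hl0 hl1 ha0 ha1 hF in
lemma left_int (n : ℕ) (hn : 1 ≤ n) : ∃ C : ℝ, 0 ≤ C ∧ ∃ t₁ : ℝ, 1 ≤ t₁ ∧
    (∀ s : ℂ, -n ≤ s.re → s.re ≤ -1 → t₁ ≤ s.im → F s ≠ 0) ∧
    (∀ t : ℝ, t₁ ≤ t → |Real.log ‖GG a F ((-n : ℝ) + t * I)‖| ≤ C * (1 + Real.log t)) ∧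
    (∀ t0 Y : ℝ, t₁ ≤ t0 → t0 ≤ Y → |(∫ t in t0..Y, Real.log ‖GG a F ((-n : ℝ) + t * I)‖) - (MM l a n Y - MM l a n t0)| ≤ C * (1 + Real.log Y)) := by
  obtain ⟨C, hC0, t₁, ht1, hnz, hC⟩ := F_left_line hl0 hl1 ha0 ha1 hF n hn
  set D : ℝ → ℂ := fun t => Complex.log (DD (-a) l (((n + 1 : ℝ) : ℂ) + (t : ℝ) * I)) with hD
  have hn' : (1:ℝ) ≤ n := by exact_mod_cast hn
  have hDb : ∀ t, ‖D t‖ ≤ 2 := by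
    intro t
    exact logDD_bound' hl0 hl1 (by simp; linarith)
  have hDc : Continuous D := by
    refine continuous_iff_continuousAt.2 fun t => ?_
    have : ContinuousAt (fun s => Complex.log (DD (-a) l s)) (((n + 1 : ℝ) : ℂ) + (t : ℝ) * I) :=
      (logDD_diff hl0 hl1 (by simp; linarith)).continuousAt
    exact ContinuousAt.comp (f := fun t : ℝ => (((n + 1 : ℝ) : ℂ) + (t : ℝ) * I)) this (by fun_prop)
  set A := -n * Real.log a - (n + 1) * Real.log l with hA
  set u : ℝ → ℝ := fun t => Real.log ‖GG a F ((-n : ℝ) + t * I)‖ with hu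
  set r : ℝ → ℝ := fun t => u t - (A + (n + 1 / 2) * Real.log (t / (2 * π)) + (D (-t)).re) with hr
  have hrb : ∀ t, t₁ ≤ t → |r t| ≤ C / t := by
    intro t ht
    have := hC t ht
    simp only [hr, hu, hD, GG, log_re]
    push_cast at this ⊢
    exact this
  have uc : ContinuousOn u (Ici t₁) := by
    intro t ht
    have ht' : t₁ ≤ t := ht
    have ne : ((-n : ℝ) + t * I : ℂ) ≠ 1 := by
      intro h; have := congrArg im h; simp at this; linarith
    have c1 : ContinuousAt (GG a F) ((-n : ℝ) + t * I) := (GG_diff ha0 hF ne).continuousAt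
    have c2 := (ContinuousAt.comp (f := fun t : ℝ => ((-n : ℝ) + t * I : ℂ)) c1 (by fun_prop)).norm
    refine (ContinuousAt.log c2 ?_).continuousWithinAt
    rw [Function.comp, norm_ne_zero_iff]
    intro h
    exact hnz _ (by simp) (by simp; linarith) (by simpa using ht') ((GG_zero ha0 _).1 h)
  have lc : ContinuousOn (fun t : ℝ => Real.log (t / (2 * π))) (Ici t₁) := by
    refine ContinuousOn.log (by fun_prop) fun t ht => ?_
    have : t₁ ≤ t := ht
    have : 0 < t := by linarith
    positivity
  have dc : ContinuousOn (fun t : ℝ => (D (-t)).re) (Ici t₁) := (continuous_re.comp (hDc.comp continuous_neg)).continuousOn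
  have rc : ContinuousOn r (Ici t₁) := uc.sub ((continuousOn_const.add (continuousOn_const.mul lc)).add dc)
  have l2p : 0 ≤ Real.log (2 * π) := Real.log_nonneg (by linarith [Real.pi_gt_three])
  set K := C + 9 + |A| + (n + 1 / 2) * (1 + Real.log (2 * π)) with hK
  refine ⟨K, by positivity, t₁, ht1, hnz, fun t ht => ?_, fun t0 Y ht0 hY => ?_⟩
  · have htp : 0 < t := by linarith
    have hl : 0 ≤ Real.log t := Real.log_nonneg (by linarith)
    have e : u t = r t + A + (n + 1 / 2) * Real.log (t / (2 * π)) + (D (-t)).re := by simp only [hr]; ring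
    show |u t| ≤ _
    have b1 := hrb t ht
    have b1' : C / t ≤ C := div_le_self hC0 (by linarith)
    have b2 := (abs_re_le_norm _).trans (hDb (-t))
    have b3 : |(n + 1 / 2) * Real.log (t / (2 * π))| ≤ (n + 1 / 2) * (Real.log t + Real.log (2 * π)) := by
      rw [abs_mul, abs_of_pos (by positivity : (0:ℝ) < n + 1 / 2), Real.log_div htp.ne' (by positivity)]
      gcongr
      rw [abs_le]; constructor <;> linarith
    rw [e]
    have b4 : |r t + A + (n + 1 / 2) * Real.log (t / (2 * π)) + (D (-t)).re| ≤ C + |A| + (n + 1 / 2) * (Real.log t + Real.log (2 * π)) + 2 := by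
      refine (abs_add_le _ _).trans (add_le_add ((abs_add_le _ _).trans (add_le_add ((abs_add_le _ _).trans (add_le_add ?_ le_rfl)) b3)) b2)
      linarith
    refine b4.trans ?_
    have p1 : 0 ≤ (n + 1 / 2) * Real.log (2 * π) * Real.log t := by positivity
    have p2 : 0 ≤ (C + 9 + |A|) * Real.log t := by positivity
    have p3 : (0:ℝ) ≤ n + 1 / 2 := by positivity
    rw [hK]
    nlinarith
  · have hs : Icc t0 Y ⊆ Ici t₁ := fun t ht => ht0.trans ht.1
    have t0p : 0 < t0 := by linarith
    have Yp : 0 < Y := by linarith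
    have hlY : 0 ≤ Real.log Y := Real.log_nonneg (by linarith)
    have mc : ContinuousOn (fun t : ℝ => A + (n + 1 / 2) * Real.log (t / (2 * π))) (Ici t₁) := continuousOn_const.add (continuousOn_const.mul lc)
    have ii : ∀ {f : ℝ → ℝ}, ContinuousOn f (Ici t₁) → IntervalIntegrable f volume t0 Y := by
      intro f hf
      apply ContinuousOn.intervalIntegrable
      rw [uIcc_of_le hY]; exact hf.mono hs
    have e : ∫ t in t0..Y, u t = (∫ t in t0..Y, r t) + (∫ t in t0..Y, (D (-t)).re) + ∫ t in t0..Y, (A + (n + 1 / 2) * Real.log (t / (2 * π))) := by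
      rw [← intervalIntegral.integral_add (ii rc) (ii dc), ← intervalIntegral.integral_add ((ii rc).add (ii dc)) (ii mc)]
      apply intervalIntegral.integral_congr
      intro t _
      simp only [hr]; ring
    have e1 : ∫ t in t0..Y, (A + (n + 1 / 2) * Real.log (t / (2 * π))) = MM l a n Y - MM l a n t0 := by
      apply intervalIntegral.integral_eq_sub_of_hasDerivAt
      · intro t ht
        rw [uIcc_of_le hY] at ht
        have tp : 0 < t := by linarith [ht.1]
        have d1 : HasDerivAt (fun t : ℝ => Real.log (t / (2 * π))) (1 / t) t := by
          have := ((hasDerivAt_id t).div_const (2 * π)).log (by positivity : t / (2 * π) ≠ 0)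
          refine this.congr_deriv ?_
          simp only [id]
          field_simp
        have d2 := ((hasDerivAt_id t).mul_const A).add (((hasDerivAt_id t).mul (d1.sub_const 1)).const_mul ((n:ℝ) + 1 / 2))
        refine d2.congr_deriv ?_
        simp only [id]
        field_simp
        ring
      · exact ii mc
    have b1 : |∫ t in t0..Y, r t| ≤ C * Real.log Y := by
      have := intervalIntegral.norm_integral_le_of_norm_le (f := r) (g := fun t => C * (1 / t)) (μ := volume) hY ?_ ?_
      · rw [intervalIntegral.integral_const_mul, integral_one_div_of_pos t0p Yp] at this
        rw [Real.norm_eq_abs] at this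
        refine this.trans ?_
        gcongr
        exact div_le_self Yp.le (by linarith)
      · refine ae_of_all _ fun t ht => ?_
        rw [Real.norm_eq_abs, mul_one_div]
        exact hrb t (by linarith [ht.1])
      · apply ContinuousOn.intervalIntegrable
        refine ContinuousOn.mul continuousOn_const (ContinuousOn.div continuousOn_const continuousOn_id fun t ht => ?_)
        rw [uIcc_of_le hY] at ht
        have := ht.1
        linarith
    have b2 : |∫ t in t0..Y, (D (-t)).re| ≤ 9 := by
      rw [intervalIntegral.integral_comp_neg (fun t => (D t).re), re_int hDc.continuousOn]
      exact (abs_re_le_norm _).trans (int_logDD hl0 hl1 (by linarith) (by linarith))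
    rw [e, e1]
    have : (∫ t in t0..Y, r t) + (∫ t in t0..Y, (D (-t)).re) + (MM l a n Y - MM l a n t0) - (MM l a n Y - MM l a n t0) = (∫ t in t0..Y, r t) + (∫ t in t0..Y, (D (-t)).re) := by ring
    rw [this]
    refine (abs_add_le _ _).trans ((add_le_add b1 b2).trans ?_)
    have p1 : 0 ≤ (n + 1 / 2) * (1 + Real.log (2 * π)) := by positivity
    have p2 := abs_nonneg A
    rw [hK]
    nlinarith
end
end LZ

open scoped Classical
namespace LZ
open Complex Filter Topology Asymptotics Set MeasureTheory
open scoped Real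

lemma avoid {S : Set ℝ} (hS : S.Finite) {x y : ℝ} (h : x < y) : ∃ t ∈ Ioo x y, t ∉ S := by
  obtain ⟨t, ht⟩ := ((Ioo_infinite h).sdiff hS).nonempty
  exact ⟨t, ht.1, ht.2⟩

lemma MM_lip (l a : ℝ) (n : ℕ) : ∃ C : ℝ, 0 ≤ C ∧ ∀ T Y : ℝ, 10 ≤ T → |Y - T| ≤ 3 → |MM l a n Y - MM l a n T| ≤ C * Real.log T := by
  set A := -n * Real.log a - (n + 1) * Real.log l with hA
  have l2p : 0 ≤ Real.log (2 * π) := Real.log_nonneg (by linarith [Real.pi_gt_three])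
  refine ⟨3 * (|A| + (n + 1 / 2) * (2 + Real.log (2 * π))), by positivity, fun T Y hT hY => ?_⟩
  have hlT : 1 ≤ Real.log T := by
    rw [Real.le_log_iff_exp_le (by linarith)]
    linarith [Real.exp_one_lt_d9]
  have hd : ∀ t ∈ Icc (T - 3) (T + 3), HasDerivWithinAt (MM l a n) (A + (n + 1 / 2) * Real.log (t / (2 * π))) (Icc (T - 3) (T + 3)) t := by
    intro t ht
    have tp : 0 < t := by linarith [ht.1]
    have d1 : HasDerivAt (fun t : ℝ => Real.log (t / (2 * π))) (1 / t) t := by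
      have := ((hasDerivAt_id t).div_const (2 * π)).log (by positivity : t / (2 * π) ≠ 0)
      refine this.congr_deriv ?_
      simp only [id]
      field_simp
    have d2 := ((hasDerivAt_id t).mul_const A).add (((hasDerivAt_id t).mul (d1.sub_const 1)).const_mul ((n:ℝ) + 1 / 2))
    refine HasDerivAt.hasDerivWithinAt (d2.congr_deriv ?_)
    simp only [id]
    field_simp
    ring
  have hb : ∀ t ∈ Icc (T - 3) (T + 3), ‖A + (n + 1 / 2) * Real.log (t / (2 * π))‖ ≤ (|A| + (n + 1 / 2) * (2 + Real.log (2 * π))) * Real.log T := by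
    intro t ht
    have tp : 0 < t := by linarith [ht.1]
    have hl : 0 ≤ Real.log t := Real.log_nonneg (by linarith [ht.1])
    have h2 : Real.log t ≤ Real.log T + 1 := by
      have h3 : Real.log t ≤ Real.log (2 * T) := Real.log_le_log tp (by linarith [ht.2])
      rw [Real.log_mul two_ne_zero (by linarith)] at h3
      linarith [Real.log_two_lt_d9]
    rw [Real.norm_eq_abs, Real.log_div tp.ne' (by positivity)]
    have b3 : |((n:ℝ) + 1 / 2) * (Real.log t - Real.log (2 * π))| ≤ (n + 1 / 2) * (Real.log T + 1 + Real.log (2 * π)) := by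
      rw [abs_mul, abs_of_pos (by positivity : (0:ℝ) < n + 1 / 2)]
      gcongr
      rw [abs_le]; constructor <;> linarith
    refine (abs_add_le _ _).trans ((add_le_add le_rfl b3).trans ?_)
    have p2 : |A| ≤ |A| * Real.log T := le_mul_of_one_le_right (abs_nonneg _) hlT
    have p3 : (0:ℝ) ≤ n + 1 / 2 := by positivity
    have p4 : Real.log T + 1 + Real.log (2 * π) ≤ (2 + Real.log (2 * π)) * Real.log T := by nlinarith
    have p5 := mul_le_mul_of_nonneg_left p4 p3
    nlinarith
  obtain ⟨hY1, hY2⟩ := abs_le.1 hY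
  have := (convex_Icc (T - 3) (T + 3)).norm_image_sub_le_of_norm_hasDerivWithin_le hd hb (x := T) (y := Y) ⟨by linarith, by linarith⟩ ⟨by linarith, by linarith⟩
  rw [Real.norm_eq_abs, Real.norm_eq_abs] at this
  refine this.trans ?_
  have p : 0 ≤ (|A| + (n + 1 / 2) * (2 + Real.log (2 * π))) * Real.log T := by positivity
  nlinarith

section
variable {l a : ℝ} (hl0 : 0 < l) (hl1 : l ≤ 1) (ha0 : 0 < a) (ha1 : a ≤ 1) {F : ℂ → ℂ} (hF : IsLerch l a F)

include hl0 hl1 ha0 ha1 hF in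
lemma fin_box (x0 x1 T : ℝ) : {s : ℂ | x0 ≤ s.re ∧ s.re ≤ x1 ∧ 0 < s.im ∧ s.im ≤ T ∧ F s = 0}.Finite := by
  have h3 : EN hl0 hl1 ha0 ha1 3 ≠ 0 := by
    rw [EN_eq hl0 hl1 ha0 ha1 hF (by norm_num) (by norm_num), F_eq_LS hF (by norm_num)]
    have := norm_LS_lower (p := l) ha0 ha1 (s := 3) (by norm_num)
    have h : LS l a 3 ≠ 0 := by intro h; rw [h, norm_zero] at this; norm_num at this
    exact mul_ne_zero (by norm_num) h
  have hfin := zeros_finite isOpen_univ isPreconnected_univ (EN_diff hl0 hl1 ha0 ha1).differentiableOn (mem_univ 3) h3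
    (K := Icc x0 x1 ×ℂ Icc 0 T) (isCompact_Icc.reProdIm isCompact_Icc) (subset_univ _)
  refine hfin.subset fun s hs => ?_
  obtain ⟨h1, h2, h4, h5, h6⟩ := hs
  refine ⟨⟨⟨h1, h2⟩, ⟨h4.le, h5⟩⟩, ?_⟩
  have e0 : s ≠ 0 := by rintro rfl; simp at h4
  have e1 : s ≠ 1 := by rintro rfl; simp at h4
  rw [EN_eq hl0 hl1 ha0 ha1 hF e0 e1, h6, mul_zero]

/-- The open box. -/
def UU (n : ℕ) (t₁ Y1 : ℝ) : Set ℂ := Ioo (-(n:ℝ) - 1) 4 ×ℂ Ioo t₁ (Y1 + 1)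

lemma UU_open (n : ℕ) (t₁ Y1 : ℝ) : IsOpen (UU n t₁ Y1) := isOpen_Ioo.reProdIm isOpen_Ioo

lemma UU_convex (n : ℕ) (t₁ Y1 : ℝ) : Convex ℝ (UU n t₁ Y1) := by
  intro s hs t ht p q hp hq hpq
  have h1 := convex_Ioo _ _ hs.1 ht.1 hp hq hpq
  have h2 := convex_Ioo _ _ hs.2 ht.2 hp hq hpq
  refine ⟨?_, ?_⟩
  · simpa using h1
  · simpa using h2

include hl0 hl1 ha0 ha1 hF in
lemma zset (n : ℕ) (t₁ Y1 : ℝ) (ht : 40 ≤ t₁) : ∃ Z : Finset ℂ, ∀ s, s ∈ Z ↔ s ∈ UU n t₁ Y1 ∧ GG a F s = 0 := by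
  have hf : {s | s ∈ UU n t₁ Y1 ∧ GG a F s = 0}.Finite := by
    refine (fin_box hl0 hl1 ha0 ha1 hF (-(n:ℝ) - 1) 4 (Y1 + 1)).subset fun s hs => ?_
    obtain ⟨⟨h1, h2⟩, h3⟩ := hs
    exact ⟨h1.1.le, h1.2.le, by linarith [h2.1], h2.2.le, (GG_zero ha0 _).1 h3⟩
  exact ⟨hf.toFinset, fun s => by simp⟩

include ha0 ha1 hF in
lemma lw_app (n : ℕ) (t₁ t0 Y1 : ℝ) (ht1 : 40 ≤ t₁) (ht0 : t₁ < t0) (hY1 : t0 ≤ Y1) (hn : 1 ≤ n)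
    (hzl : ∀ s : ℂ, F s = 0 → -(n:ℝ) - 1 ≤ s.re → t₁ ≤ s.im → -1 < s.re ∧ s.re < 1 + a)
    (ht0n : ∀ s : ℂ, F s = 0 → -(n:ℝ) - 1 ≤ s.re → s.re ≤ 4 → s.im ≠ t0) (Z : Finset ℂ)
    (hZ : ∀ s, s ∈ Z ↔ s ∈ UU n t₁ Y1 ∧ GG a F s = 0) :
    ∃ H : ℂ → ℂ, H ((3:ℝ) + t0 * I) = Complex.log (DD l a ((3:ℝ) + t0 * I)) ∧ (∀ s ∈ UU n t₁ Y1, s.im = t0 ∨ s.re = 3 → cexp (H s) = GG a F s ∧ DifferentiableAt ℂ H s) ∧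
      ∀ Y, t0 ≤ Y → Y ≤ Y1 → (∀ ρ ∈ Z, ρ.im ≠ Y) → TL (-n) 3 t0 Y (fun s => Real.log ‖GG a F s‖) =
        BR (-n) 3 t0 Y H + ∑ ρ ∈ Z, zeroOrder F ρ * (if t0 < ρ.im ∧ ρ.im < Y then 2 * π * ((ρ.re - (-n)) * (Y - ρ.im)) else 0) := by
  have hn' : (1:ℝ) ≤ n := by exact_mod_cast hn
  have h1U : (1:ℂ) ∉ UU n t₁ Y1 := by
    intro h; have := h.2.1; simp at this; linarith
  have hd : DifferentiableOn ℂ (GG a F) (UU n t₁ Y1) := fun s hs => (GG_diff ha0 hF (fun h => h1U (h ▸ hs))).differentiableWithinAt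
  have hp : ((3:ℝ) + t0 * I : ℂ) ∈ UU n t₁ Y1 := by
    constructor
    · simp; constructor <;> linarith
    · simp; constructor <;> linarith
  have hr : (1:ℝ) < ((3:ℝ) + t0 * I : ℂ).re := by simp
  have hDn : DD l a ((3:ℝ) + t0 * I) ≠ 0 := DD_ne_zero ha0 ha1 (by simp; linarith)
  have hpn : GG a F ((3:ℝ) + t0 * I) ≠ 0 := by rw [GG_right ha0 ha1 hF hr]; exact hDn
  refine littlewood (UU_open n t₁ Y1) (UU_convex n t₁ Y1) hd (zeroOrder F) Z hZ
    (fun ρ hρ => GG_ord ha0 hF (UU_open n t₁ Y1) (UU_convex n t₁ Y1).isPreconnected h1U hp hpn ((hZ ρ).1 hρ).1) (by linarith) hY1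
    ?_ ?_ ?_
  · rintro s ⟨h1, h2⟩
    exact ⟨⟨by linarith [h1.1], by linarith [h1.2]⟩, ⟨by linarith [h2.1], by linarith [h2.2]⟩⟩
  · intro ρ hρ
    obtain ⟨⟨h1, h2⟩, h3⟩ := (hZ ρ).1 hρ
    have h4 := (GG_zero ha0 _).1 h3
    have := hzl ρ h4 h1.1.le h2.1.le
    exact ⟨by linarith, by linarith, ht0n ρ h4 h1.1.le h1.2.le⟩
  · rw [GG_right ha0 ha1 hF hr, Complex.exp_log hDn]

end
end LZ

open scoped Classical
namespace LZ
open Complex Filter Topology Asymptotics Set MeasureTheory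
open scoped Real

section
variable {l a : ℝ} (hl0 : 0 < l) (hl1 : l ≤ 1) (ha0 : 0 < a) (ha1 : a ≤ 1) {F : ℂ → ℂ} (hF : IsLerch l a F)

include ha0 ha1 hF in
lemma BR_app (n : ℕ) (t₁ t0 Y1 : ℝ) (ht1 : 40 ≤ t₁) (ht0 : t₁ < t0) (hn : 1 ≤ n) (H0 : ℂ → ℂ) (K : ℝ)
    (h00 : H0 ((3:ℝ) + t0 * I) = Complex.log (DD l a ((3:ℝ) + t0 * I)))
    (hH0 : ∀ s ∈ UU n t₁ t0, s.im = t0 ∨ s.re = 3 → cexp (H0 s) = GG a F s ∧ DifferentiableAt ℂ H0 s)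
    (hK : ∀ σ ∈ Icc (-n : ℝ) 3, ‖H0 (σ + t0 * I)‖ ≤ K)
    (H : ℂ → ℂ) (h0 : H ((3:ℝ) + t0 * I) = Complex.log (DD l a ((3:ℝ) + t0 * I)))
    (hH : ∀ s ∈ UU n t₁ Y1, s.im = t0 ∨ s.re = 3 → cexp (H s) = GG a F s ∧ DifferentiableAt ℂ H s)
    (Y : ℝ) (hY : t0 ≤ Y) (hY1 : Y + 1 ≤ Y1) :
    |BR (-n) 3 t0 (Y + 1) H - BR (-n) 3 t0 Y H| ≤ K * (3 - (-n)) + 9 + 2 * (3 - (-n) + 1) := by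
  have hn' : (1:ℝ) ≤ n := by exact_mod_cast hn
  have memb : ∀ y, t0 ≤ y → ∀ σ ∈ Icc (-n : ℝ) 3, (σ + t0 * I : ℂ) ∈ UU n t₁ y := by
    intro y hy σ hσ
    constructor
    · simp; constructor <;> linarith [hσ.1, hσ.2]
    · simp; constructor <;> linarith
  have memr : ∀ t ∈ Icc t0 (Y + 1), ((3:ℝ) + t * I : ℂ) ∈ UU n t₁ Y1 := by
    intro t ht
    constructor
    · simp; constructor <;> linarith
    · simp; constructor <;> linarith [ht.1, ht.2]
  have dcomp : ∀ {f : ℂ → ℂ} {σ y : ℝ}, DifferentiableAt ℂ f (σ + y * I) → DifferentiableAt ℝ (fun σ : ℝ => f (σ + y * I)) σ := by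
    intro f σ y hf
    exact DifferentiableAt.comp (f := fun σ : ℝ => (σ + y * I : ℂ)) σ (hf.restrictScalars ℝ) (by fun_prop)
  have dcomp' : ∀ {f : ℂ → ℂ} {x t : ℝ}, DifferentiableAt ℂ f (x + t * I) → DifferentiableAt ℝ (fun t : ℝ => f (x + t * I)) t := by
    intro f x t hf
    exact DifferentiableAt.comp (f := fun t : ℝ => (x + t * I : ℂ)) t (hf.restrictScalars ℝ) (by fun_prop)
  have db : DifferentiableOn ℝ (fun σ : ℝ => H (σ + t0 * I)) (Icc (-n : ℝ) 3) := fun σ hσ =>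
    (dcomp (hH _ (memb Y1 (by linarith) σ hσ) (by simp)).2).differentiableWithinAt
  have eqb : ∀ σ ∈ Icc (-n : ℝ) 3, H (σ + t0 * I) = H0 (σ + t0 * I) := by
    refine log_unique (c := 3) db (fun σ hσ => (dcomp (hH0 _ (memb t0 le_rfl σ hσ) (by simp)).2).differentiableWithinAt) ?_ ⟨by linarith, le_rfl⟩ (h0.trans h00.symm)
    intro σ hσ
    rw [(hH _ (memb Y1 (by linarith) σ hσ) (by simp)).1, (hH0 _ (memb t0 le_rfl σ hσ) (by simp)).1]
  have dr : DifferentiableOn ℝ (fun t : ℝ => H ((3:ℝ) + t * I)) (Icc t0 (Y + 1)) := fun t ht =>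
    (dcomp' (hH _ (memr t ht) (by simp)).2).differentiableWithinAt
  have hre : ∀ t : ℝ, 2 ≤ ((3:ℝ) + t * I : ℂ).re := by intro t; simp; norm_num
  have eqr : ∀ t ∈ Icc t0 (Y + 1), H ((3:ℝ) + t * I) = Complex.log (DD l a ((3:ℝ) + t * I)) := by
    refine log_unique (c := t0) dr (fun t ht => (dcomp' (f := fun s => Complex.log (DD l a s)) (logDD_diff ha0 ha1 (hre t))).differentiableWithinAt) ?_ ⟨le_rfl, by linarith⟩ h0
    intro t ht
    rw [(hH _ (memr t ht) (by simp)).1, Complex.exp_log (DD_ne_zero ha0 ha1 (by linarith [hre t])), GG_right ha0 ha1 hF (by linarith [hre t])]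
  refine BR_diff (by linarith) hY db.continuousOn (fun σ hσ => by rw [eqb σ hσ]; exact hK σ hσ) dr.continuousOn
    (fun t ht => by rw [eqr t ht]; exact logDD_bound' ha0 ha1 (hre t)) ?_
  have : ∫ t in t0..Y, H ((3:ℝ) + t * I) = ∫ t in t0..Y, Complex.log (DD l a ((3:ℝ) + t * I)) := by
    apply intervalIntegral.integral_congr
    intro t ht
    rw [uIcc_of_le hY] at ht
    exact eqr t ⟨ht.1, by linarith [ht.2]⟩
  rw [this]
  exact int_logDD ha0 ha1 (by norm_num) hY

include hl0 hl1 ha0 ha1 hF in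
lemma step (n : ℕ) (hn : 1 ≤ n) (hn4 : n ≤ 4) : ∃ t₁ t0 C : ℝ, 40 ≤ t₁ ∧ t₁ < t0 ∧ 0 ≤ C ∧
    (∀ s : ℂ, F s = 0 → -(n:ℝ) - 1 ≤ s.re → t₁ ≤ s.im → -1 < s.re ∧ s.re < 1 + a) ∧
    ∀ (Y1 : ℝ) (Z : Finset ℂ), (∀ s, s ∈ Z ↔ s ∈ UU n t₁ Y1 ∧ GG a F s = 0) →
    ∀ Y, t0 ≤ Y → Y + 1 ≤ Y1 → (∀ ρ ∈ Z, ρ.im ≠ Y) → (∀ ρ ∈ Z, ρ.im ≠ Y + 1) →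
    |(∑ ρ ∈ Z, zeroOrder F ρ * (if t0 < ρ.im ∧ ρ.im < Y + 1 then 2 * π * ((ρ.re - (-n)) * (Y + 1 - ρ.im)) else 0)) -
     (∑ ρ ∈ Z, zeroOrder F ρ * (if t0 < ρ.im ∧ ρ.im < Y then 2 * π * ((ρ.re - (-n)) * (Y - ρ.im)) else 0)) - MM l a n Y| ≤ C * (1 + Real.log Y) := by
  have hn' : (1:ℝ) ≤ n := by exact_mod_cast hn
  have hn4' : (n:ℝ) ≤ 4 := by exact_mod_cast hn4
  obtain ⟨C1, hC1, t1, ht1, -, hu, hI⟩ := left_int hl0 hl1 ha0 ha1 hF n hn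
  obtain ⟨_, _, t2, ht2, hnz, _⟩ := F_left_line hl0 hl1 ha0 ha1 hF (n + 1) (by omega)
  obtain ⟨CJ, hCJ, hJ⟩ := J_bound hl0 hl1 ha0 ha1 hF
  set t₁ := t1 + t2 + 40 with ht₁
  have hzl : ∀ s : ℂ, F s = 0 → -(n:ℝ) - 1 ≤ s.re → t₁ ≤ s.im → -1 < s.re ∧ s.re < 1 + a := by
    intro s hs h1 h2
    constructor
    · by_contra h
      exact hnz s (by push_cast; linarith) (not_lt.1 h) (by linarith) hs
    · by_contra h
      have h := not_lt.1 h
      refine DD_ne_zero (p := l) ha0 ha1 h ?_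
      rw [← GG_right ha0 ha1 hF (by linarith), GG_zero ha0, hs]
  obtain ⟨t0, ht0, ht0n⟩ := avoid ((fin_box hl0 hl1 ha0 ha1 hF (-(n:ℝ) - 1) 4 (t₁ + 1)).image im) (show t₁ < t₁ + 1 by linarith)
  have ht0n : ∀ s : ℂ, F s = 0 → -(n:ℝ) - 1 ≤ s.re → s.re ≤ 4 → s.im ≠ t0 := by
    intro s h1 h2 h3 h4
    exact ht0n ⟨s, ⟨h2, h3, by rw [h4]; linarith [ht0.1], by rw [h4]; exact ht0.2.le, h1⟩, h4⟩
  have h40 : 40 ≤ t₁ := by linarith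
  obtain ⟨Z0, hZ0⟩ := zset hl0 hl1 ha0 ha1 hF n t₁ t0 h40
  obtain ⟨H0, h00, hH0, -⟩ := lw_app ha0 ha1 hF n t₁ t0 t0 h40 ht0.1 le_rfl hn hzl ht0n Z0 hZ0
  have cH0 : ContinuousOn (fun σ : ℝ => H0 (σ + t0 * I)) (Icc (-n : ℝ) 3) := by
    intro σ hσ
    have hm : (σ + t0 * I : ℂ) ∈ UU n t₁ t0 := by
      constructor
      · simp; constructor <;> linarith [hσ.1, hσ.2]
      · simp; exact ht0.1
    have := (hH0 _ hm (by simp)).2.continuousAt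
    exact (ContinuousAt.comp (f := fun σ : ℝ => (σ + t0 * I : ℂ)) this (by fun_prop)).continuousWithinAt
  obtain ⟨K, hK⟩ := isCompact_Icc.exists_bound_of_continuousOn cH0
  have hK0 : 0 ≤ K := (norm_nonneg _).trans (hK 3 ⟨by linarith, le_rfl⟩)
  set E := K * (3 - (-n)) + 9 + 2 * (3 - (-n) + 1) with hE
  have hE0 : 0 ≤ E := by
    have : (0:ℝ) ≤ 3 - (-n) := by linarith
    positivity
  refine ⟨t₁, t0, 2 * CJ + CJ + 3 * C1 + |MM l a n t0| + E, h40, ht0.1, by positivity, hzl, ?_⟩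
  intro Y1 Z hZ Y hY hYY1 hn1 hn2
  have htt := ht0.1
  have Yp : 0 < Y := by linarith
  have hlY : 0 ≤ Real.log Y := Real.log_nonneg (by linarith)
  have hlY1 : Real.log (Y + 1) ≤ Real.log Y + 1 := by
    have h3 : Real.log (Y + 1) ≤ Real.log (2 * Y) := Real.log_le_log (by linarith) (by linarith)
    rw [Real.log_mul two_ne_zero (by linarith)] at h3
    linarith [Real.log_two_lt_d9]
  obtain ⟨H, h0, hH, hid⟩ := lw_app ha0 ha1 hF n t₁ t0 Y1 h40 ht0.1 (by linarith) hn hzl ht0n Z hZ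
  have i1 := hid Y hY (by linarith) hn1
  have i2 := hid (Y + 1) (by linarith) hYY1 hn2
  have bBR := BR_app ha0 ha1 hF n t₁ t0 Y1 h40 ht0.1 hn H0 K h00 hH0 hK H h0 hH Y hY hYY1
  have nzJ : ∀ y, t0 ≤ y → y ≤ Y + 1 → (∀ ρ ∈ Z, ρ.im ≠ y) → ∀ σ ∈ Icc (-n : ℝ) 3, F (σ + y * I) ≠ 0 := by
    intro y h1 h2 hno σ hσ hz
    refine hno (σ + y * I) ((hZ _).2 ⟨?_, (GG_zero ha0 _).2 hz⟩) (by simp)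
    constructor
    · simp; constructor <;> linarith [hσ.1, hσ.2]
    · simp; constructor <;> linarith
  have J1 := hJ Y (-n) (by linarith) (by linarith) (by linarith) (nzJ Y hY (by linarith) hn1)
  have J2 := hJ (Y + 1) (-n) (by linarith) (by linarith) (by linarith) (nzJ (Y + 1) (by linarith) le_rfl hn2)
  have lc : ContinuousOn (fun t : ℝ => Real.log ‖GG a F ((-n : ℝ) + t * I)‖) (Icc t0 (Y + 1)) := by
    intro t ht
    have ne : ((-n : ℝ) + t * I : ℂ) ≠ 1 := by
      intro h; have := congrArg im h; simp at this; linarith [ht.1]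
    have c1 : ContinuousAt (GG a F) ((-n : ℝ) + t * I) := (GG_diff ha0 hF ne).continuousAt
    have c2 := (ContinuousAt.comp (f := fun t : ℝ => ((-n : ℝ) + t * I : ℂ)) c1 (by fun_prop)).norm
    refine (ContinuousAt.log c2 ?_).continuousWithinAt
    rw [Function.comp, norm_ne_zero_iff]
    intro h
    have := (hzl _ ((GG_zero ha0 _).1 h) (by simp) (by simp; linarith [ht.1])).1
    simp at this
    linarith
  have dTL := TL_diff (x1 := 3) (u := fun s => Real.log ‖GG a F s‖) hY lc
  have bI := hI t0 Y (by linarith) hY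
  have bT : |∫ t in Y..(Y+1), (Y + 1 - t) * Real.log ‖GG a F ((-n : ℝ) + t * I)‖| ≤ C1 * (2 + Real.log Y) := by
    have := intervalIntegral.norm_integral_le_of_norm_le_const (a := Y) (b := Y + 1) (C := C1 * (2 + Real.log Y)) (f := fun t : ℝ => (Y + 1 - t) * Real.log ‖GG a F ((-n : ℝ) + t * I)‖) ?_
    · simpa using this
    · intro t ht
      rw [uIoc_of_le (by linarith)] at ht
      rw [norm_mul, Real.norm_eq_abs, Real.norm_eq_abs]
      have h1 : |Y + 1 - t| ≤ 1 := abs_le.2 ⟨by linarith [ht.2], by linarith [ht.1]⟩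
      have h2 := hu t (by linarith [ht.1])
      have h3 : Real.log t ≤ Real.log (Y + 1) := Real.log_le_log (by linarith [ht.1]) ht.2
      have h4 : C1 * (1 + Real.log t) ≤ C1 * (2 + Real.log Y) := by
        apply mul_le_mul_of_nonneg_left _ hC1; linarith
      calc _ ≤ 1 * (C1 * (2 + Real.log Y)) := by gcongr; exact h2.trans h4
        _ = _ := one_mul _
  have J2' := J2.trans (mul_le_mul_of_nonneg_left hlY1 hCJ)
  rw [abs_le] at J1 J2' bI bT bBR ⊢
  have a1 := le_abs_self (MM l a n t0)
  have a2 := neg_abs_le (MM l a n t0)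
  have p1 : 0 ≤ |MM l a n t0| * Real.log Y := by positivity
  have p2 : 0 ≤ E * Real.log Y := by positivity
  have p3 : 0 ≤ C1 * Real.log Y := by positivity
  have p4 : 0 ≤ CJ * Real.log Y := by positivity
  have e3 : (2 * CJ + CJ + 3 * C1 + |MM l a n t0| + E) * (1 + Real.log Y) = 3 * CJ + 3 * (CJ * Real.log Y) + 3 * C1 + 3 * (C1 * Real.log Y) + |MM l a n t0| + |MM l a n t0| * Real.log Y + E + E * Real.log Y := by ring
  have e4 : C1 * (1 + Real.log Y) = C1 + C1 * Real.log Y := by ring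
  have e5 : C1 * (2 + Real.log Y) = 2 * C1 + C1 * Real.log Y := by ring
  have e6 : CJ * (Real.log Y + 1) = CJ * Real.log Y + CJ := by ring
  rw [e3]
  rw [e4] at bI
  rw [e5] at bT
  rw [e6] at J2'
  constructor <;> linarith [bI.1, bI.2, bT.1, bT.2, bBR.1, bBR.2, J1.1, J1.2, J2'.1, J2'.2]
end
end LZ

open scoped Classical
namespace LZ
open Complex Filter Topology Asymptotics Set MeasureTheory
open scoped Real

def SS (a : ℝ) (F : ℂ → ℂ) (T : ℝ) : Set ℂ := {ρ : ℂ | F ρ = 0 ∧ -1 ≤ ρ.re ∧ ρ.re < 1 + a ∧ 0 < ρ.im ∧ ρ.im ≤ T}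

section
variable {l a : ℝ} (hl0 : 0 < l) (hl1 : l ≤ 1) (ha0 : 0 < a) (ha1 : a ≤ 1) {F : ℂ → ℂ} (hF : IsLerch l a F)

include hl0 hl1 ha0 ha1 hF in
lemma SS_finite (T : ℝ) : (SS a F T).Finite :=
  (fin_box hl0 hl1 ha0 ha1 hF (-1) (1 + a) T).subset fun _ hs => ⟨hs.2.1, hs.2.2.1.le, hs.2.2.2.1, hs.2.2.2.2, hs.1⟩

include hl0 hl1 ha0 ha1 hF in
lemma sum_upper (n : ℕ) (hn : 1 ≤ n) (hn4 : n ≤ 4) : ∃ t0 C T0 : ℝ, 0 < t0 ∧ t0 ≤ T0 ∧ 10 ≤ T0 ∧ 0 ≤ C ∧ ∀ T, T0 ≤ T →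
    |(∑ᶠ ρ ∈ SS a F T \ SS a F t0, (zeroOrder F ρ : ℝ) * (n + ρ.re)) - MM l a n T / (2 * π)| ≤ C * Real.log T := by
  obtain ⟨t₁, t0, C, h40, ht0, hC, hzl, hst⟩ := step hl0 hl1 ha0 ha1 hF n hn hn4
  obtain ⟨CM, hCM, hM⟩ := MM_lip l a n
  have hn' : (1:ℝ) ≤ n := by exact_mod_cast hn
  refine ⟨t0, 3 * C + CM, t0 + 3, by linarith, by linarith, by linarith, by positivity, fun T hT => ?_⟩
  obtain ⟨Z, hZ⟩ := zset hl0 hl1 ha0 ha1 hF n t₁ (T + 2) h40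
  have hzr : ∀ ρ ∈ Z, -1 < ρ.re ∧ ρ.re < 1 + a := by
    intro ρ hρ
    obtain ⟨⟨h1, h2⟩, h3⟩ := (hZ ρ).1 hρ
    exact hzl ρ ((GG_zero ha0 _).1 h3) h1.1.le h2.1.le
  have hz : ∀ ρ ∈ Z, -(n:ℝ) < ρ.re := fun ρ hρ => by linarith [(hzr ρ hρ).1]
  set S := ∑ ρ ∈ Z, (if t0 < ρ.im ∧ ρ.im ≤ T then (zeroOrder F ρ : ℝ) * (ρ.re - (-n)) else 0) with hS
  have eS : (∑ᶠ ρ ∈ SS a F T \ SS a F t0, (zeroOrder F ρ : ℝ) * (n + ρ.re)) = S := by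
    rw [hS, ← Finset.sum_filter]
    have : SS a F T \ SS a F t0 = ((Z.filter fun ρ => t0 < ρ.im ∧ ρ.im ≤ T : Finset ℂ) : Set ℂ) := by
      ext ρ
      rw [Finset.coe_filter, Set.mem_setOf_eq, hZ, GG_zero ha0]
      constructor
      · rintro ⟨⟨h1, h2, h3, h4, h5⟩, h6⟩
        have h7 : t0 < ρ.im := by
          by_contra h; exact h6 ⟨h1, h2, h3, h4, not_lt.1 h⟩
        refine ⟨⟨⟨⟨?_, ?_⟩, ⟨?_, ?_⟩⟩, h1⟩, h7, h5⟩ <;> linarith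
      · rintro ⟨⟨⟨h1, h2⟩, h3⟩, h4, h5⟩
        have := hzl ρ h3 h1.1.le h2.1.le
        refine ⟨⟨h3, this.1.le, this.2, by linarith, h5⟩, fun h => ?_⟩
        have := h.2.2.2.2
        linarith
    rw [this, finsum_mem_coe_finset]
    refine Finset.sum_congr rfl fun ρ _ => by ring
  rw [eS]
  have hB : ((Z.image im : Finset ℝ) ∪ Z.image (fun ρ => ρ.im - 1) : Set ℝ).Finite := by
    exact (Finset.finite_toSet _).union (Finset.finite_toSet _)
  have key : ∀ x, t0 ≤ x → x + 2 ≤ T + 2 → ∃ Y ∈ Ioo x (x + 1), |(∑ ρ ∈ Z, zeroOrder F ρ * (if t0 < ρ.im ∧ ρ.im < Y + 1 then 2 * π * ((ρ.re - (-n)) * (Y + 1 - ρ.im)) else 0)) -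
     (∑ ρ ∈ Z, zeroOrder F ρ * (if t0 < ρ.im ∧ ρ.im < Y then 2 * π * ((ρ.re - (-n)) * (Y - ρ.im)) else 0)) - MM l a n Y| ≤ C * (1 + Real.log Y) := by
    intro x hx1 hx2
    obtain ⟨Y, hY, hYn⟩ := avoid hB (show x < x + 1 by linarith)
    refine ⟨Y, hY, hst (T + 2) Z hZ Y (by linarith [hY.1]) (by linarith [hY.2]) ?_ ?_⟩
    · intro ρ hρ h
      exact hYn (Or.inl (by rw [← h]; exact_mod_cast Finset.mem_image_of_mem im hρ))
    · intro ρ hρ h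
      refine hYn (Or.inr ?_)
      have : Y = (fun ρ : ℂ => ρ.im - 1) ρ := by simp only; linarith
      rw [this]; exact_mod_cast Finset.mem_image_of_mem (fun ρ : ℂ => ρ.im - 1) hρ
  have hlT : 1 ≤ Real.log T := by
    rw [Real.le_log_iff_exp_le (by linarith)]
    linarith [Real.exp_one_lt_d9]
  have hlY : ∀ Y, 0 < Y → Y ≤ T + 1 → Real.log Y ≤ Real.log T + 1 := by
    intro Y h1 h2
    have h3 : Real.log Y ≤ Real.log (2 * T) := Real.log_le_log h1 (by linarith)
    rw [Real.log_mul two_ne_zero (by linarith)] at h3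
    linarith [Real.log_two_lt_d9]
  have fin : ∀ Y, 0 < Y → Y ≤ T + 1 → C * (1 + Real.log Y) ≤ 3 * C * Real.log T := by
    intro Y h1 h2
    have := hlY Y h1 h2
    have : C * (1 + Real.log Y) ≤ C * (3 * Real.log T) := mul_le_mul_of_nonneg_left (by linarith) hC
    linarith
  obtain ⟨Y, hY, bY⟩ := key T (by linarith) le_rfl
  obtain ⟨Y', hY', bY'⟩ := key (T - 2) (by linarith) (by linarith)
  have w1 := W_diff (ord := zeroOrder F) (t0 := t0) hz hY.1.le
  have w2 := W_diff' (ord := zeroOrder F) (t0 := t0) hz (show Y' + 1 ≤ T by linarith [hY'.2])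
  rw [← hS] at w1 w2
  have f1 := fin Y (by linarith [hY.1]) hY.2.le
  have f2 := fin Y' (by linarith [hY'.1]) (by linarith [hY'.2])
  have m1 := abs_le.1 (hM T Y (by linarith) (abs_le.2 ⟨by linarith [hY.1], by linarith [hY.2]⟩))
  have m2 := abs_le.1 (hM T Y' (by linarith) (abs_le.2 ⟨by linarith [hY'.1], by linarith [hY'.2]⟩))
  have bY := abs_le.1 bY
  have bY' := abs_le.1 bY'
  have hp : 6 < 2 * π := by linarith [Real.pi_gt_three]
  have main : |2 * π * S - MM l a n T| ≤ (3 * C + CM) * Real.log T := by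
    rw [abs_le]
    constructor <;> linarith [m1.1, m1.2, m2.1, m2.2, bY.1, bY.2, bY'.1, bY'.2]
  have e : S - MM l a n T / (2 * π) = (2 * π * S - MM l a n T) / (2 * π) := by
    field_simp
  rw [e, abs_div, abs_of_pos (by linarith : 0 < 2 * π)]
  exact (div_le_self (abs_nonneg _) (by linarith)).trans main

include hl0 hl1 ha0 ha1 hF in
lemma per_n (n : ℕ) (hn : 1 ≤ n) (hn4 : n ≤ 4) : 
    (fun T : ℝ => (∑ᶠ ρ ∈ SS a F T, (zeroOrder F ρ : ℝ) * (n + ρ.re)) - MM l a n T / (2 * π)) =O[atTop] Real.log := by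
  obtain ⟨t0, C, T0, h0, h1, h10, hC, h⟩ := sum_upper hl0 hl1 ha0 ha1 hF n hn hn4
  set B := ∑ᶠ ρ ∈ SS a F t0, (zeroOrder F ρ : ℝ) * (n + ρ.re) with hB
  refine IsBigO.of_bound (C + |B|) ?_
  filter_upwards [eventually_ge_atTop T0] with T hT
  have hlT : 1 ≤ Real.log T := by
    rw [Real.le_log_iff_exp_le (by linarith)]
    linarith [Real.exp_one_lt_d9]
  have hs : SS a F t0 ⊆ SS a F T := fun s hs => ⟨hs.1, hs.2.1, hs.2.2.1, hs.2.2.2.1, by linarith [hs.2.2.2.2]⟩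
  have e := finsum_mem_add_sdiff (f := fun ρ : ℂ => (zeroOrder F ρ : ℝ) * (n + ρ.re)) hs (SS_finite hl0 hl1 ha0 ha1 hF T)
  rw [← e, Real.norm_eq_abs, Real.norm_eq_abs, abs_of_pos (by linarith : 0 < Real.log T), ← hB, add_sub_assoc, add_mul]
  refine (abs_add_le _ _).trans ?_
  have := h T hT
  have := le_mul_of_one_le_right (abs_nonneg B) hlT
  linarith

include hl0 hl1 ha0 ha1 hF in
lemma final (b : ℝ) : 
    (fun T : ℝ => (∑ᶠ ρ ∈ SS a F T, (zeroOrder F ρ : ℝ) * (b + ρ.re))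
        - ((b + 1 / 2) * (T / (2 * Real.pi)) * Real.log (T / (2 * Real.pi * Real.exp 1 * a * l))
            + T / (4 * Real.pi) * Real.log (a / l))) =O[atTop] Real.log := by
  have h3 := per_n hl0 hl1 ha0 ha1 hF 3 (by norm_num) (by norm_num)
  have h4 := per_n hl0 hl1 ha0 ha1 hF 4 (by norm_num) (by norm_num)
  refine ((h3.const_mul_left (4 - b)).add (h4.const_mul_left (b - 3))).congr' ?_ EventuallyEq.rfl
  filter_upwards [eventually_gt_atTop 0] with T hT
  have hf := SS_finite hl0 hl1 ha0 ha1 hF T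
  rw [finsum_mem_eq_finite_toFinset_sum _ hf, finsum_mem_eq_finite_toFinset_sum _ hf, finsum_mem_eq_finite_toFinset_sum _ hf]
  have e1 : ∑ ρ ∈ hf.toFinset, (zeroOrder F ρ : ℝ) * (b + ρ.re) = (4 - b) * ∑ ρ ∈ hf.toFinset, (zeroOrder F ρ : ℝ) * ((3:ℕ) + ρ.re)
      + (b - 3) * ∑ ρ ∈ hf.toFinset, (zeroOrder F ρ : ℝ) * ((4:ℕ) + ρ.re) := by
    rw [Finset.mul_sum, Finset.mul_sum, ← Finset.sum_add_distrib]
    refine Finset.sum_congr rfl fun ρ _ => ?_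
    push_cast; ring
  have hp := Real.pi_pos
  have e2 : Real.log (T / (2 * Real.pi * Real.exp 1 * a * l)) = Real.log (T / (2 * π)) - 1 - Real.log a - Real.log l := by
    have : T / (2 * Real.pi * Real.exp 1 * a * l) = T / (2 * π) / Real.exp 1 / a / l := by field_simp
    rw [this, Real.log_div (by positivity) hl0.ne', Real.log_div (by positivity) ha0.ne', Real.log_div (by positivity) (by positivity), Real.log_exp]
  rw [e1, e2, Real.log_div ha0.ne' hl0.ne', MM, MM]
  push_cast
  field_simp
  ring
end
end LZ

/-- asymptotics for the sum of `b + β` over the nontrivial zeros. -/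
theorem lerch_sum_b_plus_beta (b lam alp : ℝ) (hb : 3 ≤ b) (hlam0 : 0 < lam) (hlam1 : lam ≤ 1)
    (halp0 : 0 < alp) (halp1 : alp ≤ 1) (F : ℂ → ℂ) (hF : IsLerch lam alp F) :
    (fun T : ℝ =>
        (∑ᶠ ρ ∈ {ρ : ℂ | F ρ = 0 ∧ -1 ≤ ρ.re ∧ ρ.re < 1 + alp ∧ 0 < ρ.im ∧ ρ.im ≤ T},
          (zeroOrder F ρ : ℝ) * (b + ρ.re))
        - ((b + 1 / 2) * (T / (2 * Real.pi)) * Real.log (T / (2 * Real.pi * Real.exp 1 * alp * lam))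
            + T / (4 * Real.pi) * Real.log (alp / lam)))
      =O[Filter.atTop] Real.log := by
  exact LZ.final hlam0 hlam1 halp0 halp1 hF b
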